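/- Suppose char(K) = 0 and S = K[x_1,...,x_n]. Let I ⊆ S and J ⊆ S be homogeneous ideals such that Gin_lex(J) is a lex ideal. Then for a general change of coordinates g ∈ GL_n(K) and for i = 0 and i = 1, one has dim_K Tor_i^S(S/I, S/g(J))_d ≤ dim_K Tor_i^S(S/I^lex, S/J^oplex)_d for all d ≥ 0. -/

import Mathlib

open MvPolynomial TensorProduct CategoryTheory

noncomputable section

/-- The polynomial ring `S = K[x_1,...,x_n]`, standard graded. -/
abbrev PS (K : Type) [Field K] (n : ℕ) : Type := MvPolynomial (Fin n) K

variable (K : Type) [Field K] (n : ℕ)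

/-- An ideal of `S` is homogeneous if it contains all homogeneous components of its
elements. -/
def IsHomog (I : Ideal (PS K n)) : Prop :=
  ∀ f ∈ I, ∀ d : ℕ, MvPolynomial.homogeneousComponent d f ∈ I

/-- The change of coordinates of `S` induced by `g ∈ GL_n(K)`, determined by
`g(x_i) = ∑_j g_{ji} x_j`. -/
def coordChange (g : GL (Fin n) K) : PS K n →ₐ[K] PS K n :=
  MvPolynomial.aeval (fun i => ∑ j, ((g : Matrix (Fin n) (Fin n) K) j i) • MvPolynomial.X j)

/-- A property `P` holds for a general change of coordinates `g ∈ GL_n(K)` if there is a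
nonempty Zariski open subset `U ⊆ GL_n(K)` on which it holds; equivalently (as `GL_n(K)` is
an irreducible variety over the infinite field `K`) there is a nonzero polynomial `F` in the
matrix entries such that `P g` holds whenever `F` does not vanish at `g`. -/
def generally (P : GL (Fin n) K → Prop) : Prop :=
  ∃ F : MvPolynomial (Fin n × Fin n) K, F ≠ 0 ∧
    ∀ g : GL (Fin n) K,
      MvPolynomial.eval (fun p => (g : Matrix (Fin n) (Fin n) K) p.1 p.2) F ≠ 0 → P g

/-- The Hilbert function: `H(I,d) = dim_K I_d`. -/
def hilb (I : Ideal (PS K n)) (d : ℕ) : ℕ :=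
  Module.finrank K ↥(Submodule.restrictScalars K I ⊓ homogeneousSubmodule (Fin n) K d)

/-- The standard grading of `S = K[x_1,...,x_n]`, extended to `ℤ` (zero in negative
degrees). -/
def polyGrade (d : ℤ) : Submodule K (PS K n) :=
  if 0 ≤ d then homogeneousSubmodule (Fin n) K d.toNat else ⊥

/-- The degree `d` component of the (internal) tensor-product grading on `A ⊗[K] B`. -/
def tensorGrade {A B : Type} [AddCommGroup A] [Module K A] [AddCommGroup B] [Module K B]
    (GA : ℤ → Submodule K A) (GB : ℤ → Submodule K B) (d : ℤ) :
    Submodule K (A ⊗[K] B) :=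
  ⨆ p : ℤ, LinearMap.range (TensorProduct.map (GA p).subtype (GB (d - p)).subtype)

variable (N : Type) [AddCommGroup N] [Module K N] [Module (PS K n) N]
  [IsScalarTower K (PS K n) N]

/-- The tower of `K`-vector spaces `D_i = S^{⊗ i} ⊗_K N` appearing in the bar complex
`M ⊗_K S^{⊗ i} ⊗_K N`, which computes `Tor^S_i(M, N)`. -/
def barD : ℕ → ModuleCat K
  | 0 => ModuleCat.of K N
  | (i + 1) => ModuleCat.of K (PS K n ⊗[K] (barD i))

/-- The internal `ℤ`-grading on `D_i = S^{⊗ i} ⊗_K N` induced by the standard grading of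
`S` and a grading `GN` of `N`. -/
def barDGrade (GN : ℤ → Submodule K N) : (i : ℕ) → ℤ → Submodule K (barD K n N i)
  | 0 => GN
  | (i + 1) => tensorGrade K (polyGrade K n) (barDGrade GN i)

/-- Scalar multiplication `S → N → N` as a `K`-bilinear map. -/
def smulBilin : PS K n →ₗ[K] N →ₗ[K] N :=
  LinearMap.mk₂ K (fun s x => s • x)
    (fun s₁ s₂ x => add_smul s₁ s₂ x)
    (fun c s x => smul_assoc c s x)
    (fun s x y => smul_add s x y)
    (fun c s x => (smul_comm c s x).symm)

/-- The "contraction" part of the bar differential, `c_i : D_{i+1} → D_i`, defined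
recursively by `c_0(s ⊗ x) = s • x` and
`c_{i+1}(s ⊗ s' ⊗ t) = (s s') ⊗ t - s ⊗ c_i(s' ⊗ t)`. -/
def barC : (i : ℕ) → ((barD K n N (i + 1)) →ₗ[K] (barD K n N i))
  | 0 => TensorProduct.lift (smulBilin K n N)
  | (i + 1) =>
      (TensorProduct.map (LinearMap.mul' K (PS K n)) LinearMap.id).comp
        (TensorProduct.assoc K (PS K n) (PS K n) (barD K n N i)).symm.toLinearMap
      - TensorProduct.map LinearMap.id (barC i)

variable (M : Type) [AddCommGroup M] [Module K M] [Module (PS K n) M]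
  [IsScalarTower K (PS K n) M]

/-- Right scalar multiplication `M ⊗[K] S → M` as a `K`-linear map. -/
def smulMapM : M ⊗[K] PS K n →ₗ[K] M :=
  TensorProduct.lift (LinearMap.mk₂ K (fun m s => s • m)
    (fun m₁ m₂ s => smul_add s m₁ m₂)
    (fun c m s => smul_comm s c m)
    (fun m s₁ s₂ => add_smul s₁ s₂ m)
    (fun c m s => smul_assoc c s m))

/-- The bar differential `b_i : M ⊗ D_{i+1} → M ⊗ D_i`,
`b(m ⊗ s ⊗ t) = (s • m) ⊗ t - m ⊗ c_i(s ⊗ t)`.  The complex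
`⋯ → M ⊗_K S^{⊗ i} ⊗_K N → ⋯ → M ⊗_K S ⊗_K N → M ⊗_K N → 0`
is the bar complex `M ⊗_S Bar(S, N)`, whose `i`-th homology is `Tor^S_i(M, N)`;
it is a complex of graded vector spaces with degree-preserving differentials. -/
def barB (i : ℕ) : (M ⊗[K] (barD K n N (i + 1))) →ₗ[K] (M ⊗[K] (barD K n N i)) :=
  (TensorProduct.map (smulMapM K n M) LinearMap.id).comp
      (TensorProduct.assoc K M (PS K n) (barD K n N i)).symm.toLinearMap
  - TensorProduct.map LinearMap.id (barC K n N i)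

/-- `dim_K Tor_i^S(M, N)_j`, the dimension of the degree-`j` component of the graded module
`Tor_i^S(M, N)` for graded modules `M`, `N`: it is computed as the homology of the degree-`j`
strand of the bar complex, namely `dim (ker b_i)_j - dim (im b_{i+1})_j`
(for `i = 0`, `dim (M ⊗_K N)_j - dim (im b_1)_j`). -/
def torStrandDim (GM : ℤ → Submodule K M) (GN : ℤ → Submodule K N) : ℕ → ℤ → ℕ
  | 0, j =>
      Module.finrank K ↥(tensorGrade K GM (barDGrade K n N GN 0) j) -
        Module.finrank K
          ↥(LinearMap.range (barB K n N M 0) ⊓ tensorGrade K GM (barDGrade K n N GN 0) j)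
  | (i + 1), j =>
      Module.finrank K
          ↥(LinearMap.ker (barB K n N M i) ⊓
              tensorGrade K GM (barDGrade K n N GN (i + 1)) j) -
        Module.finrank K
          ↥(LinearMap.range (barB K n N M (i + 1)) ⊓
              tensorGrade K GM (barDGrade K n N GN (i + 1)) j)

/-- The quotient grading on `S/J`. -/
def quotGrade (J : Ideal (PS K n)) : ℤ → Submodule K (PS K n ⧸ J) := fun d =>
  (polyGrade K n d).map (Ideal.Quotient.mkₐ K J).toLinearMap

/-- The grading on an ideal `I ⊆ S` viewed as an `S`-module. -/
def idealGrade (I : Ideal (PS K n)) : ℤ → Submodule K ↥I := fun d =>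
  (polyGrade K n d).comap ((Submodule.subtype I).restrictScalars K)

/-- `dim_K Tor_i^S(S/I, S/J)_j`. -/
def torQQ (I J : Ideal (PS K n)) (i : ℕ) (j : ℤ) : ℕ :=
  torStrandDim K n (PS K n ⧸ J) (PS K n ⧸ I) (quotGrade K n I) (quotGrade K n J) i j

/-- `dim_K Tor_i^S(I, S/J)_j`. -/
def torIQ (I J : Ideal (PS K n)) (i : ℕ) (j : ℤ) : ℕ :=
  torStrandDim K n (PS K n ⧸ J) ↥I (idealGrade K n I) (quotGrade K n J) i j

/-- `a <_lex b` for the lexicographic order induced by `x_1 > x_2 > ⋯ > x_n`. -/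
def lexLt (a b : Fin n →₀ ℕ) : Prop := Finsupp.Lex (· < ·) (· < ·) a b

/-- `a <_oplex b` for the (opposite) lexicographic order induced by `x_n > ⋯ > x_1`. -/
def oplexLt (a b : Fin n →₀ ℕ) : Prop := Finsupp.Lex (· > ·) (· < ·) a b

/-- The total degree of an exponent vector. -/
def expDeg (m : Fin n →₀ ℕ) : ℕ := ∑ i, m i

/-- A monomial ideal: together with any polynomial it contains each of its monomials. -/
def IsMonomialIdeal (I : Ideal (PS K n)) : Prop :=
  ∀ f ∈ I, ∀ m ∈ f.support, MvPolynomial.monomial m (1 : K) ∈ I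

/-- A lex ideal: a monomial ideal whose monomials form a lex set. -/
def IsLexIdeal (I : Ideal (PS K n)) : Prop :=
  IsMonomialIdeal K n I ∧ ∀ u v : Fin n →₀ ℕ, expDeg n u = expDeg n v →
    MvPolynomial.monomial u (1 : K) ∈ I → lexLt n u v →
      MvPolynomial.monomial v (1 : K) ∈ I

/-- An opposite lex ideal: a monomial ideal whose monomials form an opposite lex set. -/
def IsOplexIdeal (I : Ideal (PS K n)) : Prop :=
  IsMonomialIdeal K n I ∧ ∀ u v : Fin n →₀ ℕ, expDeg n u = expDeg n v →
    MvPolynomial.monomial u (1 : K) ∈ I → oplexLt n u v →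
      MvPolynomial.monomial v (1 : K) ∈ I

/-- The initial ideal `in_r(I)` of `I` with respect to a (strict) monomial order `r`:
the ideal generated by the `r`-maximal monomials of the nonzero elements of `I`. -/
def initialIdealO (r : (Fin n →₀ ℕ) → (Fin n →₀ ℕ) → Prop) (I : Ideal (PS K n)) :
    Ideal (PS K n) :=
  Ideal.span {g | ∃ f ∈ I, ∃ m ∈ f.support,
    (∀ m' ∈ f.support, m' = m ∨ r m' m) ∧ g = MvPolynomial.monomial m (1 : K)}


/-! ### Combinatorics of lex, opposite lex and strongly stable sets of monomials -/

namespace Comb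

/-- Lexicographic order on exponent vectors. -/
def cLex {n : ℕ} (a b : Fin n → ℕ) : Prop := ∃ i, (∀ j < i, a j = b j) ∧ a i < b i

/-- Opposite lexicographic order on exponent vectors. -/
def cOp {n : ℕ} (a b : Fin n → ℕ) : Prop := ∃ i, (∀ j > i, a j = b j) ∧ a i < b i

abbrev e {n : ℕ} (i : Fin n) : Fin n → ℕ := Pi.single i 1

abbrev Mon (n d : ℕ) : Finset (Fin n → ℕ) := Finset.Nat.antidiagonalTuple n d

lemma mem_Mon {n d : ℕ} {u : Fin n → ℕ} : u ∈ Mon n d ↔ ∑ i, u i = d :=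
  Finset.Nat.mem_antidiagonalTuple

lemma sum_add_e {n : ℕ} (v : Fin n → ℕ) (i : Fin n) :
    ∑ j, (v + e i) j = ∑ j, v j + 1 := by
  simp [Finset.sum_add_distrib]

lemma cLex_iff {n : ℕ} (a b : Fin n → ℕ) : cLex a b ↔ toLex a < toLex b := Iff.rfl

lemma cLex_trans {n : ℕ} {a b c : Fin n → ℕ} (h : cLex a b) (h' : cLex b c) : cLex a c := by
  rw [cLex_iff] at *
  exact h.trans h'

lemma cLex_irrefl {n : ℕ} (a : Fin n → ℕ) : ¬ cLex a a := by
  rw [cLex_iff]; exact lt_irrefl _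

lemma cLex_tri {n : ℕ} (a b : Fin n → ℕ) : cLex a b ∨ a = b ∨ cLex b a := by
  rw [cLex_iff, cLex_iff]
  rcases lt_trichotomy (toLex a) (toLex b) with h | h | h
  · exact Or.inl h
  · exact Or.inr (Or.inl (toLex.injective h))
  · exact Or.inr (Or.inr h)

structure IsSeg {n : ℕ} (L : Finset (Fin n → ℕ)) (d : ℕ) : Prop where
  sub : ∀ u ∈ L, ∑ i, u i = d
  up : ∀ u ∈ L, ∀ v : Fin n → ℕ, ∑ i, v i = d → cLex u v → v ∈ L

structure IsBor {n : ℕ} (B : Finset (Fin n → ℕ)) (d : ℕ) : Prop where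
  sub : ∀ u ∈ B, ∑ i, u i = d
  bor : ∀ (v : Fin n → ℕ) (i j : Fin n), i < j → v + e j ∈ B → v + e i ∈ B

structure IsOpDown {n : ℕ} (T : Finset (Fin n → ℕ)) (d : ℕ) : Prop where
  sub : ∀ u ∈ T, ∑ i, u i = d
  down : ∀ u ∈ T, ∀ v : Fin n → ℕ, ∑ i, v i = d → cOp v u → v ∈ T

lemma seg_le {n d : ℕ} {L L' : Finset (Fin n → ℕ)} (h : IsSeg L d) (h' : IsSeg L' d)
    (hc : L.card ≤ L'.card) : L ⊆ L' := by
  by_contra hn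
  rw [Finset.not_subset] at hn
  obtain ⟨x, hx, hx'⟩ := hn
  have : L' ⊂ L := by
    rw [Finset.ssubset_iff_of_subset]
    · exact ⟨x, hx, hx'⟩
    · intro y hy
      rcases cLex_tri x y with h1 | h1 | h1
      · exact h.up x hx y (h'.sub y hy) h1
      · exact h1 ▸ hx
      · exact absurd (h'.up y hy x (h.sub x hx) h1) hx'
  exact absurd (Finset.card_lt_card this) (by omega)

lemma seg_exists {n d : ℕ} (k : ℕ) (hk : k ≤ (Mon n d).card) :
    ∃ L : Finset (Fin n → ℕ), IsSeg L d ∧ L.card = k := by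
  induction k with
  | zero => exact ⟨∅, ⟨by simp, by simp⟩, rfl⟩
  | succ k ih =>
    obtain ⟨L, hL, hc⟩ := ih (by omega)
    have hsub : L ⊆ Mon n d := fun u hu => mem_Mon.2 (hL.sub u hu)
    have hne : (Mon n d \ L).Nonempty := by
      rw [← Finset.card_pos, Finset.card_sdiff_of_subset hsub]; omega
    obtain ⟨x, hx, hmax⟩ := Finset.exists_max_image (Mon n d \ L) (fun u => toLex u) hne
    rw [Finset.mem_sdiff, mem_Mon] at hx
    refine ⟨insert x L, ⟨?_, ?_⟩, ?_⟩
    · intro u hu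
      rcases Finset.mem_insert.1 hu with h | h
      · exact h ▸ hx.1
      · exact hL.sub u h
    · intro u hu v hv huv
      rcases Finset.mem_insert.1 hu with h | h
      · subst h
        by_contra hv'
        rw [Finset.mem_insert, not_or] at hv'
        have := hmax v (Finset.mem_sdiff.2 ⟨mem_Mon.2 hv, hv'.2⟩)
        exact absurd ((cLex_iff _ _).1 huv) (not_lt.2 this)
      · exact Finset.mem_insert_of_mem (hL.up u h v hv huv)
    · rw [Finset.card_insert_of_notMem hx.2, hc]

/-! slices along the last variable -/

def sn {n : ℕ} (v : Fin n → ℕ) (k : ℕ) : Fin (n + 1) → ℕ := Fin.snoc (α := fun _ => ℕ) v k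

@[simp] lemma sn_castSucc {n : ℕ} (v : Fin n → ℕ) (k : ℕ) (i : Fin n) :
    sn v k i.castSucc = v i := by simp [sn]

@[simp] lemma sn_last {n : ℕ} (v : Fin n → ℕ) (k : ℕ) : sn v k (Fin.last n) = k := by simp [sn]

lemma sn_ext {n : ℕ} {u : Fin (n + 1) → ℕ} {v : Fin n → ℕ} {k : ℕ}
    (h : ∀ i : Fin n, u i.castSucc = v i) (hk : u (Fin.last n) = k) : u = sn v k := by
  funext i
  refine Fin.lastCases ?_ (fun j => ?_) i
  · simp [hk]
  · simp [h]

lemma sn_inj {n : ℕ} {v w : Fin n → ℕ} {k l : ℕ} (h : sn v k = sn w l) : v = w ∧ k = l := by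
  constructor
  · funext i
    have := congrFun h i.castSucc
    simpa using this
  · have := congrFun h (Fin.last n)
    simpa using this

lemma sum_sn {n : ℕ} (v : Fin n → ℕ) (k : ℕ) : ∑ i, sn v k i = ∑ i, v i + k := by
  rw [Fin.sum_univ_castSucc]; simp

lemma sn_add_e {n : ℕ} (v : Fin n → ℕ) (k : ℕ) (j : Fin n) :
    sn v k + e j.castSucc = sn (v + e j) k := by
  apply sn_ext
  · intro i
    simp [Pi.single_apply]
  · simp [Pi.single_apply, (Fin.castSucc_lt_last j).ne']

lemma sn_add_last {n : ℕ} (v : Fin n → ℕ) (k : ℕ) :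
    sn v k + e (Fin.last n) = sn v (k + 1) := by
  apply sn_ext
  · intro i
    simp [Pi.single_apply, (Fin.castSucc_lt_last i).ne]
  · simp

lemma cLex_sn {n : ℕ} {v w : Fin n → ℕ} (k l : ℕ) (h : cLex v w) : cLex (sn v k) (sn w l) := by
  obtain ⟨i, h1, h2⟩ := h
  refine ⟨i.castSucc, fun j hj => ?_, by simpa using h2⟩
  revert hj
  refine Fin.lastCases ?_ (fun j => ?_) j
  · intro hj
    exact absurd hj (not_lt.2 (Fin.le_last _))
  · intro hj
    simpa using h1 j (by simpa using hj)

lemma cOp_sn_lt {n : ℕ} {v w : Fin n → ℕ} {k l : ℕ} (h : k < l) : cOp (sn v k) (sn w l) :=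
  ⟨Fin.last n, fun j hj => absurd hj (not_lt.2 (Fin.le_last _)), by simpa using h⟩

lemma cOp_sn {n : ℕ} {v w : Fin n → ℕ} (k : ℕ) (h : cOp v w) : cOp (sn v k) (sn w k) := by
  obtain ⟨i, h1, h2⟩ := h
  refine ⟨i.castSucc, fun j hj => ?_, by simpa using h2⟩
  revert hj
  refine Fin.lastCases ?_ (fun j => ?_) j
  · intro hj; simp
  · intro hj
    simpa using h1 j (by simpa using hj)

def sl {n : ℕ} (B : Finset (Fin (n + 1) → ℕ)) (k : ℕ) : Finset (Fin n → ℕ) :=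
  (B.filter (fun u => u (Fin.last n) = k)).image (fun u i => u i.castSucc)

lemma mem_sl {n : ℕ} {B : Finset (Fin (n + 1) → ℕ)} {k : ℕ} {v : Fin n → ℕ} :
    v ∈ sl B k ↔ sn v k ∈ B := by
  unfold sl
  rw [Finset.mem_image]
  constructor
  · rintro ⟨u, hu, rfl⟩
    rw [Finset.mem_filter] at hu
    have : u = sn (fun i => u i.castSucc) k := sn_ext (fun _ => rfl) hu.2
    rw [← this]; exact hu.1
  · intro h
    refine ⟨sn v k, ?_, ?_⟩
    · simp [h]
    · funext i; simp

lemma card_sl {n : ℕ} (B : Finset (Fin (n + 1) → ℕ)) (d : ℕ) (hB : ∀ u ∈ B, ∑ i, u i = d) :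
    B.card = ∑ k ∈ Finset.range (d + 1), (sl B k).card := by
  rw [Finset.card_eq_sum_card_fiberwise (f := fun u => u (Fin.last n))
    (t := Finset.range (d + 1))]
  · refine Finset.sum_congr rfl fun k _ => ?_
    unfold sl
    rw [Finset.card_image_of_injOn]
    intro u hu v hv huv
    simp only [Finset.coe_filter, Set.mem_setOf_eq] at hu hv
    funext i
    refine Fin.lastCases ?_ (fun j => ?_) i
    · rw [hu.2, hv.2]
    · exact congrFun huv j
  · intro u hu
    have h1 := hB u hu
    have h2 : u (Fin.last n) ≤ ∑ i, u i :=
      Finset.single_le_sum (f := u) (fun _ _ => Nat.zero_le _) (Finset.mem_univ _)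
    simp only [Finset.coe_range, Set.mem_Iio]
    omega

lemma sl_inter {n : ℕ} (B T : Finset (Fin (n + 1) → ℕ)) (k : ℕ) :
    sl (B ∩ T) k = sl B k ∩ sl T k := by
  ext v; simp [mem_sl]

/-- The counting property, proved by induction on the number of variables. -/
def PropA (n : ℕ) : Prop := ∀ (d : ℕ) (B L T : Finset (Fin n → ℕ)),
  IsBor B d → IsSeg L d → IsOpDown T d → L.card ≤ B.card → (L ∩ T).card ≤ (B ∩ T).card

def Tset (n d : ℕ) (j : Fin n) : Finset (Fin n → ℕ) := (Mon n d).filter (fun u => ∀ i > j, u i = 0)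

lemma Tset_down (n d : ℕ) (j : Fin n) : IsOpDown (Tset n d j) d := by
  constructor
  · intro u hu
    exact mem_Mon.1 (Finset.mem_filter.1 hu).1
  · rintro u hu v hv ⟨i, h1, h2⟩
    have hu' := (Finset.mem_filter.1 hu).2
    refine Finset.mem_filter.2 ⟨mem_Mon.2 hv, fun k hk => ?_⟩
    rcases lt_trichotomy k i with h | h | h
    · have := hu' i (hk.trans h); omega
    · subst h; have := hu' k hk; omega
    · rw [h1 k h, hu' k hk]

lemma exists_top {n : ℕ} (w : Fin n → ℕ) (hw : ∑ i, w i ≠ 0) :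
    ∃ j, 0 < w j ∧ ∀ i > j, w i = 0 := by
  have hne : (Finset.univ.filter (fun i => 0 < w i)).Nonempty := by
    by_contra h
    rw [Finset.not_nonempty_iff_eq_empty, Finset.filter_eq_empty_iff] at h
    apply hw
    apply Finset.sum_eq_zero
    intro i hi
    have := h hi; omega
  obtain ⟨j, hj, hmax⟩ := Finset.exists_max_image _ (fun i => i) hne
  refine ⟨j, (Finset.mem_filter.1 hj).2, fun i hi => ?_⟩
  by_contra h
  have := hmax i (Finset.mem_filter.2 ⟨Finset.mem_univ _, by omega⟩)
  exact absurd hi (not_lt.2 this)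

lemma sub_e {n : ℕ} {w : Fin n → ℕ} {j : Fin n} (h : 0 < w j) : (w - e j) + e j = w := by
  funext i
  by_cases hi : i = j
  · subst hi; simp; omega
  · simp [Pi.single_apply, hi]

/-- A Macaulay-type estimate for strongly stable sets. -/
lemma mac {m : ℕ} (hA : PropA (m + 1)) {a : ℕ} {B1 B0 Λ1 Λ0 : Finset (Fin (m + 1) → ℕ)}
    (hB1 : IsBor B1 a) (hmul : ∀ v ∈ B1, ∀ j, v + e j ∈ B0)
    (hΛ1 : IsSeg Λ1 a) (hΛ0 : IsSeg Λ0 (a + 1)) (hc1 : Λ1.card = B1.card)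
    (hc0 : Λ0.card = B0.card) (v : Fin (m + 1) → ℕ) (hv : v ∈ Λ1) :
    v + e (Fin.last m) ∈ Λ0 := by
  classical
  by_contra hcon
  set z := v + e (Fin.last m) with hz
  have hvd := hΛ1.sub v hv
  have hzd : ∑ i, z i = a + 1 := by rw [hz, sum_add_e, hvd]
  set W := (Mon (m + 1) (a + 1)).filter (fun w => w = z ∨ cLex z w) with hW
  have hlt : Λ0.card < W.card := by
    apply Finset.card_lt_card
    rw [Finset.ssubset_iff_of_subset]
    · exact ⟨z, Finset.mem_filter.2 ⟨mem_Mon.2 hzd, Or.inl rfl⟩, hcon⟩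
    · intro x hx
      refine Finset.mem_filter.2 ⟨mem_Mon.2 (hΛ0.sub x hx), ?_⟩
      rcases cLex_tri x z with h | h | h
      · exact absurd (hΛ0.up x hx z hzd h) hcon
      · exact Or.inl h
      · exact Or.inr h
  have hsubW : W ⊆ Finset.univ.biUnion
      (fun j => (Λ1 ∩ Tset (m + 1) a j).image (fun x => x + e j)) := by
    intro w hw
    rw [hW, Finset.mem_filter, mem_Mon] at hw
    obtain ⟨hwd, hw⟩ := hw
    obtain ⟨j, hj, hj0⟩ := exists_top w (by omega)
    rw [Finset.mem_biUnion]
    refine ⟨j, Finset.mem_univ _, Finset.mem_image.2 ⟨w - e j, ?_, sub_e hj⟩⟩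
    have hw' := sub_e hj
    set w' := w - e j with hw'def
    have hw'd : ∑ i, w' i = a := by
      have := sum_add_e w' j
      rw [hw'] at this; omega
    rw [Finset.mem_inter]
    constructor
    · suffices w' = v ∨ cLex v w' by
        rcases this with h | h
        · exact h ▸ hv
        · exact hΛ1.up v hv w' hw'd h
      rcases hw with hw | hw
      · left
        have hjl : j = Fin.last m := by
          by_contra hne
          have h1 := hj0 (Fin.last m) (lt_of_le_of_ne (Fin.le_last _) hne)
          rw [hw, hz] at h1
          simp at h1
        subst hjl
        have : w' + e (Fin.last m) = v + e (Fin.last m) := by rw [hw', hw]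
        exact add_right_cancel this
      · obtain ⟨i, h1, h2⟩ := hw
        have hil : i ≠ Fin.last m := by
          rintro rfl
          have e1 : ∑ i, w i = ∑ i, z i := by rw [hwd, hzd]
          rw [Fin.sum_univ_castSucc, Fin.sum_univ_castSucc] at e1
          have : ∀ k : Fin m, z k.castSucc = w k.castSucc :=
            fun k => h1 _ (Fin.castSucc_lt_last k)
          simp only [this] at e1
          omega
        have hzi : ∀ k, k ≠ Fin.last m → z k = v k := by
          intro k hk
          simp [hz, Pi.single_apply, hk]
        have hlt : ∀ k, k ≤ i → k ≠ Fin.last m := by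
          intro k hk hkl
          subst hkl
          exact hil (le_antisymm (Fin.le_last _) hk)
        have hwk : ∀ k, w k = w' k + if k = j then 1 else 0 := by
          intro k
          conv_lhs => rw [← hw']
          simp [Pi.single_apply]
        rcases lt_trichotomy i j with hij | hij | hij
        · right
          refine ⟨i, fun k hk => ?_, ?_⟩
          · have a1 := h1 k hk
            have a2 := hwk k
            rw [if_neg (hk.trans hij).ne] at a2
            rw [← hzi k (hlt k hk.le)]; omega
          · have a2 := hwk i
            rw [if_neg hij.ne] at a2
            rw [← hzi i hil]; omega
        · subst hij
          have hlow : ∀ k < i, v k = w' k := by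
            intro k hk
            have a1 := h1 k hk
            have a2 := hwk k
            rw [if_neg hk.ne] at a2
            rw [← hzi k (hlt k hk.le)]; omega
          have a2 := hwk i
          rw [if_pos rfl] at a2
          have a3 := hzi i hil
          by_cases hlt' : v i < w' i
          · exact Or.inr ⟨i, hlow, hlt'⟩
          · left
            have heq : v i = w' i := by omega
            have hle : ∀ k, w' k ≤ v k := by
              intro k
              rcases lt_trichotomy k i with h | h | h
              · exact (hlow k h).ge
              · subst h; exact heq.ge
              · have := hj0 k h
                have := hwk k
                omega
            have hsum : ∑ k, w' k = ∑ k, v k := by rw [hw'd, hvd]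
            have := (Finset.sum_eq_sum_iff_of_le (fun k _ => hle k)).1 hsum
            funext k
            exact this k (Finset.mem_univ _)
        · exfalso
          have := hj0 i hij
          omega
    · refine Finset.mem_filter.2 ⟨mem_Mon.2 hw'd, fun i hi => ?_⟩
      have h0 := hj0 i hi
      simp [hw'def, h0]
  have h1 : W.card ≤ ∑ j, (Λ1 ∩ Tset (m + 1) a j).card :=
    (Finset.card_le_card hsubW).trans (Finset.card_biUnion_le.trans
      (Finset.sum_le_sum fun j _ => Finset.card_image_le))
  have h2 : ∑ j, (Λ1 ∩ Tset (m + 1) a j).card ≤ ∑ j, (B1 ∩ Tset (m + 1) a j).card :=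
    Finset.sum_le_sum fun j _ => hA a B1 Λ1 _ hB1 hΛ1 (Tset_down _ _ j) hc1.le
  have h3 : ∑ j, (B1 ∩ Tset (m + 1) a j).card ≤ B0.card := by
    have : ∀ j, (B1 ∩ Tset (m + 1) a j).card
        = ((B1 ∩ Tset (m + 1) a j).image (fun x => x + e j)).card := by
      intro j
      rw [Finset.card_image_of_injective]
      intro x y hxy
      exact add_right_cancel hxy
    simp only [this]
    rw [← Finset.card_biUnion]
    · apply Finset.card_le_card
      intro x hx
      rw [Finset.mem_biUnion] at hx
      obtain ⟨j, -, hx⟩ := hx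
      obtain ⟨y, hy, rfl⟩ := Finset.mem_image.1 hx
      exact hmul y (Finset.mem_inter.1 hy).1 j
    · have key : ∀ j j', j < j' → ∀ x, x ∈ (B1 ∩ Tset (m + 1) a j).image (fun x => x + e j) →
          x ∈ (B1 ∩ Tset (m + 1) a j').image (fun x => x + e j') → False := by
        intro j j' hjj x hx hx'
        obtain ⟨y, hy, rfl⟩ := Finset.mem_image.1 hx
        obtain ⟨y', hy', h⟩ := Finset.mem_image.1 hx'
        have hy0 := (Finset.mem_filter.1 (Finset.mem_inter.1 hy).2).2 j' hjj
        have := congrFun h j'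
        simp [hy0, Pi.single_apply, hjj.ne'] at this
      intro j _ j' _ hne
      rw [Function.onFun, Finset.disjoint_left]
      intro x hx hx'
      rcases lt_or_gt_of_ne hne with h | h
      · exact key j j' h x hx hx'
      · exact key j' j h x hx' hx
  omega

end Comb


namespace Comb

lemma cLex_index_ne_last {m : ℕ} {z w : Fin (m + 1) → ℕ} (hs : ∑ i, w i = ∑ i, z i)
    {i : Fin (m + 1)} (h1 : ∀ j < i, z j = w j) (h2 : z i < w i) : i ≠ Fin.last m := by
  rintro rfl
  rw [Fin.sum_univ_castSucc, Fin.sum_univ_castSucc] at hs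
  have : ∀ k : Fin m, z k.castSucc = w k.castSucc :=
    fun k => h1 _ (Fin.castSucc_lt_last k)
  simp only [this] at hs
  omega

lemma sl_sub {n d k : ℕ} {B : Finset (Fin (n + 1) → ℕ)} (hB : ∀ u ∈ B, ∑ i, u i = d) :
    ∀ v ∈ sl B k, ∑ i, v i = d - k := by
  intro v hv
  have := hB _ (mem_sl.1 hv)
  rw [sum_sn] at this
  omega

lemma sl_bor {n d k : ℕ} {B : Finset (Fin (n + 1) → ℕ)} (hB : IsBor B d) :
    IsBor (sl B k) (d - k) := by
  refine ⟨sl_sub hB.sub, fun v i j hij hv => ?_⟩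
  rw [mem_sl, ← sn_add_e] at *
  exact hB.bor _ _ _ (by simpa using hij) hv

lemma sl_seg {n d k : ℕ} (hk : k ≤ d) {L : Finset (Fin (n + 1) → ℕ)} (hL : IsSeg L d) :
    IsSeg (sl L k) (d - k) := by
  refine ⟨sl_sub hL.sub, fun u hu v hv huv => ?_⟩
  rw [mem_sl] at *
  exact hL.up _ hu _ (by rw [sum_sn]; omega) (cLex_sn k k huv)

lemma sl_op {n d k : ℕ} (hk : k ≤ d) {T : Finset (Fin (n + 1) → ℕ)} (hT : IsOpDown T d) :
    IsOpDown (sl T k) (d - k) := by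
  refine ⟨sl_sub hT.sub, fun u hu v hv huv => ?_⟩
  rw [mem_sl] at *
  exact hT.down _ hu _ (by rw [sum_sn]; omega) (cOp_sn k huv)

lemma propA_step {m : ℕ} (hA : PropA (m + 1)) : PropA (m + 2) := by
  classical
  intro d B L T hB hL hT hcard
  have hex : ∀ k, ∃ Λ : Finset (Fin (m + 1) → ℕ),
      IsSeg Λ (d - k) ∧ Λ.card = (sl B k).card := by
    intro k
    apply seg_exists
    apply Finset.card_le_card
    intro v hv
    exact mem_Mon.2 (sl_sub hB.sub v hv)
  choose Λ hΛ hΛc using hex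
  have step : ∀ k, k + 1 ≤ d → ∀ v ∈ Λ (k + 1), v + e (Fin.last m) ∈ Λ k := by
    intro k hk v hv
    have h0 := hΛ k
    rw [show d - k = (d - (k + 1)) + 1 by omega] at h0
    refine mac hA (sl_bor hB) ?_ (hΛ (k + 1)) h0 (hΛc _) (hΛc _) v hv
    intro v hv j
    rw [mem_sl] at *
    rw [← sn_add_last] at hv
    rw [← sn_add_e]
    exact hB.bor _ _ _ (Fin.castSucc_lt_last j) hv
  have iter : ∀ r k, k + r ≤ d → ∀ v ∈ Λ (k + r),
      ∃ v' ∈ Λ k, ∀ i, i ≠ Fin.last m → v' i = v i := by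
    intro r
    induction r with
    | zero => intro k _ v hv; exact ⟨v, hv, fun _ _ => rfl⟩
    | succ r ih =>
      intro k hk v hv
      obtain ⟨v', hv', h⟩ := ih k (by omega) _ (step (k + r) (by omega) v hv)
      refine ⟨v', hv', fun i hi => ?_⟩
      rw [h i hi]
      simp [hi]
  have big : ∀ E, E ≤ d + 1 → ∑ k ∈ Finset.range E, (sl L k).card
      ≤ ∑ k ∈ Finset.range E, (sl B k).card := by
    intro E hE
    by_contra hcon
    push Not at hcon
    obtain ⟨k, hkE, hk⟩ := Finset.exists_lt_of_sum_lt hcon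
    rw [Finset.mem_range] at hkE
    rw [← hΛc] at hk
    have hnsub : ¬ sl L k ⊆ Λ k := fun h => absurd (Finset.card_le_card h) (by omega)
    rw [Finset.not_subset] at hnsub
    obtain ⟨w, hw, hw'⟩ := hnsub
    have hwd := sl_sub hL.sub w hw
    have hs : ∀ s ∈ Finset.Ico E (d + 1), (sl B s).card ≤ (sl L s).card := by
      intro s hs
      rw [Finset.mem_Ico] at hs
      rw [← hΛc]
      apply Finset.card_le_card
      intro v hv
      have hvd := (hΛ s).sub v hv
      obtain ⟨v', hv', hvv⟩ := iter (s - k) k (by omega) v (by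
        rw [show k + (s - k) = s by omega]; exact hv)
      have hv'd := (hΛ k).sub v' hv'
      have hlt : cLex w v' := by
        rcases cLex_tri w v' with h | h | h
        · exact h
        · exact absurd (h ▸ hv') hw'
        · exact absurd ((hΛ k).up v' hv' w hwd h) hw'
      obtain ⟨i, h1, h2⟩ := hlt
      have hil : i ≠ Fin.last m := cLex_index_ne_last (by omega) h1 h2
      rw [mem_sl] at *
      refine hL.up _ hw _ (by rw [sum_sn]; omega) (cLex_sn k s ⟨i, fun j hj => ?_, ?_⟩)
      · rw [← hvv j]
        · exact h1 j hj
        · rintro rfl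
          exact absurd hj (not_lt.2 (Fin.le_last _))
      · rw [← hvv i hil]; exact h2
    have h3 := Finset.sum_le_sum hs
    have h4 := card_sl B d hB.sub
    have h5 := card_sl L d hL.sub
    rw [← Finset.sum_range_add_sum_Ico _ hE] at h4 h5
    omega
  -- structure of `T`
  by_cases hTe : T = ∅
  · simp [hTe]
  obtain ⟨t, ht, hmax⟩ := Finset.exists_max_image T (fun u => u (Fin.last (m + 1)))
    (Finset.nonempty_iff_ne_empty.2 hTe)
  set E := t (Fin.last (m + 1)) with hE
  have htE : t = sn (fun i => t i.castSucc) E := sn_ext (fun _ => rfl) rfl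
  have hEd : E ≤ d := by
    have h1 := hT.sub t ht
    have h2 : t (Fin.last (m + 1)) ≤ ∑ i, t i :=
      Finset.single_le_sum (f := t) (fun _ _ => Nat.zero_le _) (Finset.mem_univ _)
    omega
  have hlow : ∀ (X : Finset (Fin (m + 2) → ℕ)), (∀ u ∈ X, ∑ i, u i = d) → ∀ k < E,
      sl (X ∩ T) k = sl X k := by
    intro X hX k hk
    rw [sl_inter]
    apply Finset.inter_eq_left.2
    intro v hv
    have hvd := sl_sub hX v hv
    rw [mem_sl]
    refine hT.down t ht _ (by rw [sum_sn]; omega) ?_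
    rw [htE]
    exact cOp_sn_lt hk
  have hhigh : ∀ (X : Finset (Fin (m + 2) → ℕ)), ∀ k > E, sl (X ∩ T) k = ∅ := by
    intro X k hk
    rw [Finset.eq_empty_iff_forall_notMem]
    intro v hv
    rw [mem_sl, Finset.mem_inter] at hv
    have := hmax _ hv.2
    simp at this
    omega
  have hcount : ∀ (X : Finset (Fin (m + 2) → ℕ)), (∀ u ∈ X, ∑ i, u i = d) →
      (X ∩ T).card = ∑ k ∈ Finset.range E, (sl X k).card + (sl X E ∩ sl T E).card := by
    intro X hX
    rw [card_sl (X ∩ T) d (fun u hu => hX u (Finset.mem_inter.1 hu).1),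
      ← Finset.sum_range_add_sum_Ico _ (show E + 1 ≤ d + 1 by omega), Finset.sum_range_succ,
      sl_inter X T E]
    rw [Finset.sum_congr rfl (fun k hk => by rw [hlow X hX k (Finset.mem_range.1 hk)])]
    rw [Finset.sum_eq_zero (s := Finset.Ico (E + 1) (d + 1))]
    · rfl
    · intro k hk
      rw [hhigh X k (by rw [Finset.mem_Ico] at hk; omega)]
      rfl
  rw [hcount L hL.sub, hcount B hB.sub]
  have b1 := big E (by omega)
  have b2 := big (E + 1) (by omega)
  rw [Finset.sum_range_succ, Finset.sum_range_succ] at b2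
  have hTE := sl_op hEd hT
  have i1 := hA (d - E) (sl B E) (Λ E) (sl T E) (sl_bor hB) (hΛ E) hTE (hΛc E).le
  have hLE := sl_seg hEd hL
  rcases le_total (sl L E).card (Λ E).card with h | h
  · have := seg_le hLE (hΛ E) h
    have := Finset.card_le_card (Finset.inter_subset_inter_right (u := sl T E) this)
    omega
  · have hsub := seg_le (hΛ E) hLE h
    have h6 : (sl L E ∩ sl T E).card ≤ (Λ E ∩ sl T E).card + (sl L E \ Λ E).card := by
      rw [← Finset.card_union_of_disjoint]
      · apply Finset.card_le_card
        intro v hv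
        simp only [Finset.mem_union, Finset.mem_inter, Finset.mem_sdiff] at *
        tauto
      · rw [Finset.disjoint_left]
        intro v hv hv'
        simp only [Finset.mem_inter, Finset.mem_sdiff] at *
        tauto
    rw [Finset.card_sdiff_of_subset hsub] at h6
    have := hΛc E
    omega

lemma propA_small {n : ℕ} (hn : n ≤ 1) : PropA n := by
  classical
  intro d B L T hB hL hT hcard
  have huniq : ∀ u v : Fin n → ℕ, ∑ i, u i = d → ∑ i, v i = d → u = v := by
    intro u v hu hv
    interval_cases n
    · exact Subsingleton.elim _ _
    · simp at hu hv
      funext i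
      rw [Subsingleton.elim i 0, hu, hv]
  apply Finset.card_le_card
  apply Finset.inter_subset_inter_right
  intro u hu
  have : 0 < B.card := lt_of_lt_of_le (Finset.card_pos.2 ⟨u, hu⟩) hcard
  obtain ⟨v, hv⟩ := Finset.card_pos.1 this
  rw [huniq u v (hL.sub u hu) (hB.sub v hv)]
  exact hv

theorem propA : ∀ n, PropA n
  | 0 => propA_small (by norm_num)
  | 1 => propA_small le_rfl
  | (n + 2) => propA_step (propA (n + 1))

/-! products -/

/-- The set of sums `m + c` with `m ∈ B`, `c ∈ C`, of total degree `d`. -/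
def prodSet {n : ℕ} (B C : (Fin n → ℕ) → Prop) (d : ℕ) : Finset (Fin n → ℕ) := by
  classical
  exact (Mon n d).filter (fun u => ∃ m c, B m ∧ C c ∧ u = m + c)

lemma mem_prodSet {n : ℕ} {B C : (Fin n → ℕ) → Prop} {d : ℕ} {u : Fin n → ℕ} :
    u ∈ prodSet B C d ↔ ∑ i, u i = d ∧ ∃ m c, B m ∧ C c ∧ u = m + c := by
  classical
  unfold prodSet
  rw [Finset.mem_filter, mem_Mon]

lemma sum_add {n : ℕ} (m c : Fin n → ℕ) : ∑ i, (m + c) i = ∑ i, m i + ∑ i, c i := by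
  simp [Finset.sum_add_distrib]

def Before {n : ℕ} (m c : Fin n → ℕ) : Prop := ∀ i k, 0 < m i → 0 < c k → i ≤ k

def MinGen {n : ℕ} (C : (Fin n → ℕ) → Prop) (c : Fin n → ℕ) : Prop :=
  C c ∧ ∀ c' k, c = c' + e k → ¬ C c'

lemma sort_pair {n : ℕ} {L C : (Fin n → ℕ) → Prop}
    (hLi : ∀ m k, L m → L (m + e k)) (hLb : ∀ v i j, i < j → L (v + e j) → L (v + e i))
    (hCb : ∀ v i j, i < j → C (v + e i) → C (v + e j)) :
    ∀ (N : ℕ) (m c : Fin n → ℕ), L m → C c →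
      (∑ i, c i) * (n * (∑ i, (m + c) i) + 1) + ∑ i, m i * i ≤ N →
      ∃ m' c', L m' ∧ MinGen C c' ∧ Before m' c' ∧ m' + c' = m + c := by
  intro N
  induction N using Nat.strong_induction_on with
  | _ N ih =>
    intro m c hm hc hN
    by_cases h1 : MinGen C c
    · by_cases h2 : Before m c
      · exact ⟨m, c, hm, h1, h2, rfl⟩
      · unfold Before at h2
        push Not at h2
        obtain ⟨i, k, hi, hk, hki⟩ := h2
        have em := sub_e hi
        have ec := sub_e hk
        set m0 := m - e i
        set c0 := c - e k
        have hsum : (m0 + e k) + (c0 + e i) = m + c := by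
          rw [← em, ← ec]; abel
        have hmeas : ∑ j, (m0 + e k) j * (j : ℕ) < ∑ j, m j * (j : ℕ) := by
          rw [← em]
          simp only [Pi.add_apply, add_mul, Finset.sum_add_distrib, Pi.single_apply, ite_mul,
            one_mul, zero_mul, Finset.sum_ite_eq', Finset.mem_univ, if_true]
          have : (k : ℕ) < i := hki
          omega
        have hcs : ∑ j, (c0 + e i) j = ∑ j, c j := by
          conv_rhs => rw [← ec]
          rw [sum_add_e, sum_add_e]
        obtain ⟨m', c', r1, r2, r3, r4⟩ := ih
          ((∑ i, c i) * (n * (∑ i, (m + c) i) + 1) + ∑ j, (m0 + e k) j * (j : ℕ)) (by omega)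
          (m0 + e k) (c0 + e i) (hLb _ _ _ hki (by rw [em]; exact hm))
          (hCb _ _ _ hki (by rw [ec]; exact hc)) (by rw [hsum, hcs])
        exact ⟨m', c', r1, r2, r3, r4.trans hsum⟩
    · unfold MinGen at h1
      push Not at h1
      obtain ⟨c', k, hck, hc'⟩ := h1 hc
      have hsum : (m + e k) + c' = m + c := by rw [hck]; abel
      have hcs : ∑ j, c j = ∑ j, c' j + 1 := by rw [hck, sum_add_e]
      have hb : ∑ j, (m + e k) j * (j : ℕ) ≤ n * ∑ i, (m + c) i := by
        rw [Finset.mul_sum]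
        apply Finset.sum_le_sum
        intro j _
        rw [mul_comm, ← hsum]
        apply Nat.mul_le_mul j.2.le
        simp
      obtain ⟨m', c'', r1, r2, r3, r4⟩ := ih
          ((∑ i, c' i) * (n * (∑ i, (m + c) i) + 1) + ∑ j, (m + e k) j * (j : ℕ)) (by
            rw [hcs, add_mul, one_mul] at hN
            exact lt_of_lt_of_le (by rw [add_assoc]; gcongr; omega) hN)
          (m + e k) c' (hLi _ _ hm) hc' (by rw [hsum])
      exact ⟨m', c'', r1, r2, r3, r4.trans hsum⟩

lemma before_inj {n : ℕ} {C : (Fin n → ℕ) → Prop} (hCi : ∀ c v, C c → C (c + v))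
    {m c m' c' : Fin n → ℕ}
    (hc : MinGen C c) (hc' : MinGen C c') (hb : Before m c) (hb' : Before m' c')
    (h : m + c = m' + c') : c = c' := by
  have hp : ∀ i, m i + c i = m' i + c' i := fun i => congrFun h i
  have key : ∀ {c c' : Fin n → ℕ}, MinGen C c → MinGen C c' → (∀ i, c i ≤ c' i) → c = c' := by
    intro c c' hc hc' hle
    by_contra hne
    obtain ⟨k, hk⟩ : ∃ k, c k < c' k := by
      by_contra hcon
      push Not at hcon
      exact hne (funext fun i => le_antisymm (hle i) (hcon i))
    have ek := sub_e (show 0 < c' k by omega)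
    refine hc'.2 _ k ek.symm ?_
    have : c' - e k = c + (c' - e k - c) := by
      funext i
      by_cases hi : i = k
      · subst hi; simp; omega
      · have := hle i
        simp [hi]; omega
    rw [this]
    exact hCi _ _ hc.1
  by_cases hle : ∀ i, c i ≤ c' i
  · exact key hc hc' hle
  · push Not at hle
    obtain ⟨k, hk⟩ := hle
    refine (key hc' hc (fun i => ?_)).symm
    by_contra hi
    push Not at hi
    have h1 := hp i
    have h2 := hp k
    have a1 := hb i k (by omega) (by omega)
    have a2 := hb' k i (by omega) (by omega)
    have : i = k := le_antisymm a1 a2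
    subst this
    omega

theorem propB {n : ℕ} {B L C : (Fin n → ℕ) → Prop}
    (hLi : ∀ m k, L m → L (m + e k)) (hLb : ∀ v i j, i < j → L (v + e j) → L (v + e i))
    (hCi : ∀ c v, C c → C (c + v)) (hCb : ∀ v i j, i < j → C (v + e i) → C (v + e j))
    (hBL : ∀ (a : ℕ) (c : Fin n → ℕ), ∀ (s t : Finset (Fin n → ℕ)),
      (∀ m, m ∈ s ↔ ∑ i, m i = a ∧ L m ∧ Before m c) →
      (∀ m, m ∈ t ↔ ∑ i, m i = a ∧ B m ∧ Before m c) → s.card ≤ t.card) (d : ℕ) :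
    (prodSet L C d).card ≤ (prodSet B C d).card := by
  classical
  set G : Finset (Fin n → ℕ) :=
    (((Finset.range (d + 1)).biUnion (fun b => Mon n b))).filter (fun c => MinGen C c) with hG
  have hGm : ∀ c, c ∈ G ↔ ∑ i, c i ≤ d ∧ MinGen C c := by
    intro c
    rw [hG, Finset.mem_filter, Finset.mem_biUnion]
    simp [mem_Mon, Nat.lt_succ_iff]
  let X : ((Fin n → ℕ) → Prop) → (Fin n → ℕ) → Finset (Fin n → ℕ) := fun P c =>
    (Mon n (d - ∑ i, c i)).filter (fun m => P m ∧ Before m c)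
  have hX : ∀ P c m, m ∈ X P c ↔ ∑ i, m i = d - ∑ i, c i ∧ P m ∧ Before m c := by
    intro P c m
    simp only [X, Finset.mem_filter, mem_Mon]
  have h1 : (prodSet L C d).card ≤ ∑ c ∈ G, (X L c).card := by
    have : prodSet L C d ⊆ G.biUnion (fun c => (X L c).image (fun m => m + c)) := by
      intro u hu
      rw [mem_prodSet] at hu
      obtain ⟨hud, m, c, hm, hc, rfl⟩ := hu
      obtain ⟨m', c', r1, r2, r3, r4⟩ := sort_pair hLi hLb hCb _ m c hm hc le_rfl
      rw [← r4, sum_add] at hud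
      rw [Finset.mem_biUnion]
      refine ⟨c', (hGm c').2 ⟨by omega, r2⟩, Finset.mem_image.2 ⟨m', (hX _ _ _).2 ⟨?_, r1, r3⟩, r4⟩⟩
      omega
    exact (Finset.card_le_card this).trans (Finset.card_biUnion_le.trans
      (Finset.sum_le_sum fun c _ => Finset.card_image_le))
  have h2 : ∑ c ∈ G, (X L c).card ≤ ∑ c ∈ G, (X B c).card :=
    Finset.sum_le_sum fun c _ => hBL _ c _ _ (hX L c) (hX B c)
  have h3 : ∑ c ∈ G, (X B c).card ≤ (prodSet B C d).card := by
    have : ∀ c, (X B c).card = ((X B c).image (fun m => m + c)).card := by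
      intro c
      rw [Finset.card_image_of_injective]
      intro x y hxy
      exact add_right_cancel hxy
    simp only [this]
    rw [← Finset.card_biUnion]
    · apply Finset.card_le_card
      intro u hu
      rw [Finset.mem_biUnion] at hu
      obtain ⟨c, hc, hu⟩ := hu
      obtain ⟨m, hm, rfl⟩ := Finset.mem_image.1 hu
      rw [hGm] at hc
      rw [hX] at hm
      rw [mem_prodSet, sum_add]
      exact ⟨by omega, m, c, hm.2.1, hc.2.1, rfl⟩
    · intro c hc c' hc' hne
      rw [Function.onFun, Finset.disjoint_left]
      intro u hu hu'
      obtain ⟨m, hm, rfl⟩ := Finset.mem_image.1 hu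
      obtain ⟨m', hm', h⟩ := Finset.mem_image.1 hu'
      rw [Finset.mem_coe, hGm] at hc hc'
      rw [hX] at hm hm'
      exact hne (before_inj hCi hc.2 hc'.2 hm.2.2 hm'.2.2 h.symm)
  exact h1.trans (h2.trans h3)

end Comb


/-! ### Leading monomials and polynomial families -/

namespace Fam

lemma lexLt_iff {n : ℕ} (a b : Fin n →₀ ℕ) : lexLt n a b ↔ toLex a < toLex b := Iff.rfl

lemma lexLt_def {n : ℕ} (a b : Fin n →₀ ℕ) :
    lexLt n a b ↔ ∃ i, (∀ j < i, a j = b j) ∧ a i < b i := Iff.rfl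

lemma oplexLt_def {n : ℕ} (a b : Fin n →₀ ℕ) :
    oplexLt n a b ↔ ∃ i, (∀ j > i, a j = b j) ∧ a i < b i := Iff.rfl

lemma lexLt_trans {n : ℕ} {a b c : Fin n →₀ ℕ} (h : lexLt n a b) (h' : lexLt n b c) :
    lexLt n a c := by
  rw [lexLt_iff] at *
  exact h.trans h'

lemma lexLt_irrefl {n : ℕ} (a : Fin n →₀ ℕ) : ¬ lexLt n a a := by
  rw [lexLt_iff]; exact lt_irrefl _

lemma lexLt_tri {n : ℕ} (a b : Fin n →₀ ℕ) : lexLt n a b ∨ a = b ∨ lexLt n b a := by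
  rw [lexLt_iff, lexLt_iff]
  rcases lt_trichotomy (toLex a) (toLex b) with h | h | h
  · exact Or.inl h
  · exact Or.inr (Or.inl (toLex.injective h))
  · exact Or.inr (Or.inr h)

lemma lexLt_add {n : ℕ} {a b : Fin n →₀ ℕ} (c : Fin n →₀ ℕ) (h : lexLt n a b) :
    lexLt n (c + a) (c + b) := by
  obtain ⟨i, h1, h2⟩ := (lexLt_def _ _).1 h
  exact (lexLt_def _ _).2 ⟨i, fun j hj => by simp [h1 j hj], by simpa using h2⟩

/-- `u` is the leading exponent of `p` with respect to `r`. -/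
def IsLead {n : ℕ} {A : Type} [CommRing A] (r : (Fin n →₀ ℕ) → (Fin n →₀ ℕ) → Prop)
    (p : MvPolynomial (Fin n) A) (u : Fin n →₀ ℕ) : Prop :=
  coeff u p ≠ 0 ∧ ∀ v, coeff v p ≠ 0 → v = u ∨ r v u

lemma exists_lead {n : ℕ} {A : Type} [CommRing A] {p : MvPolynomial (Fin n) A} (hp : p ≠ 0) :
    ∃ u, IsLead (lexLt n) p u := by
  obtain ⟨u, hu, hmax⟩ := Finset.exists_max_image p.support (fun u => toLex u)
    (support_nonempty.2 hp)
  refine ⟨u, mem_support_iff.1 hu, fun v hv => ?_⟩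
  have := hmax v (mem_support_iff.2 hv)
  rcases lexLt_tri v u with h | h | h
  · exact Or.inr h
  · exact Or.inl h
  · exact absurd ((lexLt_iff _ _).1 h) (not_lt.2 this)

lemma isLead_monomial_mul {n : ℕ} {A : Type} [CommRing A] {p : MvPolynomial (Fin n) A}
    {u : Fin n →₀ ℕ} (h : IsLead (lexLt n) p u) (w : Fin n →₀ ℕ) :
    IsLead (lexLt n) (monomial w 1 * p) (w + u) := by
  refine ⟨by rw [coeff_monomial_mul, one_mul]; exact h.1, fun v hv => ?_⟩
  rw [coeff_monomial_mul'] at hv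
  split_ifs at hv with hle
  · rw [one_mul] at hv
    obtain ⟨v', rfl⟩ := exists_add_of_le hle
    rw [add_tsub_cancel_left] at hv
    rcases h.2 v' hv with h1 | h1
    · exact Or.inl (by rw [h1])
    · exact Or.inr (lexLt_add w h1)
  · exact absurd rfl hv

/-- Linear independence of a finite family after restriction to the coordinates in `U`. -/
def IndepOn {n : ℕ} {ι A : Type} [Fintype ι] [CommRing A] (U : Set (Fin n →₀ ℕ))
    (p : ι → MvPolynomial (Fin n) A) : Prop :=
  ∀ c : ι → A, (∀ u ∈ U, ∑ k, c k * coeff u (p k) = 0) → c = 0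

lemma indepOn_tri {n : ℕ} {ι A : Type} [Fintype ι] [CommRing A] [IsDomain A]
    (U : Set (Fin n →₀ ℕ)) (p : ι → MvPolynomial (Fin n) A)
    (r : (Fin n →₀ ℕ) → (Fin n →₀ ℕ) → Prop)
    (htr : ∀ {a b c}, r a b → r b c → r a c) (hirr : ∀ a, ¬ r a a)
    (τ : ι → (Fin n →₀ ℕ)) (hτ : Function.Injective τ) (hU : ∀ k, τ k ∈ U)
    (h0 : ∀ k, coeff (τ k) (p k) ≠ 0)
    (h : ∀ k, ∀ v ∈ U, coeff v (p k) ≠ 0 → v = τ k ∨ r v (τ k)) : IndepOn U p := by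
  intro c hc
  by_contra hne
  have hS : {k | c k ≠ 0}.Nonempty := by
    by_contra hcon
    rw [Set.not_nonempty_iff_eq_empty, Set.eq_empty_iff_forall_notMem] at hcon
    apply hne
    funext k
    by_contra hk
    exact hcon k hk
  let s : ι → ι → Prop := fun k k' => r (τ k') (τ k)
  haveI : IsTrans ι s := ⟨fun a b c h h' => htr h' h⟩
  haveI : Std.Irrefl s := ⟨fun a => hirr _⟩
  have wf : WellFounded s := Finite.wellFounded_of_trans_of_irrefl s
  obtain ⟨k, hk, hmin⟩ := wf.has_min _ hS
  have h1 := hc (τ k) (hU k)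
  rw [Finset.sum_eq_single k] at h1
  · rcases mul_eq_zero.1 h1 with h2 | h2
    · exact hk h2
    · exact h0 k h2
  · intro k' _ hkk
    by_contra hcon
    have hc' : c k' ≠ 0 := fun h => hcon (by rw [h, zero_mul])
    have hp' : coeff (τ k) (p k') ≠ 0 := fun h => hcon (by rw [h, mul_zero])
    rcases h k' _ (hU k) hp' with h2 | h2
    · exact hkk (hτ h2).symm
    · exact hmin k' hc' h2
  · intro h; exact absurd (Finset.mem_univ _) h

/-- Semicontinuity of rank. -/
lemma indepOn_generic {n : ℕ} {K ι R : Type} [Field K] [Fintype ι] [CommRing R] [Algebra K R]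
    (U : Set (Fin n →₀ ℕ)) (q : ι → MvPolynomial (Fin n) R) (θ₀ : R →ₐ[K] K)
    (h : IndepOn U (fun k => map (θ₀ : R →+* K) (q k))) :
    ∃ D : R, θ₀ D ≠ 0 ∧ ∀ (A : Type) [CommRing A] [IsDomain A] (θ : R →+* A), θ D ≠ 0 →
      IndepOn U (fun k => map θ (q k)) := by
  classical
  set U0 : Finset (Fin n →₀ ℕ) :=
    (Finset.univ.biUnion (fun k => (map (θ₀ : R →+* K) (q k)).support)).filter (· ∈ U) with hU0
  have hU0U : ∀ u : U0, (u : Fin n →₀ ℕ) ∈ U := fun u => (Finset.mem_filter.1 u.2).2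
  let X : Matrix U0 ι R := fun u k => coeff (u : Fin n →₀ ℕ) (q k)
  let X0 : Matrix U0 ι K := fun u k => θ₀ (X u k)
  have hinj : LinearMap.ker (Matrix.toLin' X0) = ⊥ := by
    rw [LinearMap.ker_eq_bot']
    intro c hc
    apply h c
    intro u hu
    by_cases hu0 : u ∈ U0
    · have := congrFun hc ⟨u, hu0⟩
      rw [Matrix.toLin'_apply] at this
      simp only [Matrix.mulVec, dotProduct, X0, X, Pi.zero_apply] at this
      rw [← this]
      refine Finset.sum_congr rfl fun k _ => ?_
      rw [coeff_map, mul_comm]; rfl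
    · apply Finset.sum_eq_zero
      intro k _
      have : coeff u (map (θ₀ : R →+* K) (q k)) = 0 := by
        by_contra hne
        exact hu0 (Finset.mem_filter.2 ⟨Finset.mem_biUnion.2 ⟨k, Finset.mem_univ _,
          mem_support_iff.2 hne⟩, hu⟩)
      rw [this, mul_zero]
  obtain ⟨g, hg⟩ := LinearMap.exists_leftInverse_of_injective _ hinj
  let Φ : Matrix ι U0 K := LinearMap.toMatrix' g
  have hΦ : Φ * X0 = 1 := by
    have := congrArg LinearMap.toMatrix' hg
    rw [LinearMap.toMatrix'_comp, LinearMap.toMatrix'_toLin', LinearMap.toMatrix'_id] at this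
    exact this
  refine ⟨(Φ.map (algebraMap K R) * X).det, ?_, ?_⟩
  · have : θ₀ (Φ.map (algebraMap K R) * X).det = (Φ * X0).det := by
      rw [AlgHom.map_det]
      congr 1
      ext i j
      simp only [AlgHom.mapMatrix_apply, Matrix.map_apply, Matrix.mul_apply, map_sum, map_mul,
        AlgHom.commutes]
      rfl
    rw [this, hΦ, Matrix.det_one]
    exact one_ne_zero
  · intro A _ _ θ hθ c hc
    have hdet : ((Φ.map (algebraMap K R) * X).map θ).det ≠ 0 := by
      rw [← RingHom.mapMatrix_apply, ← RingHom.map_det]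
      exact hθ
    apply Matrix.eq_zero_of_mulVec_eq_zero hdet
    rw [Matrix.map_mul, ← Matrix.mulVec_mulVec]
    have : (X.map θ).mulVec c = 0 := by
      funext u
      simp only [Matrix.mulVec, dotProduct, Matrix.map_apply, X, Pi.zero_apply]
      rw [← hc u (hU0U u)]
      refine Finset.sum_congr rfl fun k _ => ?_
      rw [coeff_map, mul_comm]
      rfl
    rw [this, Matrix.mulVec_zero]

/-- An independent family has at most as many members as there are leading exponents. -/
lemma card_le_lead {n : ℕ} {ι A : Type} [Fintype ι] [CommRing A] [Nontrivial A]
    (V : Submodule A (MvPolynomial (Fin n) A)) (U : Set (Fin n →₀ ℕ)) (X : Finset (Fin n →₀ ℕ))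
    (hX : ∀ p ∈ V, ∀ u ∈ U, IsLead (lexLt n) p u → u ∈ X)
    (hUp : ∀ p ∈ V, ∀ u ∈ U, ∀ v, coeff u p ≠ 0 → coeff v p ≠ 0 → lexLt n u v → v ∈ U)
    (p : ι → MvPolynomial (Fin n) A) (hp : ∀ k, p k ∈ V) (hind : IndepOn U p) :
    Fintype.card ι ≤ X.card := by
  classical
  let f : (ι → A) →ₗ[A] (X → A) :=
    { toFun := fun c u => ∑ k, c k * coeff (u : Fin n →₀ ℕ) (p k)
      map_add' := by
        intro c c'; funext u
        simp [add_mul, Finset.sum_add_distrib]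
      map_smul' := by
        intro a c; funext u
        simp [mul_assoc, Finset.mul_sum] }
  have hf : Function.Injective f := by
    rw [← LinearMap.ker_eq_bot, LinearMap.ker_eq_bot']
    intro c hc
    apply hind
    intro u hu
    by_contra hne
    set P := ∑ k, c k • p k with hP
    have hPV : P ∈ V := Submodule.sum_mem _ fun k _ => V.smul_mem _ (hp k)
    have hcoeff : ∀ v, coeff v P = ∑ k, c k * coeff v (p k) := by
      intro v
      rw [hP, coeff_sum]
      refine Finset.sum_congr rfl fun k _ => ?_
      rw [coeff_smul, smul_eq_mul]
    rw [← hcoeff] at hne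
    have hP0 : P ≠ 0 := by
      rintro h; apply hne; rw [h, coeff_zero]
    obtain ⟨v, hv⟩ := exists_lead hP0
    have hvU : v ∈ U := by
      rcases hv.2 u hne with h | h
      · exact h ▸ hu
      · exact hUp P hPV u hu v hne hv.1 h
    have hvX := hX P hPV v hvU hv
    have := congrFun hc ⟨v, hvX⟩
    apply hv.1
    rw [hcoeff]
    exact this
  have := card_le_of_injective A f hf
  simpa using this

end Fam


/-! ### Coordinate changes and families of ideals -/

namespace Fam

variable {K n}

lemma deg_of_coeff {σ A : Type} [CommRing A] {p : MvPolynomial σ A} {d : ℕ}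
    (hp : p.IsHomogeneous d) {u : σ →₀ ℕ} (hu : coeff u p ≠ 0) : u.degree = d := by
  by_contra h
  exact hu (hp.coeff_eq_zero h)

lemma map_hc {σ A B : Type} [CommRing A] [CommRing B] (θ : A →+* B) (d : ℕ)
    (p : MvPolynomial σ A) :
    map θ (homogeneousComponent d p) = homogeneousComponent d (map θ p) := by
  ext u
  rw [coeff_map, coeff_homogeneousComponent, coeff_homogeneousComponent, coeff_map]
  split_ifs <;> simp

/-- The finite set of exponents of degree `d`. -/
def E (n d : ℕ) : Finset (Fin n →₀ ℕ) := Finset.finsuppAntidiag Finset.univ d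

lemma mem_E {d : ℕ} {u : Fin n →₀ ℕ} : u ∈ E n d ↔ u.degree = d := by
  unfold E
  rw [Finset.mem_finsuppAntidiag, Finsupp.degree_eq_sum]
  simp

lemma expDeg_eq (u : Fin n →₀ ℕ) : expDeg n u = u.degree := by
  rw [Finsupp.degree_eq_sum]; rfl

/-- Linear substitution. -/
def cc {A : Type} [CommRing A] (M : Matrix (Fin n) (Fin n) A) :
    MvPolynomial (Fin n) A →ₐ[A] MvPolynomial (Fin n) A :=
  aeval (fun i => ∑ j, M j i • X j)

lemma coordChange_eq (g : GL (Fin n) K) :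
    coordChange K n g = cc (g : Matrix (Fin n) (Fin n) K) := rfl

lemma cc_X {A : Type} [CommRing A] (M : Matrix (Fin n) (Fin n) A) (i : Fin n) :
    cc M (X i) = ∑ j, M j i • X j := by
  unfold cc; rw [aeval_X]

lemma cc_mul {A : Type} [CommRing A] (M M' : Matrix (Fin n) (Fin n) A)
    (p : MvPolynomial (Fin n) A) : cc (M * M') p = cc M (cc M' p) := by
  have : cc (M * M') = (cc M).comp (cc M') := by
    apply MvPolynomial.algHom_ext
    intro i
    rw [AlgHom.comp_apply, cc_X, cc_X, map_sum]
    simp only [map_smul, cc_X, Matrix.mul_apply, Finset.sum_smul, Finset.smul_sum, smul_smul]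
    rw [Finset.sum_comm]
    simp only [mul_comm]
  rw [this]; rfl

lemma cc_one {A : Type} [CommRing A] (p : MvPolynomial (Fin n) A) : cc 1 p = p := by
  have : cc (1 : Matrix (Fin n) (Fin n) A) = AlgHom.id A _ := by
    apply MvPolynomial.algHom_ext
    intro i
    rw [cc_X]
    simp [Matrix.one_apply]
  rw [this]; rfl

lemma map_cc {A B : Type} [CommRing A] [CommRing B] (θ : A →+* B)
    (M : Matrix (Fin n) (Fin n) A) (p : MvPolynomial (Fin n) A) :
    map θ (cc M p) = cc (M.map θ) (map θ p) := by
  induction p using MvPolynomial.induction_on with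
  | C a => simp only [cc, algHom_C, map_C, algebraMap_eq]
  | add p q hp hq => simp only [map_add, hp, hq]
  | mul_X p i hp =>
    simp only [map_mul, hp, cc_X, map_X, map_sum]
    congr 1
    refine Finset.sum_congr rfl fun j _ => ?_
    rw [smul_eq_C_mul, smul_eq_C_mul, map_mul, map_C, map_X, Matrix.map_apply]

lemma cc_homog {A : Type} [CommRing A] (M : Matrix (Fin n) (Fin n) A)
    {p : MvPolynomial (Fin n) A} {d : ℕ} (hp : p.IsHomogeneous d) :
    (cc M p).IsHomogeneous d := by
  have := hp.aeval (S := A) (fun i => ∑ j, M j i • (X j : MvPolynomial (Fin n) A)) (n := 1) (by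
    intro i
    apply IsHomogeneous.sum
    intro j _
    rw [smul_eq_C_mul]
    exact isHomogeneous_C_mul_X _ _)
  rw [one_mul] at this
  exact this

lemma cc_hc {A : Type} [CommRing A] (M : Matrix (Fin n) (Fin n) A)
    (p : MvPolynomial (Fin n) A) (d : ℕ) :
    homogeneousComponent d (cc M p) = cc M (homogeneousComponent d p) := by
  conv_lhs => rw [← sum_homogeneousComponent p]
  rw [map_sum, map_sum]
  have : ∀ i, homogeneousComponent d (cc M (homogeneousComponent i p)) =
      if i = d then cc M (homogeneousComponent d p) else 0 := by
    intro i
    rw [homogeneousComponent_of_mem (cc_homog M (homogeneousComponent_isHomogeneous i p))]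
    by_cases h : i = d
    · subst h; simp
    · rw [if_neg (fun h' => h h'.symm), if_neg h]
  simp only [this]
  rw [Finset.sum_ite_eq']
  split_ifs with h
  · rfl
  · rw [homogeneousComponent_eq_zero, map_zero]
    simpa using h

/-- `cc` for an invertible matrix as a linear equivalence. -/
def ccE (g : GL (Fin n) K) : PS K n ≃ₗ[K] PS K n :=
  LinearEquiv.ofLinearMap (cc (g : Matrix (Fin n) (Fin n) K)).toLinearMap
    (cc ((g⁻¹ : GL (Fin n) K) : Matrix (Fin n) (Fin n) K)).toLinearMap
    (by
      apply LinearMap.ext; intro p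
      change cc _ (cc _ p) = p
      rw [← cc_mul, ← Units.val_mul, mul_inv_cancel, Units.val_one, cc_one])
    (by
      apply LinearMap.ext; intro p
      change cc _ (cc _ p) = p
      rw [← cc_mul, ← Units.val_mul, inv_mul_cancel, Units.val_one, cc_one])

/-- The ideal `g(J)`. -/
abbrev mv (g : GL (Fin n) K) (J : Ideal (PS K n)) : Ideal (PS K n) :=
  Ideal.map (coordChange K n g) J

lemma mem_mv {g : GL (Fin n) K} {J : Ideal (PS K n)} {f : PS K n} :
    f ∈ mv g J ↔ ∃ p ∈ J, cc (g : Matrix (Fin n) (Fin n) K) p = f := by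
  rw [mv, Ideal.mem_map_iff_of_surjective]
  · exact Iff.rfl
  · exact (ccE g).surjective

lemma mv_cc {g h : GL (Fin n) K} {J : Ideal (PS K n)} {f : PS K n} (hf : f ∈ mv g J) :
    cc (h : Matrix (Fin n) (Fin n) K) f ∈ mv (h * g) J := by
  obtain ⟨p, hp, rfl⟩ := mem_mv.1 hf
  exact mem_mv.2 ⟨p, hp, by rw [← cc_mul]; rfl⟩

lemma mv_one (J : Ideal (PS K n)) : mv 1 J = J := by
  ext f
  rw [mem_mv]
  constructor
  · rintro ⟨p, hp, rfl⟩; rw [Units.val_one, cc_one]; exact hp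
  · intro h; exact ⟨f, h, by rw [Units.val_one, cc_one]⟩

lemma mv_homog {g : GL (Fin n) K} {J : Ideal (PS K n)} (hJ : IsHomog K n J) :
    IsHomog K n (mv g J) := by
  intro f hf d
  obtain ⟨p, hp, rfl⟩ := mem_mv.1 hf
  rw [cc_hc]
  exact mem_mv.2 ⟨_, hJ p hp d, rfl⟩

lemma hilb_mv (g : GL (Fin n) K) (J : Ideal (PS K n)) (d : ℕ) :
    hilb K n (mv g J) d = hilb K n J d := by
  unfold hilb
  rw [← LinearEquiv.finrank_map_eq (ccE g)
    (Submodule.restrictScalars K J ⊓ homogeneousSubmodule (Fin n) K d)]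
  have : Submodule.restrictScalars K (mv g J) ⊓ homogeneousSubmodule (Fin n) K d =
      Submodule.map (ccE g : PS K n →ₗ[K] PS K n)
        (Submodule.restrictScalars K J ⊓ homogeneousSubmodule (Fin n) K d) := ?_
  · rw [this]
  ext f
  constructor
  · rintro ⟨h1, h2⟩
    obtain ⟨p, hp, rfl⟩ := mem_mv.1 h1
    refine ⟨p, ⟨hp, ?_⟩, rfl⟩
    have h3 := cc_homog ((g⁻¹ : GL (Fin n) K) : Matrix (Fin n) (Fin n) K) h2
    rw [← cc_mul, ← Units.val_mul, inv_mul_cancel, Units.val_one, cc_one] at h3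
    exact h3
  · rintro ⟨p, ⟨h1, h2⟩, rfl⟩
    exact ⟨mem_mv.2 ⟨p, h1, rfl⟩, cc_homog _ h2⟩

/-- Evaluation at `g` of polynomials in the matrix entries. -/
def ev (g : GL (Fin n) K) : MvPolynomial (Fin n × Fin n) K →ₐ[K] K :=
  aeval (fun p => (g : Matrix (Fin n) (Fin n) K) p.1 p.2)

lemma ev_eq (g : GL (Fin n) K) (F : MvPolynomial (Fin n × Fin n) K) :
    ev g F = eval (fun p => (g : Matrix (Fin n) (Fin n) K) p.1 p.2) F := by
  unfold ev; rw [aeval_eq_eval]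

lemma exists_GL [CharZero K] {F : MvPolynomial (Fin n × Fin n) K} (hF : F ≠ 0) :
    ∃ g : GL (Fin n) K, ev g F ≠ 0 := by
  have h1 : F * (Matrix.mvPolynomialX (Fin n) (Fin n) K).det ≠ 0 :=
    mul_ne_zero hF (Matrix.det_mvPolynomialX_ne_zero _ _)
  have h2 : ∃ x : Fin n × Fin n → K,
      eval x (F * (Matrix.mvPolynomialX (Fin n) (Fin n) K).det) ≠ 0 := by
    by_contra hcon
    push Not at hcon
    exact h1 (MvPolynomial.funext (fun x => by rw [hcon x, map_zero]))
  obtain ⟨x, hx⟩ := h2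
  rw [map_mul] at hx
  have hdet : (Matrix.of (fun i j => x (i, j))).det ≠ 0 := by
    have h3 := right_ne_zero_of_mul hx
    rw [RingHom.map_det] at h3
    convert h3 using 2
    ext i j
    simp
  refine ⟨Matrix.GeneralLinearGroup.mkOfDetNeZero _ hdet, ?_⟩
  rw [ev_eq]
  exact left_ne_zero_of_mul hx

lemma generally_and {P Q : GL (Fin n) K → Prop} (hP : generally K n P) (hQ : generally K n Q) :
    generally K n (fun g => P g ∧ Q g) := by
  obtain ⟨F, hF, h⟩ := hP
  obtain ⟨F', hF', h'⟩ := hQ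
  refine ⟨F * F', mul_ne_zero hF hF', fun g hg => ?_⟩
  rw [map_mul] at hg
  exact ⟨h g (left_ne_zero_of_mul hg), h' g (right_ne_zero_of_mul hg)⟩

lemma generally_mono {P Q : GL (Fin n) K → Prop} (hP : generally K n P)
    (hPQ : ∀ g, P g → Q g) : generally K n Q := by
  obtain ⟨F, hF, h⟩ := hP
  exact ⟨F, hF, fun g hg => hPQ g (h g hg)⟩

lemma generally_exists [CharZero K] {P : GL (Fin n) K → Prop} (hP : generally K n P) :
    ∃ g, P g := by
  obtain ⟨F, hF, h⟩ := hP
  obtain ⟨g, hg⟩ := exists_GL hF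
  exact ⟨g, h g (by rw [← ev_eq]; exact hg)⟩

/-- Polynomial specialisation of the parameters. -/
abbrev spec (g : GL (Fin n) K) :
    MvPolynomial (Fin n) (MvPolynomial (Fin n × Fin n) K) →+* PS K n :=
  map (ev g : MvPolynomial (Fin n × Fin n) K →+* K)

/-- Polynomial families of elements of a family of ideals. -/
def Lfam (𝓐 : GL (Fin n) K → Ideal (PS K n)) :
    Ideal (MvPolynomial (Fin n) (MvPolynomial (Fin n × Fin n) K)) :=
  ⨅ g, (𝓐 g).comap (spec g)

lemma mem_Lfam {𝓐 : GL (Fin n) K → Ideal (PS K n)}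
    {P : MvPolynomial (Fin n) (MvPolynomial (Fin n × Fin n) K)} :
    P ∈ Lfam 𝓐 ↔ ∀ g, spec g P ∈ 𝓐 g := by
  unfold Lfam
  rw [Ideal.mem_iInf]; rfl

/-- Every element of every member extends to a polynomial family. -/
structure Lift (𝓐 : GL (Fin n) K → Ideal (PS K n)) : Prop where
  hom : ∀ g, IsHomog K n (𝓐 g)
  lift : ∀ g, ∀ v ∈ 𝓐 g, ∃ P ∈ Lfam 𝓐, spec g P = v

lemma Lift.homog {𝓐 : GL (Fin n) K → Ideal (PS K n)} (h : Lift 𝓐) {g : GL (Fin n) K}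
    {v : PS K n} (hv : v ∈ 𝓐 g) {d : ℕ} (hd : v.IsHomogeneous d) :
    ∃ P ∈ Lfam 𝓐, P.IsHomogeneous d ∧ spec g P = v := by
  obtain ⟨P, hP, rfl⟩ := h.lift g v hv
  refine ⟨homogeneousComponent d P, mem_Lfam.2 fun g' => ?_,
    homogeneousComponent_isHomogeneous _ _, ?_⟩
  · rw [spec, map_hc]
    exact h.hom g' _ (mem_Lfam.1 hP g') d
  · rw [spec, map_hc]
    exact homogeneousComponent_eq_self hd

lemma spec_map_C (g : GL (Fin n) K) (p : PS K n) : spec g (map C p) = p := by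
  rw [spec, MvPolynomial.map_map]
  have : (ev g : MvPolynomial (Fin n × Fin n) K →+* K).comp C = RingHom.id K := by
    apply RingHom.ext; intro a; simp [ev]
  rw [this]
  exact map_id p

lemma lift_const {I : Ideal (PS K n)} (hI : IsHomog K n I) :
    Lift (fun _ : GL (Fin n) K => I) :=
  ⟨fun _ => hI, fun g v hv => ⟨map C v, mem_Lfam.2 fun g' => by rw [spec_map_C]; exact hv,
    spec_map_C g v⟩⟩

lemma lift_mv {I : Ideal (PS K n)} (hI : IsHomog K n I) :
    Lift (fun g : GL (Fin n) K => mv g I) := by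
  refine ⟨fun _ => mv_homog hI, fun g v hv => ?_⟩
  obtain ⟨p, hp, rfl⟩ := mem_mv.1 hv
  have key : ∀ g' : GL (Fin n) K, spec g' (cc (Matrix.mvPolynomialX (Fin n) (Fin n) K)
      (map C p)) = cc (g' : Matrix (Fin n) (Fin n) K) p := by
    intro g'
    have h1 := spec_map_C g' p
    rw [spec] at h1 ⊢
    rw [map_cc, h1]
    congr 2
    ext i j
    simp [ev]
  exact ⟨_, mem_Lfam.2 fun g' => by rw [key]; exact mem_mv.2 ⟨p, hp, rfl⟩, key g⟩

lemma homog_sup {I J : Ideal (PS K n)} (hI : IsHomog K n I) (hJ : IsHomog K n J) :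
    IsHomog K n (I ⊔ J) := by
  intro f hf d
  obtain ⟨a, ha, b, hb, rfl⟩ := Submodule.mem_sup.1 hf
  rw [map_add]
  exact Submodule.add_mem_sup (hI a ha d) (hJ b hb d)

lemma homog_inf {I J : Ideal (PS K n)} (hI : IsHomog K n I) (hJ : IsHomog K n J) :
    IsHomog K n (I ⊓ J) := fun f hf d => ⟨hI f hf.1 d, hJ f hf.2 d⟩

lemma homog_mul {I J : Ideal (PS K n)} (hI : IsHomog K n I) (hJ : IsHomog K n J) :
    IsHomog K n (I * J) := by
  intro f hf d
  induction hf using Submodule.mul_induction_on' with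
  | mem_mul_mem a ha b hb =>
    conv => enter [2]; rw [← sum_homogeneousComponent a, ← sum_homogeneousComponent b]
    rw [Finset.sum_mul_sum, map_sum]
    refine Ideal.sum_mem _ fun i _ => ?_
    rw [map_sum]
    refine Ideal.sum_mem _ fun j _ => ?_
    rw [homogeneousComponent_of_mem ((homogeneousComponent_isHomogeneous i a).mul
      (homogeneousComponent_isHomogeneous j b))]
    split_ifs
    · exact Ideal.mul_mem_mul (hI a ha i) (hJ b hb j)
    · exact Ideal.zero_mem _
  | add x _ y _ hx hy => rw [map_add]; exact Ideal.add_mem _ hx hy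

lemma lift_sup {𝓐 𝓑 : GL (Fin n) K → Ideal (PS K n)} (hA : Lift 𝓐) (hB : Lift 𝓑) :
    Lift (fun g => 𝓐 g ⊔ 𝓑 g) := by
  refine ⟨fun g => homog_sup (hA.hom g) (hB.hom g), fun g v hv => ?_⟩
  obtain ⟨a, ha, b, hb, rfl⟩ := Submodule.mem_sup.1 hv
  obtain ⟨P, hP, rfl⟩ := hA.lift g a ha
  obtain ⟨Q, hQ, rfl⟩ := hB.lift g b hb
  refine ⟨P + Q, mem_Lfam.2 fun g' => ?_, map_add _ _ _⟩
  rw [map_add]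
  exact Submodule.add_mem_sup (mem_Lfam.1 hP g') (mem_Lfam.1 hQ g')

lemma lift_mul {𝓐 𝓑 : GL (Fin n) K → Ideal (PS K n)} (hA : Lift 𝓐) (hB : Lift 𝓑) :
    Lift (fun g => 𝓐 g * 𝓑 g) := by
  refine ⟨fun g => homog_mul (hA.hom g) (hB.hom g), fun g v hv => ?_⟩
  induction hv using Submodule.mul_induction_on' with
  | mem_mul_mem a ha b hb =>
    obtain ⟨P, hP, rfl⟩ := hA.lift g a ha
    obtain ⟨Q, hQ, rfl⟩ := hB.lift g b hb
    refine ⟨P * Q, mem_Lfam.2 fun g' => ?_, map_mul _ _ _⟩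
    rw [map_mul]
    exact Ideal.mul_mem_mul (mem_Lfam.1 hP g') (mem_Lfam.1 hQ g')
  | add x _ y _ hx hy =>
    obtain ⟨P, hP, h1⟩ := hx
    obtain ⟨Q, hQ, h2⟩ := hy
    exact ⟨P + Q, Ideal.add_mem _ hP hQ, by rw [map_add, h1, h2]⟩

/-- Leading exponents (over the generic point) in degree `d`. -/
def LM (𝓐 : GL (Fin n) K → Ideal (PS K n)) (d : ℕ) : Finset (Fin n →₀ ℕ) := by
  classical
  exact (E n d).filter (fun u => ∃ P ∈ Lfam 𝓐, P.IsHomogeneous d ∧ IsLead (lexLt n) P u)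

lemma mem_LM {𝓐 : GL (Fin n) K → Ideal (PS K n)} {d : ℕ} {u : Fin n →₀ ℕ} :
    u ∈ LM 𝓐 d ↔ ∃ P ∈ Lfam 𝓐, P.IsHomogeneous d ∧ IsLead (lexLt n) P u := by
  classical
  unfold LM
  rw [Finset.mem_filter]
  constructor
  · exact fun h => h.2
  · rintro ⟨P, hP, hd, hl⟩
    exact ⟨mem_E.2 (deg_of_coeff hd hl.1), P, hP, hd, hl⟩

lemma LM_deg {𝓐 : GL (Fin n) K → Ideal (PS K n)} {d : ℕ} {u : Fin n →₀ ℕ}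
    (hu : u ∈ LM 𝓐 d) : u.degree = d := by
  obtain ⟨P, _, hd, hl⟩ := mem_LM.1 hu
  exact deg_of_coeff hd hl.1

lemma LM_add {𝓐 : GL (Fin n) K → Ideal (PS K n)} {d : ℕ} {u : Fin n →₀ ℕ}
    (hu : u ∈ LM 𝓐 d) (w : Fin n →₀ ℕ) : w + u ∈ LM 𝓐 (w.degree + d) := by
  obtain ⟨P, hP, hd, hl⟩ := mem_LM.1 hu
  exact mem_LM.2 ⟨monomial w 1 * P, Ideal.mul_mem_left _ _ hP,
    (isHomogeneous_monomial _ rfl).mul hd, isLead_monomial_mul hl w⟩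

/-- Lower bound for the number of leading exponents from one special member. -/
lemma lemmaG {𝓐 : GL (Fin n) K → Ideal (PS K n)} (hA : Lift 𝓐) (d : ℕ)
    (U : Set (Fin n →₀ ℕ)) (hU : ∀ u ∈ U, ∀ v, u.degree = d → v.degree = d → lexLt n u v → v ∈ U)
    (X : Finset (Fin n →₀ ℕ)) (hX : ∀ u ∈ U, u ∈ LM 𝓐 d → u ∈ X)
    {ι : Type} [Fintype ι] (g₀ : GL (Fin n) K) (v : ι → PS K n) (hv : ∀ k, v k ∈ 𝓐 g₀)
    (hd : ∀ k, (v k).IsHomogeneous d) (hind : IndepOn U v) : Fintype.card ι ≤ X.card := by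
  choose P hP hPd hPv using fun k => hA.homog (hv k) (hd k)
  obtain ⟨D, hD, h⟩ := indepOn_generic U P (ev g₀) (by
    have : (fun k => map (ev g₀ : MvPolynomial (Fin n × Fin n) K →+* K) (P k)) = v :=
      funext hPv
    rw [this]; exact hind)
  have h1 := h (MvPolynomial (Fin n × Fin n) K) (RingHom.id _) (by
    intro h0; apply hD; rw [RingHom.id_apply] at h0; rw [h0, map_zero])
  have h2 : (fun k => map (RingHom.id _) (P k)) = P := by
    funext k; exact map_id _
  rw [h2] at h1
  refine card_le_lead (Submodule.restrictScalars (MvPolynomial (Fin n × Fin n) K) (Lfam 𝓐) ⊓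
      homogeneousSubmodule (Fin n) _ d) U X ?_ ?_ P
    (fun k => ⟨hP k, hPd k⟩) h1
  · rintro p ⟨hp1, hp2⟩ u hu hl
    exact hX u hu (mem_LM.2 ⟨p, hp1, hp2, hl⟩)
  · rintro p ⟨hp1, hp2⟩ u hu v hu1 hv1 hlt
    exact hU u hu v (deg_of_coeff hp2 hu1) (deg_of_coeff hp2 hv1) hlt

end Fam


/-! ### Generic leading exponents and degenerations -/

namespace Fam

variable {K n}

lemma isLead_normalize {r : (Fin n →₀ ℕ) → (Fin n →₀ ℕ) → Prop} {f : PS K n}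
    {u : Fin n →₀ ℕ} (h : IsLead r f u) :
    IsLead r (C (coeff u f)⁻¹ * f) u ∧ coeff u (C (coeff u f)⁻¹ * f) = 1 := by
  have h1 : coeff u (C (coeff u f)⁻¹ * f) = 1 := by
    rw [coeff_C_mul, inv_mul_cancel₀ h.1]
  refine ⟨⟨by rw [h1]; exact one_ne_zero, fun v hv => h.2 v ?_⟩, h1⟩
  rw [coeff_C_mul] at hv
  exact right_ne_zero_of_mul hv

lemma lemmaU' {𝓐 : GL (Fin n) K → Ideal (PS K n)} :
    generally K n (fun g => ∀ d, ∀ u ∈ LM 𝓐 d, ∃ f ∈ 𝓐 g, f.IsHomogeneous d ∧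
      IsLead (lexLt n) f u ∧ coeff u f = 1) := by
  classical
  let W : Set (Fin n →₀ ℕ) := {u | u ∈ LM 𝓐 u.degree}
  have hfin : {u | Minimal (· ∈ W) u}.Finite := by
    apply WellQuasiOrderedLE.finite_of_isAntichain
    exact setOfPred_minimal_antichain _
  have hch : ∀ u : Fin n →₀ ℕ, ∃ P : MvPolynomial (Fin n) (MvPolynomial (Fin n × Fin n) K),
      u ∈ W → P ∈ Lfam 𝓐 ∧ P.IsHomogeneous u.degree ∧ IsLead (lexLt n) P u := by
    intro u
    by_cases hu : u ∈ W
    · have hu' : u ∈ LM 𝓐 u.degree := hu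
      obtain ⟨P, h⟩ := mem_LM.1 hu'
      exact ⟨P, fun _ => h⟩
    · exact ⟨0, fun h => absurd h hu⟩
  choose P hP using hch
  refine ⟨∏ u ∈ hfin.toFinset, coeff u (P u), ?_, ?_⟩
  · rw [Finset.prod_ne_zero_iff]
    intro u hu
    have hu' := (hfin.mem_toFinset.1 hu)
    exact (hP u hu'.1).2.2.1
  · intro g hg d u hu
    rw [← ev_eq, map_prod, Finset.prod_ne_zero_iff] at hg
    have hud := LM_deg hu
    have huW : u ∈ W := by
      change u ∈ LM 𝓐 u.degree
      rw [hud]; exact hu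
    obtain ⟨t, htu, ht⟩ := (Set.isPWO_of_wellQuasiOrderedLE W).exists_le_minimal huW
    obtain ⟨w, rfl⟩ := exists_add_of_le htu
    have h0 := hg t (hfin.mem_toFinset.2 ht)
    obtain ⟨h1, h2, h3⟩ := hP t ht.1
    have hl : IsLead (lexLt n) (spec g (P t)) t := by
      refine ⟨by rw [spec, coeff_map]; exact h0, fun v hv => h3.2 v ?_⟩
      intro hv0
      rw [spec, coeff_map, hv0, map_zero] at hv
      exact hv rfl
    have hl' := isLead_monomial_mul hl w
    rw [add_comm w t] at hl'
    obtain ⟨h4, h5⟩ := isLead_normalize hl'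
    refine ⟨_, ?_, ?_, h4, h5⟩
    · exact Ideal.mul_mem_left _ _ (Ideal.mul_mem_left _ _ (mem_Lfam.1 h1 g))
    · apply IsHomogeneous.C_mul
      have : (monomial w (1 : K) * spec g (P t)).IsHomogeneous (w.degree + t.degree) :=
        (isHomogeneous_monomial _ rfl).mul (h2.map _)
      rw [← hud, add_comm t w, map_add]
      exact this

instance finite_hs (d : ℕ) : Module.Finite K (homogeneousSubmodule (Fin n) K d) :=
  Module.Finite.iff_fg.2 (homogeneousSubmodule_fg _ _ d)

lemma indepOn_univ {ι : Type} [Fintype ι] (v : ι → PS K n) :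
    IndepOn Set.univ v ↔ LinearIndependent K v := by
  rw [Fintype.linearIndependent_iff]
  constructor
  · intro h c hc i
    refine congrFun (h c fun u _ => ?_) i
    have := congrArg (coeff u) hc
    rw [coeff_sum, coeff_zero] at this
    rw [← this]
    exact Finset.sum_congr rfl fun k _ => by rw [coeff_smul, smul_eq_mul]
  · intro h c hc
    funext i
    refine h c ?_ i
    ext u
    rw [coeff_sum, coeff_zero, ← hc u (Set.mem_univ _)]
    exact Finset.sum_congr rfl fun k _ => by rw [coeff_smul, smul_eq_mul]

lemma IndepOn.mono {ι A : Type} [Fintype ι] [CommRing A] {U V : Set (Fin n →₀ ℕ)}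
    {p : ι → MvPolynomial (Fin n) A} (h : IndepOn U p) (hUV : U ⊆ V) : IndepOn V p :=
  fun c hc => h c fun u hu => hc u (hUV hu)

lemma card_le_hilb {ι : Type} [Fintype ι] {I : Ideal (PS K n)} {d : ℕ} (v : ι → PS K n)
    (hv : ∀ k, v k ∈ I) (hd : ∀ k, (v k).IsHomogeneous d) (h : IndepOn Set.univ v) :
    Fintype.card ι ≤ hilb K n I d := by
  have hli := (indepOn_univ v).1 h
  unfold hilb
  let v' : ι → ↥(Submodule.restrictScalars K I ⊓ homogeneousSubmodule (Fin n) K d) :=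
    fun k => ⟨v k, hv k, hd k⟩
  have : LinearIndependent K v' := by
    apply LinearIndependent.of_comp (Submodule.subtype _)
    exact hli
  exact this.fintype_card_le_finrank

lemma lead_card_le_hilb {I : Ideal (PS K n)} {d : ℕ} (X : Finset (Fin n →₀ ℕ))
    (hX : ∀ u ∈ X, ∃ f ∈ I, f.IsHomogeneous d ∧ IsLead (lexLt n) f u) :
    X.card ≤ hilb K n I d := by
  choose f h1 h2 h3 using fun u : X => hX u.1 u.2
  rw [← Fintype.card_coe]
  refine card_le_hilb f h1 h2 ?_
  exact indepOn_tri _ f (lexLt n) lexLt_trans lexLt_irrefl (fun u => u.1)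
    Subtype.val_injective (fun _ => Set.mem_univ _) (fun k => (h3 k).1)
    (fun k v _ hv => (h3 k).2 v hv)

lemma exists_indep (I : Ideal (PS K n)) (d : ℕ) :
    ∃ v : Fin (hilb K n I d) → PS K n, (∀ k, v k ∈ I) ∧ (∀ k, (v k).IsHomogeneous d) ∧
      IndepOn Set.univ v := by
  let b := Module.finBasis K
    ↥(Submodule.restrictScalars K I ⊓ homogeneousSubmodule (Fin n) K d)
  refine ⟨fun k => (b k : PS K n), fun k => (b k).2.1, fun k => (b k).2.2, ?_⟩
  rw [indepOn_univ]
  exact b.linearIndependent.map' (Submodule.subtype _) (Submodule.ker_subtype _)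

lemma hilb_le_lead {I : Ideal (PS K n)} {d : ℕ} (X : Finset (Fin n →₀ ℕ))
    (hX : ∀ f ∈ I, ∀ u, f.IsHomogeneous d → IsLead (lexLt n) f u → u ∈ X) :
    hilb K n I d ≤ X.card := by
  obtain ⟨v, h1, h2, h3⟩ := exists_indep I d
  have := card_le_lead (Submodule.restrictScalars K I ⊓ homogeneousSubmodule (Fin n) K d)
    Set.univ X (fun p hp u _ hl => hX p hp.1 u hp.2 hl) (fun _ _ _ _ _ _ _ _ => Set.mem_univ _)
    v (fun k => ⟨h1 k, h2 k⟩) h3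
  simpa using this

/-- Weight of an exponent. -/
def wt (w : Fin n → ℕ) (u : Fin n →₀ ℕ) : ℕ := ∑ i, w i * u i

lemma wt_lt (s : Fin n → Fin n → Prop) (hs : ∀ i j, s i j ∨ i = j ∨ s j i) (D : ℕ)
    (w : Fin n → ℕ) (hw0 : ∀ i, 0 < w i) (hw : ∀ i j, s i j → (D + 1) * w j ≤ w i)
    (u v : Fin n →₀ ℕ) (hv : v.degree ≤ D) (i : Fin n)
    (h1 : ∀ j, s j i → v j = u j) (h2 : v i < u i) : wt w v < wt w u := by
  have key : ∀ j, (D + 1) * (w j * v j) + (if j = i then (D + 1) * w i else 0) ≤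
      (D + 1) * (w j * u j) + w i * v j := by
    intro j
    rcases hs j i with h | h | h
    · rw [h1 j h]
      by_cases hji : j = i
      · subst hji; rw [h1 j h] at h2; exact absurd h2 (lt_irrefl _)
      · rw [if_neg hji]; omega
    · subst h
      rw [if_pos rfl]
      have h3 : w j * v j + w j ≤ w j * u j := by
        rw [← Nat.mul_succ]; exact Nat.mul_le_mul_left _ h2
      have h4 := Nat.mul_le_mul_left (D + 1) h3
      rw [mul_add] at h4
      omega
    · by_cases hji : j = i
      · subst hji
        rw [if_pos rfl]
        have h3 : w j * v j + w j ≤ w j * u j := by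
          rw [← Nat.mul_succ]; exact Nat.mul_le_mul_left _ h2
        have h4 := Nat.mul_le_mul_left (D + 1) h3
        rw [mul_add] at h4
        omega
      · rw [if_neg hji]
        have h3 := Nat.mul_le_mul_right (v j) (hw i j h)
        rw [mul_assoc] at h3
        omega
  have hsum := Finset.sum_le_sum (fun j (_ : j ∈ Finset.univ) => key j)
  rw [Finset.sum_add_distrib, Finset.sum_add_distrib, ← Finset.mul_sum, ← Finset.mul_sum,
    ← Finset.mul_sum, Finset.sum_ite_eq' Finset.univ i] at hsum
  rw [if_pos (Finset.mem_univ _), ← Finsupp.degree_eq_sum] at hsum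
  change (D + 1) * wt w v + _ ≤ (D + 1) * wt w u + _ at hsum
  have h3 : w i * v.degree ≤ w i * D := Nat.mul_le_mul_left _ hv
  have h4 := hw0 i
  by_contra hcon
  have h5 := Nat.mul_le_mul_left (D + 1) (not_lt.1 hcon)
  nlinarith

/-- A weight refining `r` in degrees at most `D`. -/
def GoodWt (r : (Fin n →₀ ℕ) → (Fin n →₀ ℕ) → Prop) (w : Fin n → ℕ) (D : ℕ) : Prop :=
  ∀ u v : Fin n →₀ ℕ, v.degree ≤ D → r v u → wt w v < wt w u

lemma goodWt_lex (D : ℕ) : ∃ w : Fin n → ℕ, GoodWt (lexLt n) w D := by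
  refine ⟨fun i => (D + 1) ^ (n - (i : ℕ)), fun u v hv h => ?_⟩
  obtain ⟨i, h1, h2⟩ := (lexLt_def _ _).1 h
  refine wt_lt (fun i j => i < j) (fun i j => lt_trichotomy i j) D _
    (fun i => by positivity) ?_ u v hv i h1 h2
  intro i j hij
  change (D + 1) * (D + 1) ^ (n - (j : ℕ)) ≤ (D + 1) ^ (n - (i : ℕ))
  rw [← pow_succ']
  apply Nat.pow_le_pow_right (by omega)
  have := j.2
  have : (i : ℕ) < j := hij
  omega

lemma goodWt_oplex (D : ℕ) : ∃ w : Fin n → ℕ, GoodWt (oplexLt n) w D := by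
  refine ⟨fun i => (D + 1) ^ (i : ℕ), fun u v hv h => ?_⟩
  obtain ⟨i, h1, h2⟩ := (oplexLt_def _ _).1 h
  refine wt_lt (fun i j => j < i) (fun i j => ?_) D _
    (fun i => by positivity) ?_ u v hv i h1 h2
  · rcases lt_trichotomy i j with h | h | h
    · exact Or.inr (Or.inr h)
    · exact Or.inr (Or.inl h)
    · exact Or.inl h
  intro i j hij
  change (D + 1) * (D + 1) ^ (j : ℕ) ≤ (D + 1) ^ (i : ℕ)
  rw [← pow_succ']
  apply Nat.pow_le_pow_right (by omega)
  exact hij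

lemma coeff_cc_diag (δ : Fin n → K) (f : PS K n) (v : Fin n →₀ ℕ) :
    coeff v (cc (Matrix.diagonal δ) f) = (∏ i, δ i ^ v i) * coeff v f := by
  have hX : ∀ i, (∑ j, (Matrix.diagonal δ) j i • (X j : PS K n)) = δ i • X i := by
    intro i
    rw [Finset.sum_eq_single i]
    · rw [Matrix.diagonal_apply_eq]
    · intro j _ hj; rw [Matrix.diagonal_apply_ne _ hj, zero_smul]
    · intro h; exact absurd (Finset.mem_univ _) h
  induction f using MvPolynomial.induction_on' with
  | add p q hp hq => rw [map_add, coeff_add, coeff_add, hp, hq, mul_add]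
  | monomial u a =>
    have : cc (Matrix.diagonal δ) (monomial u a) = monomial u ((∏ i, δ i ^ u i) * a) := by
      unfold cc
      rw [aeval_monomial]
      simp only [hX]
      rw [Finsupp.prod_fintype _ _ (fun i => pow_zero _)]
      simp only [smul_pow]
      rw [monomial_eq, Finsupp.prod_fintype _ _ (fun i => pow_zero _), C_mul, mul_comm (C _) (C a),
        mul_assoc, algebraMap_eq]
      congr 1
      simp only [smul_eq_C_mul]
      rw [Finset.prod_mul_distrib, map_prod]
    rw [this, coeff_monomial, coeff_monomial]
    split_ifs with h
    · rw [h]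
    · rw [mul_zero]

/-- The one-parameter subgroup with weights `-w`. -/
def lam (w : Fin n → ℕ) (t : K) (ht : t ≠ 0) : GL (Fin n) K :=
  Matrix.GeneralLinearGroup.mkOfDetNeZero (Matrix.diagonal fun i => (t⁻¹) ^ (w i)) (by
    rw [Matrix.det_diagonal, Finset.prod_ne_zero_iff]
    intro i _
    exact pow_ne_zero _ (inv_ne_zero ht))

lemma lam_coe (w : Fin n → ℕ) (t : K) (ht : t ≠ 0) :
    ((lam w t ht : GL (Fin n) K) : Matrix (Fin n) (Fin n) K) =
      Matrix.diagonal fun i => (t⁻¹) ^ (w i) := rfl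

/-- Specialisation of the degeneration parameter. -/
abbrev at' (t : K) : MvPolynomial (Fin n) (Polynomial K) →+* PS K n :=
  map (Polynomial.evalRingHom t)

lemma degen {r : (Fin n →₀ ℕ) → (Fin n →₀ ℕ) → Prop} {w : Fin n → ℕ} {D d : ℕ}
    (hw : GoodWt r w D) (hdD : d ≤ D) {I : Ideal (PS K n)} {g : GL (Fin n) K} {f : PS K n}
    (hf : f ∈ mv g I) (hd : f.IsHomogeneous d) {u : Fin n →₀ ℕ} (hl : IsLead r f u)
    (h1 : coeff u f = 1) :
    ∃ q : MvPolynomial (Fin n) (Polynomial K), q.IsHomogeneous d ∧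
      at' 0 q = monomial u 1 ∧
      ∀ t (ht : t ≠ 0), at' t q ∈ mv (lam w t ht * g) I := by
  classical
  let q : MvPolynomial (Fin n) (Polynomial K) :=
    ∑ v ∈ f.support, monomial v (Polynomial.C (coeff v f) * Polynomial.X ^ (wt w u - wt w v))
  have hq : ∀ v, coeff v q = Polynomial.C (coeff v f) * Polynomial.X ^ (wt w u - wt w v) := by
    intro v
    simp only [q, coeff_sum, coeff_monomial]
    rw [Finset.sum_ite_eq']
    split_ifs with h
    · rfl
    · rw [notMem_support_iff.1 h, map_zero, zero_mul]
  have hlt : ∀ v, coeff v f ≠ 0 → v = u ∨ wt w v < wt w u := by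
    intro v hv
    rcases hl.2 v hv with h | h
    · exact Or.inl h
    · exact Or.inr (hw u v ((deg_of_coeff hd hv).trans_le hdD) h)
  have hle : ∀ v, coeff v f ≠ 0 → wt w v ≤ wt w u := by
    intro v hv
    rcases hlt v hv with h | h
    · rw [h]
    · exact h.le
  refine ⟨q, ?_, ?_, ?_⟩
  · apply IsHomogeneous.sum
    intro v hv
    apply isHomogeneous_monomial
    exact deg_of_coeff hd (mem_support_iff.1 hv)
  · ext v
    rw [at', coeff_map, hq, coeff_monomial]
    simp only [Polynomial.coe_evalRingHom, Polynomial.eval_mul, Polynomial.eval_C,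
      Polynomial.eval_pow, Polynomial.eval_X]
    split_ifs with h
    · subst h; rw [h1]; simp
    · by_cases hv : coeff v f = 0
      · rw [hv, zero_mul]
      · have := (hlt v hv).resolve_left (fun h' => h h'.symm)
        rw [zero_pow (by omega), mul_zero]
  · intro t ht
    have : at' t q = C (t ^ wt w u) * cc (lam w t ht : Matrix (Fin n) (Fin n) K) f := by
      ext v
      rw [lam_coe, coeff_C_mul, coeff_cc_diag, at', coeff_map, hq]
      simp only [Polynomial.coe_evalRingHom, Polynomial.eval_mul, Polynomial.eval_C,
        Polynomial.eval_pow, Polynomial.eval_X]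
      by_cases hv : coeff v f = 0
      · rw [hv]; simp
      · have h2 : ∏ i, (t⁻¹ ^ w i) ^ v i = (t ^ wt w v)⁻¹ := by
          simp only [← pow_mul]
          rw [Finset.prod_pow_eq_pow_sum, inv_pow]; rfl
        rw [h2, pow_sub₀ t ht (hle v hv)]
        ring
    rw [this]
    exact Ideal.mul_mem_left _ _ (mv_cc hf)

lemma exists_t [CharZero K] {ι : Type} [Fintype ι] (U : Set (Fin n →₀ ℕ))
    (q : ι → MvPolynomial (Fin n) (Polynomial K)) (h : IndepOn U (fun k => at' (0 : K) (q k))) :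
    ∃ t : K, t ≠ 0 ∧ IndepOn U (fun k => at' t (q k)) := by
  obtain ⟨D, hD, hDt⟩ := indepOn_generic U q (Polynomial.aeval (0 : K)) (by
    have h0 : ((Polynomial.aeval (0 : K) : Polynomial K →ₐ[K] K) : Polynomial K →+* K) =
        Polynomial.evalRingHom 0 := by
      apply Polynomial.ringHom_ext <;> simp
    rw [h0]
    exact h)
  have hD0 : D * Polynomial.X ≠ 0 := by
    apply mul_ne_zero _ Polynomial.X_ne_zero
    rintro rfl
    exact hD (map_zero _)
  have : ∃ t : K, (D * Polynomial.X).eval t ≠ 0 := by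
    by_contra hcon
    push Not at hcon
    exact hD0 (Polynomial.funext fun t => by rw [hcon t, Polynomial.eval_zero])
  obtain ⟨t, ht⟩ := this
  rw [Polynomial.eval_mul, Polynomial.eval_X] at ht
  exact ⟨t, right_ne_zero_of_mul ht, hDt K (Polynomial.evalRingHom t) (left_ne_zero_of_mul ht)⟩

end Fam


/-! ### The generic leading exponents of a moving ideal are Borel fixed -/

namespace Fam

variable {K n}

lemma cc_transvection {A : Type} [CommRing A] {i j : Fin n} (hij : i ≠ j) (w0 : Fin n →₀ ℕ)
    (hw0 : w0 j = 0) (m : ℕ) :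
    cc (Matrix.transvection i j (1 : A)) (monomial (w0 + Finsupp.single j m) 1) =
      ∑ l ∈ Finset.range (m + 1),
        monomial (w0 + Finsupp.single i l + Finsupp.single j (m - l)) ((m.choose l : ℕ) : A) := by
  have hXk : ∀ k, k ≠ j → cc (Matrix.transvection i j (1 : A)) (X k) = X k := by
    intro k hk
    rw [cc_X, Finset.sum_eq_single k]
    · rw [Matrix.transvection, Matrix.add_apply, Matrix.one_apply_eq, Matrix.single_apply,
        if_neg (fun h => hk h.2.symm), add_zero, one_smul]
    · intro b _ hb
      rw [Matrix.transvection, Matrix.add_apply, Matrix.one_apply_ne hb, Matrix.single_apply,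
        if_neg (fun h => hk h.2.symm), add_zero, zero_smul]
    · intro h; exact absurd (Finset.mem_univ _) h
  have hXj : cc (Matrix.transvection i j (1 : A)) (X j) = X i + X j := by
    rw [cc_X]
    have : ∀ k, (Matrix.transvection i j (1 : A)) k j • (X k : MvPolynomial (Fin n) A) =
        (if k = i then X k else 0) + (if k = j then X k else 0) := by
      intro k
      rw [Matrix.transvection, Matrix.add_apply, Matrix.one_apply, Matrix.single_apply, add_smul,
        add_comm]
      congr 1
      · by_cases h : i = k
        · simp [h]
        · simp [h, Ne.symm h]
      · by_cases h : k = j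
        · simp [h]
        · simp [h]
    simp only [this]
    rw [Finset.sum_add_distrib]
    simp
  have hmon0 : cc (Matrix.transvection i j (1 : A)) (monomial w0 1) = monomial w0 1 := by
    rw [monomial_eq, C_1, one_mul, Finsupp.prod, map_prod]
    refine Finset.prod_congr rfl fun k hk => ?_
    rw [map_pow, hXk k]
    rintro rfl
    exact (Finsupp.mem_support_iff.1 hk) hw0
  have h1 : monomial (w0 + Finsupp.single j m) (1 : A) = monomial w0 1 * X j ^ m := by
    rw [X_pow_eq_monomial, monomial_mul, one_mul]
  rw [h1, map_mul, hmon0, map_pow, hXj, add_pow, Finset.mul_sum]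
  refine Finset.sum_congr rfl fun l _ => ?_
  have h2 : ((m.choose l : ℕ) : MvPolynomial (Fin n) A) = monomial 0 ((m.choose l : ℕ) : A) := by
    rw [← C_apply, map_natCast]
  rw [X_pow_eq_monomial, X_pow_eq_monomial, h2, monomial_mul, monomial_mul, monomial_mul,
    add_zero, add_assoc]
  simp

lemma coeff_transvection {i j : Fin n} (hij : i ≠ j) (w0 : Fin n →₀ ℕ)
    (hw0 : w0 j = 0) (m l : ℕ) (hl : l ≤ m) :
    coeff (w0 + Finsupp.single i l + Finsupp.single j (m - l))
      (cc (Matrix.transvection i j (1 : K)) (monomial (w0 + Finsupp.single j m) 1)) =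
      (m.choose l : K) := by
  rw [cc_transvection hij w0 hw0, coeff_sum, Finset.sum_eq_single l]
  · rw [coeff_monomial, if_pos rfl]
  · intro l' _ hl'
    rw [coeff_monomial, if_neg]
    intro h
    have := DFunLike.congr_fun h i
    simp [hij, Finsupp.single_apply, Ne.symm hij] at this
    exact hl' this
  · intro h; exact absurd (Finset.mem_range.2 (by omega)) h

lemma split_exp (w : Fin n →₀ ℕ) (j : Fin n) :
    ∃ w0 : Fin n →₀ ℕ, w0 j = 0 ∧ w = w0 + Finsupp.single j (w j) := by
  classical
  refine ⟨w.erase j, Finsupp.erase_same, ?_⟩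
  exact (Finsupp.erase_add_single j w).symm

lemma transvection_self {i j : Fin n} (hij : i ≠ j) (w : Fin n →₀ ℕ) :
    coeff w (cc (Matrix.transvection i j (1 : K)) (monomial w 1)) = 1 := by
  obtain ⟨w0, h0, h1⟩ := split_exp w j
  have := coeff_transvection (K := K) hij w0 h0 (w j) 0 (Nat.zero_le _)
  rw [Finsupp.single_zero, add_zero, Nat.sub_zero, ← h1] at this
  simpa using this

lemma transvection_lead {i j : Fin n} (hij : i < j) (w x : Fin n →₀ ℕ)
    (hx : coeff x (cc (Matrix.transvection i j (1 : K)) (monomial w 1)) ≠ 0) :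
    x = w ∨ lexLt n w x := by
  obtain ⟨w0, h0, h1⟩ := split_exp w j
  rw [h1, cc_transvection hij.ne w0 h0, coeff_sum] at hx
  obtain ⟨l, hl, hl'⟩ := Finset.exists_ne_zero_of_sum_ne_zero hx
  rw [coeff_monomial] at hl'
  split_ifs at hl' with hxl
  · rcases Nat.eq_zero_or_pos l with h | h
    · left
      rw [← hxl, h, Finsupp.single_zero, add_zero, Nat.sub_zero, ← h1]
    · right
      rw [lexLt_def]
      refine ⟨i, fun k hk => ?_, ?_⟩
      · rw [← hxl, h1]
        have hki : i ≠ k := hk.ne'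
        have hkj : j ≠ k := (hk.trans hij).ne'
        simp [Finsupp.single_apply, hki, hkj]
      · rw [← hxl, h1]
        have hkj : j ≠ i := hij.ne'
        simp [Finsupp.single_apply, hkj, h]
  · exact absurd rfl hl'

lemma transvection_next [CharZero K] {i j : Fin n} (hij : i < j) (v : Fin n →₀ ℕ) :
    coeff (v + Finsupp.single i 1) (cc (Matrix.transvection i j (1 : K))
      (monomial (v + Finsupp.single j 1) 1)) ≠ 0 := by
  obtain ⟨w0, h0, h1⟩ := split_exp v j
  have := coeff_transvection (K := K) hij.ne w0 h0 (v j + 1) 1 (by omega)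
  rw [Nat.add_sub_cancel, Finsupp.single_add, ← add_assoc, ← h1, add_right_comm, ← h1] at this
  rw [this, Nat.choose_one_right]
  exact Nat.cast_ne_zero.2 (Nat.succ_ne_zero _)

/-- The transvection as an element of the general linear group. -/
def trv {i j : Fin n} (hij : i ≠ j) : GL (Fin n) K :=
  Matrix.GeneralLinearGroup.mkOfDetNeZero (Matrix.transvection i j 1) (by
    rw [Matrix.det_transvection_of_ne i j hij]; exact one_ne_zero)

lemma trv_coe {i j : Fin n} (hij : i ≠ j) :
    ((trv hij : GL (Fin n) K) : Matrix (Fin n) (Fin n) K) = Matrix.transvection i j 1 := rfl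

lemma at_cc (M : Matrix (Fin n) (Fin n) K) (q : MvPolynomial (Fin n) (Polynomial K)) (t : K) :
    at' t (cc (M.map Polynomial.C) q) = cc M (at' t q) := by
  rw [at', map_cc]
  congr 2
  ext i j
  simp

/-- Generic leading exponents of the ideal. -/
abbrev GB (I : Ideal (PS K n)) (d : ℕ) : Finset (Fin n →₀ ℕ) := LM (fun g => mv g I) d

lemma hilb_le_GB {I : Ideal (PS K n)} (hI : IsHomog K n I) (d : ℕ) :
    hilb K n I d ≤ (GB I d).card := by
  obtain ⟨v, h1, h2, h3⟩ := exists_indep I d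
  have := lemmaG (lift_mv hI) d Set.univ (fun _ _ _ _ _ _ => Set.mem_univ _) (GB I d)
    (fun _ _ h => h) 1 v (fun k => by rw [mv_one]; exact h1 k) h2 h3
  simpa using this

lemma GB_borel [CharZero K] {I : Ideal (PS K n)} (hI : IsHomog K n I) (a : ℕ)
    {i j : Fin n} (hij : i < j) (v : Fin n →₀ ℕ) (hv : v + Finsupp.single j 1 ∈ GB I a) :
    v + Finsupp.single i 1 ∈ GB I a := by
  classical
  by_contra hm
  set u := v + Finsupp.single j 1 with hu
  set m := v + Finsupp.single i 1 with hmdef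
  let U : Set (Fin n →₀ ℕ) := {x | x = m ∨ lexLt n m x}
  have hum : lexLt n u m := by
    rw [lexLt_def]
    refine ⟨i, fun k hk => ?_, ?_⟩
    · have hki : i ≠ k := hk.ne'
      have hkj : j ≠ k := (hk.trans hij).ne'
      simp [hu, hmdef, Finsupp.single_apply, hki, hkj]
    · have hkj : j ≠ i := hij.ne'
      simp [hu, hmdef, Finsupp.single_apply, hkj]
  have huU : u ∉ U := by
    rintro (h | h)
    · rw [h] at hum; exact lexLt_irrefl _ hum
    · exact lexLt_irrefl _ (lexLt_trans h hum)
  let Y : Finset (Fin n →₀ ℕ) := (GB I a).filter (· ∈ U)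
  have huY : u ∉ Y := fun h => huU (Finset.mem_filter.1 h).2
  let Z := insert u Y
  have hZB : ∀ z ∈ Z, z ∈ GB I a := by
    intro z hz
    rcases Finset.mem_insert.1 hz with h | h
    · rw [h]; exact hv
    · exact (Finset.mem_filter.1 h).1
  obtain ⟨g₁, hg₁⟩ := generally_exists (lemmaU' (𝓐 := fun g : GL (Fin n) K => mv g I))
  obtain ⟨w, hw⟩ := goodWt_lex (n := n) a
  have hq : ∀ z : Z, ∃ q : MvPolynomial (Fin n) (Polynomial K), q.IsHomogeneous a ∧
      at' 0 q = monomial z.1 1 ∧ ∀ t (ht : t ≠ 0), at' t q ∈ mv (lam w t ht * g₁) I := by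
    intro z
    obtain ⟨f, hf, hfd, hl, h1⟩ := hg₁ a z.1 (hZB z.1 z.2)
    exact degen hw le_rfl hf hfd hl h1
  choose q hqd hq0 hqt using hq
  let h := Matrix.transvection i j (1 : K)
  have hind0 : IndepOn U (fun z : Z => at' (0 : K) (cc (h.map Polynomial.C) (q z))) := by
    simp only [at_cc, hq0]
    refine indepOn_tri U _ (fun a b => lexLt n b a) (fun h h' => lexLt_trans h' h)
      lexLt_irrefl (fun z => if z.1 = u then m else z.1) ?_ ?_ ?_ ?_
    · intro z z' hzz
      have hBm : ∀ z : Z, z.1 ≠ m := fun z hz => hm (hz ▸ hZB z.1 z.2)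
      simp only at hzz
      split_ifs at hzz with h1 h2 h2
      · exact Subtype.ext (h1.trans h2.symm)
      · exact absurd hzz.symm (hBm z')
      · exact absurd hzz (hBm z)
      · exact Subtype.ext hzz
    · intro z
      split_ifs with h1
      · exact Or.inl rfl
      · exact (Finset.mem_filter.1 (Finset.mem_of_mem_insert_of_ne z.2 h1)).2
    · intro z
      split_ifs with h1
      · rw [h1]; exact transvection_next hij v
      · rw [transvection_self hij.ne]; exact one_ne_zero
    · intro z x hx hxz
      split_ifs with h1
      · exact hx
      · exact transvection_lead hij _ _ hxz
  obtain ⟨t, ht, hind⟩ := exists_t U _ hind0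
  have hcard := lemmaG (lift_mv hI) a U (fun x hx y _ _ hxy => by
      rcases hx with h | h
      · exact Or.inr (h ▸ hxy)
      · exact Or.inr (lexLt_trans h hxy)) Y
    (fun x hxU hx => Finset.mem_filter.2 ⟨hx, hxU⟩) (trv hij.ne * (lam w t ht * g₁))
    (fun z : Z => at' t (cc (h.map Polynomial.C) (q z)))
    (fun z => by
      rw [at_cc]
      exact mv_cc (h := trv hij.ne) (hqt z t ht))
    (fun z => by
      rw [at_cc]
      exact cc_homog _ ((hqd z).map _)) hind
  rw [Fintype.card_coe, Finset.card_insert_of_notMem huY] at hcard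
  omega

end Fam


/-! ### Monomial ideals, the second ideal, and lower bounds -/

namespace Fam

variable {K n}

lemma isLead_monomial (r : (Fin n →₀ ℕ) → (Fin n →₀ ℕ) → Prop) (u : Fin n →₀ ℕ) :
    IsLead r (monomial u (1 : K)) u := by
  refine ⟨by rw [coeff_monomial, if_pos rfl]; exact one_ne_zero, fun v hv => ?_⟩
  rw [coeff_monomial] at hv
  split_ifs at hv with h
  · exact Or.inl h.symm
  · exact absurd rfl hv

/-- The monomials of degree `d` in an ideal. -/
def mons (A : Ideal (PS K n)) (d : ℕ) : Finset (Fin n →₀ ℕ) := by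
  classical
  exact (E n d).filter (fun u => monomial u (1 : K) ∈ A)

lemma mem_mons {A : Ideal (PS K n)} {d : ℕ} {u : Fin n →₀ ℕ} :
    u ∈ mons A d ↔ u.degree = d ∧ monomial u (1 : K) ∈ A := by
  classical
  unfold mons
  rw [Finset.mem_filter, mem_E]

lemma mon_hilb {A : Ideal (PS K n)} (hA : IsMonomialIdeal K n A) (d : ℕ) :
    hilb K n A d = (mons A d).card := by
  apply le_antisymm
  · apply hilb_le_lead
    intro f hf u hd hl
    exact mem_mons.2 ⟨deg_of_coeff hd hl.1, hA f hf u (mem_support_iff.2 hl.1)⟩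
  · apply lead_card_le_hilb
    intro u hu
    obtain ⟨h1, h2⟩ := mem_mons.1 hu
    exact ⟨_, h2, isHomogeneous_monomial _ h1, isLead_monomial _ u⟩

lemma mon_add {A : Ideal (PS K n)} {u : Fin n →₀ ℕ} (hu : monomial u (1 : K) ∈ A)
    (w : Fin n →₀ ℕ) : monomial (w + u) (1 : K) ∈ A := by
  have := Ideal.mul_mem_left A (monomial w 1) hu
  rwa [monomial_mul, one_mul] at this

lemma mon_mem {A : Ideal (PS K n)} {f : PS K n}
    (h : ∀ u ∈ f.support, monomial u (1 : K) ∈ A) : f ∈ A := by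
  rw [← support_sum_monomial_coeff f]
  refine Ideal.sum_mem _ fun u hu => ?_
  have := Ideal.mul_mem_left A (C (coeff u f)) (h u hu)
  rwa [C_mul_monomial, mul_one] at this

lemma mon_homog {A : Ideal (PS K n)} (hA : IsMonomialIdeal K n A) : IsHomog K n A := by
  intro f hf d
  apply mon_mem
  intro u hu
  rw [mem_support_iff, coeff_homogeneousComponent] at hu
  split_ifs at hu with h
  · exact hA f hf u (mem_support_iff.2 hu)
  · exact absurd rfl hu

lemma mon_sup {A B : Ideal (PS K n)} (hA : IsMonomialIdeal K n A) (hB : IsMonomialIdeal K n B)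
    {f : PS K n} (hf : f ∈ A ⊔ B) {u : Fin n →₀ ℕ} (hu : u ∈ f.support) :
    monomial u (1 : K) ∈ A ∨ monomial u (1 : K) ∈ B := by
  obtain ⟨a, ha, b, hb, rfl⟩ := Submodule.mem_sup.1 hf
  rw [mem_support_iff, coeff_add] at hu
  by_cases h : coeff u a = 0
  · rw [h, zero_add] at hu
    exact Or.inr (hB b hb u (mem_support_iff.2 hu))
  · exact Or.inl (hA a ha u (mem_support_iff.2 h))

lemma mon_mul {A B : Ideal (PS K n)} (hA : IsMonomialIdeal K n A) (hB : IsMonomialIdeal K n B)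
    {f : PS K n} (hf : f ∈ A * B) {u : Fin n →₀ ℕ} (hu : u ∈ f.support) :
    ∃ m c, monomial m (1 : K) ∈ A ∧ monomial c (1 : K) ∈ B ∧ u = m + c := by
  classical
  revert u
  induction hf using Submodule.mul_induction_on' with
  | mem_mul_mem a ha b hb =>
    intro u hu
    obtain ⟨m, hm, c, hc, rfl⟩ := Finset.mem_add.1 (support_mul a b hu)
    exact ⟨m, c, hA a ha m hm, hB b hb c hc, rfl⟩
  | add x _ y _ hx hy =>
    intro u hu
    rcases Finset.mem_union.1 (support_add hu) with h | h
    · exact hx h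
    · exact hy h

lemma mem_support_monomial_self (u : Fin n →₀ ℕ) : u ∈ (monomial u (1 : K)).support := by
  rw [mem_support_iff, coeff_monomial, if_pos rfl]; exact one_ne_zero

lemma mon_sup_isMon {A B : Ideal (PS K n)} (hA : IsMonomialIdeal K n A)
    (hB : IsMonomialIdeal K n B) : IsMonomialIdeal K n (A ⊔ B) := by
  intro f hf u hu
  rcases mon_sup hA hB hf hu with h | h
  · exact Ideal.mem_sup_left h
  · exact Ideal.mem_sup_right h

lemma mon_mul_isMon {A B : Ideal (PS K n)} (hA : IsMonomialIdeal K n A)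
    (hB : IsMonomialIdeal K n B) : IsMonomialIdeal K n (A * B) := by
  intro f hf u hu
  obtain ⟨m, c, h1, h2, rfl⟩ := mon_mul hA hB hf hu
  have := Ideal.mul_mem_mul h1 h2
  rwa [monomial_mul, one_mul] at this

/-- Reversal of the variables on exponents. -/
def rv (u : Fin n →₀ ℕ) : Fin n →₀ ℕ := u.mapDomain Fin.rev

lemma rv_apply (u : Fin n →₀ ℕ) (i : Fin n) : rv u i = u (Fin.rev i) := by
  have := Finsupp.mapDomain_apply (Fin.rev_injective (n := n)) u (Fin.rev i)
  rwa [Fin.rev_rev] at this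

lemma rv_rv (u : Fin n →₀ ℕ) : rv (rv u) = u := by
  ext i
  rw [rv_apply, rv_apply, Fin.rev_rev]

lemma rv_inj : Function.Injective (rv (n := n)) := fun u v h => by
  rw [← rv_rv u, h, rv_rv]

lemma rv_degree (u : Fin n →₀ ℕ) : (rv u).degree = u.degree := by
  rw [Finsupp.degree_eq_sum, Finsupp.degree_eq_sum]
  simp only [rv_apply]
  exact Equiv.sum_comp Fin.revPerm (fun i => u i)

lemma rv_lex {u v : Fin n →₀ ℕ} (h : lexLt n u v) : oplexLt n (rv u) (rv v) := by
  obtain ⟨i, h1, h2⟩ := (lexLt_def _ _).1 h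
  rw [oplexLt_def]
  refine ⟨Fin.rev i, fun j hj => ?_, ?_⟩
  · rw [rv_apply, rv_apply]
    exact h1 _ (by rw [← Fin.rev_lt_rev, Fin.rev_rev]; exact hj)
  · rw [rv_apply, rv_apply, Fin.rev_rev]; exact h2

/-- The reversing permutation matrix. -/
def revM : Matrix (Fin n) (Fin n) K := Matrix.of fun j i => if j = Fin.rev i then 1 else 0

lemma cc_revM (f : PS K n) : cc (revM : Matrix (Fin n) (Fin n) K) f = rename Fin.rev f := by
  have : cc (revM : Matrix (Fin n) (Fin n) K) = rename Fin.rev := by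
    apply MvPolynomial.algHom_ext
    intro i
    rw [cc_X, rename_X]
    simp [revM]
  rw [this]

lemma revM_mul : (revM : Matrix (Fin n) (Fin n) K) * revM = 1 := by
  ext i j
  rw [Matrix.mul_apply]
  simp [revM, Matrix.one_apply, Fin.rev_rev]

/-- The reversing coordinate change. -/
def revG : GL (Fin n) K := ⟨revM, revM, revM_mul, revM_mul⟩

lemma rev_lead {f : PS K n} {u : Fin n →₀ ℕ} (h : IsLead (lexLt n) f u) (h1 : coeff u f = 1) :
    IsLead (oplexLt n) (cc (revM : Matrix (Fin n) (Fin n) K) f) (rv u) ∧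
      coeff (rv u) (cc (revM : Matrix (Fin n) (Fin n) K) f) = 1 := by
  have hc : ∀ v, coeff v (cc (revM : Matrix (Fin n) (Fin n) K) f) = coeff (rv v) f := by
    intro v
    rw [cc_revM]
    have := coeff_rename_mapDomain (Fin.rev (n := n)) Fin.rev_injective f (rv v)
    rw [← this]
    congr 1
    exact (rv_rv v).symm
  refine ⟨⟨?_, ?_⟩, ?_⟩
  · rw [hc, rv_rv]; exact h.1
  · intro v hv
    rw [hc] at hv
    rcases h.2 _ hv with h' | h'
    · left; rw [← h', rv_rv]
    · right; have := rv_lex h'; rwa [rv_rv] at this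
  · rw [hc, rv_rv]; exact h1

lemma ini_lead {A : Ideal (PS K n)} (hA : IsHomog K n A) {u : Fin n →₀ ℕ}
    (hu : monomial u (1 : K) ∈ initialIdealO K n (lexLt n) A) :
    ∃ f ∈ A, f.IsHomogeneous u.degree ∧ IsLead (lexLt n) f u ∧ coeff u f = 1 := by
  have hset : {g : PS K n | ∃ f ∈ A, ∃ m ∈ f.support,
      (∀ m' ∈ f.support, m' = m ∨ lexLt n m' m) ∧ g = monomial m (1 : K)} =
      (fun s => monomial s (1 : K)) '' {m | ∃ f ∈ A, IsLead (lexLt n) f m} := by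
    ext g
    constructor
    · rintro ⟨f, hf, m, hm, h, rfl⟩
      exact ⟨m, ⟨f, hf, mem_support_iff.1 hm, fun v hv => h v (mem_support_iff.2 hv)⟩, rfl⟩
    · rintro ⟨m, ⟨f, hf, h1, h2⟩, rfl⟩
      exact ⟨f, hf, m, mem_support_iff.2 h1, fun v hv => h2 v (mem_support_iff.1 hv), rfl⟩
  unfold initialIdealO at hu
  rw [hset, mem_ideal_span_monomial_image] at hu
  obtain ⟨m, ⟨f, hf, hl⟩, hmu⟩ := hu u (mem_support_monomial_self u)
  obtain ⟨w, rfl⟩ := exists_add_of_le hmu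
  have hl' := isLead_monomial_mul hl w
  rw [add_comm w m] at hl'
  have hf' : monomial w 1 * f ∈ A := Ideal.mul_mem_left _ _ hf
  have hl2 : IsLead (lexLt n) (homogeneousComponent (m + w).degree (monomial w 1 * f))
      (m + w) := by
    refine ⟨?_, fun v hv => hl'.2 v ?_⟩
    · rw [coeff_homogeneousComponent, if_pos rfl]; exact hl'.1
    · rw [coeff_homogeneousComponent] at hv
      split_ifs at hv with h
      · exact hv
      · exact absurd rfl hv
  obtain ⟨h3, h4⟩ := isLead_normalize hl2
  exact ⟨_, Ideal.mul_mem_left _ _ (hA _ hf' _),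
    (homogeneousComponent_isHomogeneous _ _).C_mul _, h3, h4⟩

/-- The monomials of `J^oplex` are opposite leading monomials of some `g(J)`. -/
lemma J_side [CharZero K] {J : Ideal (PS K n)} (hJ : IsHomog K n J)
    (GinJ : Ideal (PS K n))
    (hGinJ : generally K n (fun g =>
      initialIdealO K n (lexLt n) (Ideal.map (coordChange K n g) J) = GinJ))
    (hGinJlex : IsLexIdeal K n GinJ)
    (Jop : Ideal (PS K n)) (hJop : IsOplexIdeal K n Jop)
    (hJopHilb : ∀ d : ℕ, hilb K n Jop d = hilb K n J d) :
    ∃ g : GL (Fin n) K, ∀ v : Fin n →₀ ℕ, monomial v (1 : K) ∈ Jop →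
      ∃ f ∈ mv g J, f.IsHomogeneous v.degree ∧ IsLead (oplexLt n) f v ∧ coeff v f = 1 := by
  classical
  obtain ⟨g, hg⟩ := generally_exists hGinJ
  refine ⟨revG * g, fun v hv => ?_⟩
  have hG : monomial (rv v) (1 : K) ∈ GinJ := by
    by_contra hcon
    have hlt : (mons GinJ v.degree).card < (mons Jop v.degree).card := by
      rw [← Finset.card_image_of_injective (mons GinJ v.degree) rv_inj]
      apply Finset.card_lt_card
      rw [Finset.ssubset_iff_of_subset]
      · refine ⟨v, mem_mons.2 ⟨rfl, hv⟩, fun h => ?_⟩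
        obtain ⟨x, hx, hxv⟩ := Finset.mem_image.1 h
        rw [← hxv, rv_rv] at hcon
        exact hcon (mem_mons.1 hx).2
      · intro y hy
        obtain ⟨x, hx, rfl⟩ := Finset.mem_image.1 hy
        obtain ⟨hx1, hx2⟩ := mem_mons.1 hx
        have hdeg : expDeg n x = expDeg n (rv v) := by
          rw [expDeg_eq, expDeg_eq, rv_degree, hx1]
        refine mem_mons.2 ⟨by rw [rv_degree, hx1], ?_⟩
        rcases lexLt_tri x (rv v) with h | h | h
        · exact absurd (hGinJlex.2 x (rv v) hdeg hx2 h) hcon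
        · exact absurd (h ▸ hx2) hcon
        · have h' := rv_lex h
          rw [rv_rv] at h'
          exact hJop.2 v (rv x) (by rw [expDeg_eq, expDeg_eq, rv_degree, hx1]) hv h'
    have hle : hilb K n (mv g J) v.degree ≤ (mons GinJ v.degree).card := by
      apply hilb_le_lead
      intro f hf u hd hl
      refine mem_mons.2 ⟨deg_of_coeff hd hl.1, ?_⟩
      rw [← hg]
      exact Ideal.subset_span ⟨f, hf, u, mem_support_iff.2 hl.1,
        fun m' hm' => hl.2 m' (mem_support_iff.1 hm'), rfl⟩
    rw [hilb_mv, ← hJopHilb, mon_hilb hJop.1] at hle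
    omega
  rw [← hg] at hG
  obtain ⟨f, hf, hd, hl, h1⟩ := ini_lead (mv_homog hJ) hG
  obtain ⟨h2, h3⟩ := rev_lead hl h1
  rw [rv_rv] at h2 h3
  rw [rv_degree] at hd
  exact ⟨_, mv_cc (h := revG) hf, cc_homog _ hd, h2, h3⟩

lemma mv_mv (h g : GL (Fin n) K) (J : Ideal (PS K n)) : mv h (mv g J) = mv (h * g) J := by
  ext f
  constructor
  · intro hf
    obtain ⟨p, hp, rfl⟩ := mem_mv.1 hf
    exact mv_cc hp
  · intro hf
    obtain ⟨p, hp, rfl⟩ := mem_mv.1 hf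
    refine mem_mv.2 ⟨_, mem_mv.2 ⟨p, hp, rfl⟩, ?_⟩
    rw [← cc_mul]; rfl

/-- Lower bound obtained by degenerating to monomials. -/
lemma lower [CharZero K] {I J : Ideal (PS K n)}
    (Op : Ideal (PS K n) → Ideal (PS K n) → Ideal (PS K n))
    (hOp : ∀ (h : GL (Fin n) K) A B, mv h (Op A B) = Op (mv h A) (mv h B))
    (hL : Lift (fun g : GL (Fin n) K => Op I (mv g J))) (d : ℕ) (X : Finset (Fin n →₀ ℕ))
    (a b : (t : K) → t ≠ 0 → GL (Fin n) K)
    (hq : ∀ u ∈ X, ∃ q : MvPolynomial (Fin n) (Polynomial K), q.IsHomogeneous d ∧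
      at' 0 q = monomial u 1 ∧ ∀ t (ht : t ≠ 0), at' t q ∈ Op (mv (a t ht) I) (mv (b t ht) J)) :
    X.card ≤ (LM (fun g : GL (Fin n) K => Op I (mv g J)) d).card := by
  choose q hqd hq0 hqt using fun u : X => hq u.1 u.2
  have hind0 : IndepOn Set.univ (fun u : X => at' (0 : K) (q u)) := by
    simp only [hq0]
    exact indepOn_tri _ _ (lexLt n) lexLt_trans lexLt_irrefl (fun u => u.1)
      Subtype.val_injective (fun _ => Set.mem_univ _) (fun u => (isLead_monomial (lexLt n) _).1)
      (fun u v _ hv => (isLead_monomial (lexLt n) _).2 v hv)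
  obtain ⟨t, ht, hind⟩ := exists_t _ _ hind0
  rw [← Fintype.card_coe]
  refine lemmaG hL d Set.univ (fun _ _ _ _ _ _ => Set.mem_univ _) _ (fun _ _ h => h)
    ((a t ht)⁻¹ * b t ht) (fun u : X => ccE (a t ht)⁻¹ (at' t (q u))) ?_ ?_ ?_
  · intro u
    have h1 : ccE (a t ht)⁻¹ (at' t (q u)) ∈ mv (a t ht)⁻¹ (Op (mv (a t ht) I) (mv (b t ht) J)) :=
      mem_mv.2 ⟨_, hqt u t ht, rfl⟩
    rw [hOp, mv_mv, mv_mv, inv_mul_cancel, mv_one] at h1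
    exact h1
  · intro u
    exact cc_homog _ ((hqd u).map _)
  · rw [indepOn_univ] at hind ⊢
    exact hind.map' (ccE (a t ht)⁻¹ : PS K n →ₗ[K] PS K n) (LinearEquiv.ker _)

/-- Generic lower bounds for sum and product. -/
lemma generic_lower [CharZero K] {I J Jop : Ideal (PS K n)} (hI : IsHomog K n I)
    (hJ : IsHomog K n J)
    (hJs : ∃ g : GL (Fin n) K, ∀ v : Fin n →₀ ℕ, monomial v (1 : K) ∈ Jop →
      ∃ f ∈ mv g J, f.IsHomogeneous v.degree ∧ IsLead (oplexLt n) f v ∧ coeff v f = 1) :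
    generally K n (fun g => ∀ d, ∀ X : Finset (Fin n →₀ ℕ), (∀ u ∈ X, u.degree = d) →
      ((∀ u ∈ X, u ∈ GB I d ∨ monomial u (1 : K) ∈ Jop) → X.card ≤ hilb K n (I ⊔ mv g J) d) ∧
      ((∀ u ∈ X, ∃ m c, m ∈ GB I m.degree ∧ monomial c (1 : K) ∈ Jop ∧ u = m + c) →
        X.card ≤ hilb K n (I * mv g J) d)) := by
  have hA := lemmaU' (𝓐 := fun g : GL (Fin n) K => I ⊔ mv g J)
  have hB := lemmaU' (𝓐 := fun g : GL (Fin n) K => I * mv g J)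
  refine generally_mono (generally_and hA hB) ?_
  rintro g ⟨hgA, hgB⟩ d X hX
  obtain ⟨g₁, hg₁⟩ := generally_exists (lemmaU' (𝓐 := fun g : GL (Fin n) K => mv g I))
  obtain ⟨g₂, hg₂⟩ := hJs
  obtain ⟨w, hw⟩ := goodWt_lex (n := n) d
  obtain ⟨w', hw'⟩ := goodWt_oplex (n := n) d
  have hqI : ∀ e ≤ d, ∀ u ∈ GB I e, ∃ q : MvPolynomial (Fin n) (Polynomial K),
      q.IsHomogeneous e ∧ at' 0 q = monomial u 1 ∧
      ∀ t (ht : t ≠ 0), at' t q ∈ mv (lam w t ht * g₁) I := by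
    intro e he u hu
    obtain ⟨f, hf, hfd, hl, h1⟩ := hg₁ e u hu
    exact degen hw he hf hfd hl h1
  have hqJ : ∀ u : Fin n →₀ ℕ, u.degree ≤ d → monomial u (1 : K) ∈ Jop →
      ∃ q : MvPolynomial (Fin n) (Polynomial K),
      q.IsHomogeneous u.degree ∧ at' 0 q = monomial u 1 ∧
      ∀ t (ht : t ≠ 0), at' t q ∈ mv (lam w' t ht * g₂) J := by
    intro u hud hu
    obtain ⟨f, hf, hfd, hl, h1⟩ := hg₂ u hu
    exact degen hw' hud hf hfd hl h1
  constructor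
  · intro h
    refine (lower (fun A B => A ⊔ B) (fun h A B => Ideal.map_sup _ _ _)
      (lift_sup (lift_const hI) (lift_mv hJ)) d X (fun t ht => lam w t ht * g₁)
      (fun t ht => lam w' t ht * g₂) ?_).trans ?_
    · intro u hu
      rcases h u hu with h1 | h1
      · obtain ⟨q, h2, h3, h4⟩ := hqI d le_rfl u h1
        exact ⟨q, h2, h3, fun t ht => Ideal.mem_sup_left (h4 t ht)⟩
      · obtain ⟨q, h2, h3, h4⟩ := hqJ u (hX u hu).le h1
        rw [hX u hu] at h2
        exact ⟨q, h2, h3, fun t ht => Ideal.mem_sup_right (h4 t ht)⟩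
    · apply lead_card_le_hilb
      intro u hu
      obtain ⟨f, h1, h2, h3, _⟩ := hgA d u hu
      exact ⟨f, h1, h2, h3⟩
  · intro h
    refine (lower (fun A B => A * B) (fun h A B => Ideal.map_mul _ _ _)
      (lift_mul (lift_const hI) (lift_mv hJ)) d X (fun t ht => lam w t ht * g₁)
      (fun t ht => lam w' t ht * g₂) ?_).trans ?_
    · intro u hu
      obtain ⟨m, c, hm, hc, rfl⟩ := h u hu
      have hd := hX _ hu
      rw [map_add] at hd
      obtain ⟨q, h2, h3, h4⟩ := hqI m.degree (by omega) m hm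
      obtain ⟨q', h2', h3', h4'⟩ := hqJ c (by omega) hc
      refine ⟨q * q', hd ▸ h2.mul h2', ?_, fun t ht => ?_⟩
      · rw [map_mul, h3, h3', monomial_mul, one_mul]
      · rw [map_mul]
        exact Ideal.mul_mem_mul (h4 t ht) (h4' t ht)
    · apply lead_card_le_hilb
      intro u hu
      obtain ⟨f, h1, h2, h3, _⟩ := hgB d u hu
      exact ⟨f, h1, h2, h3⟩

end Fam


/-! ### Transfer of the combinatorial inequalities to Hilbert functions -/

namespace Fam

variable {K n}

/-- Exponent functions as finitely supported functions. -/
def fs (u : Fin n → ℕ) : Fin n →₀ ℕ := Finsupp.equivFunOnFinite.symm u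

@[simp] lemma fs_apply (u : Fin n → ℕ) (i : Fin n) : fs u i = u i := rfl

lemma fs_coe (u : Fin n →₀ ℕ) : fs (⇑u) = u := by ext i; rfl

lemma fs_add (u v : Fin n → ℕ) : fs (u + v) = fs u + fs v := by ext i; rfl

lemma fs_e (i : Fin n) : fs (Comb.e i) = Finsupp.single i 1 := by
  ext j
  simp [Comb.e, Pi.single_apply, Finsupp.single_apply, eq_comm]

lemma fs_degree (u : Fin n → ℕ) : (fs u).degree = ∑ i, u i := by
  rw [← expDeg_eq]; rfl

lemma fs_inj {u v : Fin n → ℕ} (h : fs u = fs v) : u = v :=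
  Finsupp.equivFunOnFinite.symm.injective h

/-- The set of exponent functions of a finite set of exponents. -/
def im (A : Finset (Fin n →₀ ℕ)) : Finset (Fin n → ℕ) :=
  A.map ⟨fun u : Fin n →₀ ℕ => (u : Fin n → ℕ), DFunLike.coe_injective⟩

lemma mem_im {A : Finset (Fin n →₀ ℕ)} {u : Fin n → ℕ} : u ∈ im A ↔ fs u ∈ A := by
  unfold im
  rw [Finset.mem_map]
  constructor
  · rintro ⟨v, hv, rfl⟩
    have : fs (v : Fin n → ℕ) = v := fs_coe v
    change fs (v : Fin n → ℕ) ∈ A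
    rwa [this]
  · intro h
    exact ⟨fs u, h, rfl⟩

lemma card_im (A : Finset (Fin n →₀ ℕ)) : (im A).card = A.card := Finset.card_map _

lemma im_seg {A : Ideal (PS K n)} (hA : IsLexIdeal K n A) (d : ℕ) :
    Comb.IsSeg (im (mons A d)) d := by
  constructor
  · intro u hu
    rw [← fs_degree]
    exact (mem_mons.1 (mem_im.1 hu)).1
  · intro u hu v hv huv
    obtain ⟨h1, h2⟩ := mem_mons.1 (mem_im.1 hu)
    refine mem_im.2 (mem_mons.2 ⟨by rw [fs_degree, hv], ?_⟩)
    refine hA.2 (fs u) (fs v) ?_ h2 huv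
    rw [expDeg_eq, expDeg_eq, h1, fs_degree, hv]

lemma im_bor [CharZero K] {I : Ideal (PS K n)} (hI : IsHomog K n I) (d : ℕ) :
    Comb.IsBor (im (GB I d)) d := by
  constructor
  · intro u hu
    rw [← fs_degree]
    exact LM_deg (mem_im.1 hu)
  · intro v i j hij h
    rw [mem_im, fs_add, fs_e] at h ⊢
    exact GB_borel hI d hij _ h

lemma card_seg_bor {I Ilex : Ideal (PS K n)} (hI : IsHomog K n I)
    (hIlex : IsLexIdeal K n Ilex)
    (hh : ∀ d : ℕ, hilb K n Ilex d = hilb K n I d) (d : ℕ) :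
    (im (mons Ilex d)).card ≤ (im (GB I d)).card := by
  rw [card_im, card_im, ← mon_hilb hIlex.1, hh]
  exact hilb_le_GB hI d

lemma card_union_down {α : Type} [DecidableEq α] (D C U : Finset α) (hD : ∀ u ∈ D, u ∈ U) :
    (D ∪ C).card = C.card + (D ∩ (U \ C)).card := by
  rw [← Finset.card_union_of_disjoint]
  · congr 1
    ext u
    simp only [Finset.mem_union, Finset.mem_inter, Finset.mem_sdiff]
    have := hD u
    tauto
  · rw [Finset.disjoint_left]
    intro u hu hu'
    exact (Finset.mem_sdiff.1 (Finset.mem_inter.1 hu').2).2 hu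

lemma sum_comb [CharZero K] {I Ilex Jop : Ideal (PS K n)} (hI : IsHomog K n I)
    (hIlex : IsLexIdeal K n Ilex) (hh : ∀ d : ℕ, hilb K n Ilex d = hilb K n I d)
    (hJop : IsOplexIdeal K n Jop) (d : ℕ) :
    ∃ X : Finset (Fin n →₀ ℕ), (∀ u ∈ X, u.degree = d) ∧
      (∀ u ∈ X, u ∈ GB I d ∨ monomial u (1 : K) ∈ Jop) ∧
      hilb K n (Ilex ⊔ Jop) d ≤ X.card := by
  classical
  set L := im (mons Ilex d)
  set B := im (GB I d)
  set C := im (mons Jop d)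
  set T := (Comb.Mon n d) \ C with hTdef
  have hT : Comb.IsOpDown T d := by
    constructor
    · intro u hu
      exact Comb.mem_Mon.1 (Finset.mem_sdiff.1 hu).1
    · intro u hu v hv hvu
      obtain ⟨h1, h2⟩ := Finset.mem_sdiff.1 hu
      refine Finset.mem_sdiff.2 ⟨Comb.mem_Mon.2 hv, fun h3 => h2 ?_⟩
      obtain ⟨h4, h5⟩ := mem_mons.1 (mem_im.1 h3)
      have h1' := Comb.mem_Mon.1 h1
      refine mem_im.2 (mem_mons.2 ⟨by rw [fs_degree, h1'], ?_⟩)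
      refine hJop.2 (fs v) (fs u) ?_ h5 hvu
      rw [expDeg_eq, expDeg_eq, h4, fs_degree, h1']
  have key := Comb.propA n d B L T (im_bor hI d) (im_seg hIlex d) hT (card_seg_bor hI hIlex hh d)
  have hun : ∀ D : Finset (Fin n → ℕ), (∀ u ∈ D, ∑ i, u i = d) →
      (D ∪ C).card = C.card + (D ∩ T).card := by
    intro D hD
    exact card_union_down D C (Comb.Mon n d) (fun u hu => Comb.mem_Mon.2 (hD u hu))
  refine ⟨GB I d ∪ mons Jop d, ?_, ?_, ?_⟩
  · intro u hu
    rcases Finset.mem_union.1 hu with h | h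
    · exact LM_deg h
    · exact (mem_mons.1 h).1
  · intro u hu
    rcases Finset.mem_union.1 hu with h | h
    · exact Or.inl h
    · exact Or.inr (mem_mons.1 h).2
  · have e1 : (GB I d ∪ mons Jop d).card = (B ∪ C).card := by
      rw [← card_im]
      congr 1
      ext u
      simp only [mem_im, Finset.mem_union, B, C]
    have e2 : (mons (Ilex ⊔ Jop) d).card ≤ (L ∪ C).card := by
      rw [← card_im]
      apply Finset.card_le_card
      intro u hu
      obtain ⟨h1, h2⟩ := mem_mons.1 (mem_im.1 hu)
      rcases mon_sup hIlex.1 hJop.1 h2 (mem_support_monomial_self _) with h | h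
      · exact Finset.mem_union_left _ (mem_im.2 (mem_mons.2 ⟨h1, h⟩))
      · exact Finset.mem_union_right _ (mem_im.2 (mem_mons.2 ⟨h1, h⟩))
    rw [mon_hilb (mon_sup_isMon hIlex.1 hJop.1), e1]
    refine e2.trans ?_
    rw [hun L (im_seg hIlex d).sub, hun B (im_bor hI d).sub]
    omega

lemma before_down (d : ℕ) (c : Fin n → ℕ) (T : Finset (Fin n → ℕ))
    (hT : ∀ u, u ∈ T ↔ ∑ i, u i = d ∧ Comb.Before u c) : Comb.IsOpDown T d := by
  constructor
  · intro u hu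
    exact ((hT u).1 hu).1
  · rintro u hu v hv ⟨i, h1, h2⟩
    refine (hT v).2 ⟨hv, ?_⟩
    have hu' := ((hT u).1 hu).2
    intro k l hk hl
    by_contra hlt
    rw [not_le] at hlt
    have hi : i ≤ l := hu' i l (by omega) hl
    have := hu' k l (by rw [← h1 k (lt_of_le_of_lt hi hlt)]; exact hk) hl
    exact absurd hlt (not_lt.2 this)

lemma prod_comb [CharZero K] {I Ilex Jop : Ideal (PS K n)} (hI : IsHomog K n I)
    (hIlex : IsLexIdeal K n Ilex) (hh : ∀ d : ℕ, hilb K n Ilex d = hilb K n I d)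
    (hJop : IsOplexIdeal K n Jop) (d : ℕ) :
    ∃ X : Finset (Fin n →₀ ℕ), (∀ u ∈ X, u.degree = d) ∧
      (∀ u ∈ X, ∃ m c, m ∈ GB I m.degree ∧ monomial c (1 : K) ∈ Jop ∧ u = m + c) ∧
      hilb K n (Ilex * Jop) d ≤ X.card := by
  classical
  have key := Comb.propB (n := n) (B := fun m => fs m ∈ GB I (fs m).degree)
    (L := fun m => monomial (fs m) (1 : K) ∈ Ilex) (C := fun m => monomial (fs m) (1 : K) ∈ Jop)
    (fun m k h => by
      rw [fs_add, add_comm]; exact mon_add h _)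
    (fun v i j hij h => by
      refine hIlex.2 _ _ ?_ h ?_
      · rw [expDeg_eq, expDeg_eq, fs_degree, fs_degree, Comb.sum_add_e, Comb.sum_add_e]
      · rw [lexLt_def]
        refine ⟨i, fun k hk => ?_, ?_⟩
        · simp [Comb.e, Pi.single_apply, hk.ne, (hk.trans hij).ne]
        · simp [Comb.e, Pi.single_apply, hij.ne])
    (fun c v h => by
      rw [fs_add, add_comm]; exact mon_add h _)
    (fun v i j hij h => by
      refine hJop.2 _ _ ?_ h ?_
      · rw [expDeg_eq, expDeg_eq, fs_degree, fs_degree, Comb.sum_add_e, Comb.sum_add_e]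
      · rw [oplexLt_def]
        refine ⟨j, fun k hk => ?_, ?_⟩
        · have hk' : j < k := hk
          simp [Comb.e, Pi.single_apply, hk'.ne', (hij.trans hk').ne']
        · simp [Comb.e, Pi.single_apply, hij.ne'])
    (fun a c s t hs ht => by
      set T := (Comb.Mon n a).filter (fun u => Comb.Before u c) with hT
      have hT' := before_down a c T (fun u => by rw [hT, Finset.mem_filter, Comb.mem_Mon])
      have := Comb.propA n a _ _ T (im_bor hI a) (im_seg hIlex a) hT'
        (card_seg_bor hI hIlex hh a)
      convert this using 2
      · ext u
        rw [hs, Finset.mem_inter, hT, Finset.mem_filter, Comb.mem_Mon, mem_im, mem_mons,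
          fs_degree]
        tauto
      · ext u
        rw [ht, Finset.mem_inter, hT, Finset.mem_filter, Comb.mem_Mon, mem_im, fs_degree]
        constructor
        · rintro ⟨h1, h2, h3⟩
          rw [h1] at h2
          exact ⟨h2, h1, h3⟩
        · rintro ⟨h1, h2, h3⟩
          rw [h2]
          exact ⟨rfl, h1, h3⟩) d
  refine ⟨(Comb.prodSet (fun m => fs m ∈ GB I (fs m).degree)
    (fun m => monomial (fs m) (1 : K) ∈ Jop) d).image fs, ?_, ?_, ?_⟩
  · intro u hu
    obtain ⟨v, hv, rfl⟩ := Finset.mem_image.1 hu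
    rw [fs_degree]
    exact (Comb.mem_prodSet.1 hv).1
  · intro u hu
    obtain ⟨v, hv, rfl⟩ := Finset.mem_image.1 hu
    obtain ⟨-, m, c, h1, h2, rfl⟩ := Comb.mem_prodSet.1 hv
    exact ⟨fs m, fs c, h1, h2, fs_add _ _⟩
  · rw [Finset.card_image_of_injective _ (fun _ _ h => fs_inj h)]
    refine le_trans ?_ key
    rw [mon_hilb (mon_mul_isMon hIlex.1 hJop.1), ← card_im]
    apply Finset.card_le_card
    intro u hu
    obtain ⟨h1, h2⟩ := mem_mons.1 (mem_im.1 hu)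
    obtain ⟨m, c, h3, h4, h5⟩ := mon_mul hIlex.1 hJop.1 h2 (mem_support_monomial_self _)
    refine Comb.mem_prodSet.2 ⟨by rw [← fs_degree, h1], ⇑m, ⇑c, ?_, ?_, ?_⟩
    · show monomial (fs ⇑m) (1 : K) ∈ Ilex
      rwa [fs_coe]
    · show monomial (fs ⇑c) (1 : K) ∈ Jop
      rwa [fs_coe]
    · apply fs_inj
      rw [h5, fs_add, fs_coe, fs_coe]

/-- The two Hilbert function inequalities. -/
theorem hilb_ineq [CharZero K]
    (I J : Ideal (PS K n)) (hI : IsHomog K n I) (hJ : IsHomog K n J)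
    (GinJ : Ideal (PS K n))
    (hGinJ : generally K n (fun g =>
      initialIdealO K n (lexLt n) (Ideal.map (coordChange K n g) J) = GinJ))
    (hGinJlex : IsLexIdeal K n GinJ)
    (Ilex : Ideal (PS K n)) (hIlex : IsLexIdeal K n Ilex)
    (hIlexHilb : ∀ d : ℕ, hilb K n Ilex d = hilb K n I d)
    (Jop : Ideal (PS K n)) (hJop : IsOplexIdeal K n Jop)
    (hJopHilb : ∀ d : ℕ, hilb K n Jop d = hilb K n J d) :
    generally K n (fun g => ∀ d : ℕ,
      hilb K n (Ilex ⊔ Jop) d ≤ hilb K n (I ⊔ mv g J) d ∧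
      hilb K n (Ilex * Jop) d ≤ hilb K n (I * mv g J) d) := by
  refine generally_mono (generic_lower hI hJ
    (J_side hJ GinJ hGinJ hGinJlex Jop hJop hJopHilb)) ?_
  intro g hg d
  obtain ⟨X, h1, h2, h3⟩ := sum_comb hI hIlex hIlexHilb hJop d
  obtain ⟨Y, k1, k2, k3⟩ := prod_comb hI hIlex hIlexHilb hJop d
  exact ⟨h3.trans ((hg d X h1).1 h2), k3.trans ((hg d Y k1).2 k2)⟩

end Fam


/-! ### The bar complex in low degrees -/

namespace Fam

variable {K n}

section general

variable {V W : Type} [AddCommGroup V] [Module K V] [AddCommGroup W] [Module K W]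

lemma rank_null (f : V →ₗ[K] W) (G : Submodule K V) [Module.Finite K G] :
    Module.finrank K G = Module.finrank K (G.map f) + Module.finrank K ↥(LinearMap.ker f ⊓ G) := by
  have h := LinearMap.finrank_range_add_finrank_ker (f.domRestrict G)
  have e1 : LinearMap.ker (f.domRestrict G) = (LinearMap.ker f ⊓ G).comap G.subtype := by
    ext x
    simp
  rw [← h, LinearMap.range_domRestrict, e1,
    LinearEquiv.finrank_eq (Submodule.comap_equiv_self_of_inj_of_le
      (p := LinearMap.ker f ⊓ G) (f := G.subtype) (Submodule.injective_subtype G)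
      (by rw [Submodule.range_subtype]; exact inf_le_right))]

lemma tg_le {GA : ℤ → Submodule K V} {GB : ℤ → Submodule K W} {d : ℤ}
    {P : Submodule K (V ⊗[K] W)} (h : ∀ p, ∀ a ∈ GA p, ∀ b ∈ GB (d - p), a ⊗ₜ[K] b ∈ P) :
    tensorGrade K GA GB d ≤ P := by
  refine iSup_le fun p => ?_
  rintro _ ⟨z, rfl⟩
  induction z using TensorProduct.induction_on with
  | zero => rw [map_zero]; exact P.zero_mem
  | tmul a b =>
    rw [TensorProduct.map_tmul]
    exact h p a a.2 b b.2
  | add x y hx hy => rw [map_add]; exact P.add_mem hx hy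

lemma tg_mem {GA : ℤ → Submodule K V} {GB : ℤ → Submodule K W} {d : ℤ} {p q : ℤ} {a : V} {b : W}
    (ha : a ∈ GA p) (hb : b ∈ GB q) (hd : p + q = d) : a ⊗ₜ[K] b ∈ tensorGrade K GA GB d := by
  have hq : d - p = q := by omega
  subst hq
  refine Submodule.mem_iSup_of_mem p ⟨(⟨a, ha⟩ : GA p) ⊗ₜ[K] (⟨b, hb⟩ : GB (d - p)), ?_⟩
  rw [TensorProduct.map_tmul]
  rfl

lemma tg_neg {GA : ℤ → Submodule K V} {GB : ℤ → Submodule K W} (hA : ∀ p < 0, GA p = ⊥)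
    (hB : ∀ p < 0, GB p = ⊥) {d : ℤ} (hd : d < 0) : tensorGrade K GA GB d = ⊥ := by
  rw [eq_bot_iff]
  refine tg_le fun p a ha b hb => ?_
  by_cases hp : p < 0
  · rw [hA p hp, Submodule.mem_bot] at ha
    rw [ha, TensorProduct.zero_tmul]; exact Submodule.zero_mem _
  · rw [hB (d - p) (by omega), Submodule.mem_bot] at hb
    rw [hb, TensorProduct.tmul_zero]; exact Submodule.zero_mem _

lemma tg_finite {GA : ℤ → Submodule K V} {GB : ℤ → Submodule K W} (hA : ∀ p < 0, GA p = ⊥)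
    (hB : ∀ p < 0, GB p = ⊥) (fA : ∀ p, Module.Finite K (GA p)) (fB : ∀ p, Module.Finite K (GB p))
    (d : ℤ) : Module.Finite K (tensorGrade K GA GB d) := by
  have hle : tensorGrade K GA GB d ≤ ⨆ p : Finset.Icc (0 : ℤ) d,
      LinearMap.range (TensorProduct.map (GA p).subtype (GB (d - p)).subtype) := by
    refine tg_le fun p a ha b hb => ?_
    by_cases hp : p < 0
    · rw [hA p hp, Submodule.mem_bot] at ha
      rw [ha, TensorProduct.zero_tmul]; exact Submodule.zero_mem _
    by_cases hp' : d < p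
    · rw [hB (d - p) (by omega), Submodule.mem_bot] at hb
      rw [hb, TensorProduct.tmul_zero]; exact Submodule.zero_mem _
    refine Submodule.mem_iSup_of_mem ⟨p, Finset.mem_Icc.2 ⟨by omega, by omega⟩⟩
      ⟨(⟨a, ha⟩ : GA p) ⊗ₜ[K] (⟨b, hb⟩ : GB (d - p)), ?_⟩
    rw [TensorProduct.map_tmul]
    rfl
  have : Module.Finite K ↥(⨆ p : Finset.Icc (0 : ℤ) d,
      LinearMap.range (TensorProduct.map (GA p).subtype (GB (d - p)).subtype)) :=
    Submodule.finiteDimensional_iSup _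
  exact Submodule.finiteDimensional_of_le hle

end general

lemma pg_nat (d : ℕ) : polyGrade K n (d : ℤ) = homogeneousSubmodule (Fin n) K d := by
  unfold polyGrade
  rw [if_pos (by omega)]
  rfl

lemma pg_neg (d : ℤ) (hd : d < 0) : polyGrade K n d = ⊥ := by
  unfold polyGrade
  rw [if_neg (by omega)]

lemma pg_finite (d : ℤ) : Module.Finite K (polyGrade K n d) := by
  by_cases hd : d < 0
  · rw [pg_neg d hd]; infer_instance
  · obtain ⟨k, rfl⟩ := Int.eq_ofNat_of_zero_le (not_lt.1 hd)
    rw [pg_nat]; infer_instance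

lemma pg_mul {p q : ℤ} {a b : PS K n} (ha : a ∈ polyGrade K n p) (hb : b ∈ polyGrade K n q) :
    a * b ∈ polyGrade K n (p + q) := by
  by_cases hp : p < 0
  · rw [pg_neg p hp, Submodule.mem_bot] at ha
    rw [ha, zero_mul]; exact Submodule.zero_mem _
  by_cases hq : q < 0
  · rw [pg_neg q hq, Submodule.mem_bot] at hb
    rw [hb, mul_zero]; exact Submodule.zero_mem _
  obtain ⟨k, rfl⟩ := Int.eq_ofNat_of_zero_le (not_lt.1 hp)
  obtain ⟨l, rfl⟩ := Int.eq_ofNat_of_zero_le (not_lt.1 hq)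
  rw [pg_nat] at ha hb
  have : ((k : ℤ) + (l : ℤ)) = ((k + l : ℕ) : ℤ) := by push_cast; rfl
  rw [this, pg_nat]
  exact MvPolynomial.IsHomogeneous.mul ha hb

lemma pg_one : (1 : PS K n) ∈ polyGrade K n 0 := by
  have := pg_nat (K := K) (n := n) 0
  rw [Nat.cast_zero] at this
  rw [this]
  exact isHomogeneous_one _ _

lemma qg_neg (J : Ideal (PS K n)) (d : ℤ) (hd : d < 0) : quotGrade K n J d = ⊥ := by
  unfold quotGrade
  rw [pg_neg d hd, Submodule.map_bot]

lemma qg_finite (J : Ideal (PS K n)) (d : ℤ) : Module.Finite K (quotGrade K n J d) := by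
  have := pg_finite (K := K) (n := n) d
  unfold quotGrade
  infer_instance

lemma qg_mem {J : Ideal (PS K n)} {d : ℤ} {f : PS K n} (hf : f ∈ polyGrade K n d) :
    Ideal.Quotient.mk J f ∈ quotGrade K n J d :=
  ⟨f, hf, rfl⟩

lemma qg_one {J : Ideal (PS K n)} : (1 : PS K n ⧸ J) ∈ quotGrade K n J 0 :=
  ⟨1, pg_one, rfl⟩

/-- A graded linear section of the quotient map. -/
lemma exists_section {I : Ideal (PS K n)} (hI : IsHomog K n I) :
    ∃ σ : (PS K n ⧸ I) →ₗ[K] PS K n, (∀ m, Ideal.Quotient.mk I (σ m) = m) ∧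
      ∀ d, ∀ m ∈ quotGrade K n I d, σ m ∈ polyGrade K n d := by
  classical
  have hq : ∀ p : ℕ, ∃ q : PS K n →ₗ[K] PS K n,
      (∀ f, q f ∈ I ∧ (q f).IsHomogeneous p) ∧
      ∀ f, f ∈ I → f.IsHomogeneous p → q f = f := by
    intro p
    set Ip := Submodule.restrictScalars K I ⊓ homogeneousSubmodule (Fin n) K p
    obtain ⟨r, hr⟩ := LinearMap.exists_leftInverse_of_injective Ip.subtype
      (Submodule.ker_subtype Ip)
    refine ⟨Ip.subtype.comp r, fun f => ?_, fun f hf hfp => ?_⟩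
    · exact (r f).2
    · have := LinearMap.congr_fun hr (⟨f, hf, hfp⟩ : Ip)
      have h2 : r f = ⟨f, hf, hfp⟩ := this
      rw [LinearMap.comp_apply, h2]
      rfl
  choose q hq1 hq2 using hq
  let τ : PS K n →ₗ[K] PS K n := (basisMonomials (Fin n) K).constr K
    (fun u => monomial u 1 - q u.degree (monomial u 1))
  have hτm : ∀ u, τ (monomial u 1) = monomial u 1 - q u.degree (monomial u 1) := by
    intro u
    have := (basisMonomials (Fin n) K).constr_basis K
      (fun u => monomial u 1 - q u.degree (monomial u 1)) u
    rw [coe_basisMonomials] at this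
    exact this
  have hτ : ∀ p (f : PS K n), f.IsHomogeneous p → τ f = f - q p f := by
    intro p f hf
    have key : ∀ (g : PS K n), (∀ u ∈ g.support, u.degree = p) → τ g = g - q p g := by
      intro g hg
      rw [← support_sum_monomial_coeff g, map_sum, map_sum, ← Finset.sum_sub_distrib]
      refine Finset.sum_congr rfl fun u hu => ?_
      have : monomial u (coeff u g) = coeff u g • monomial u (1 : K) := by
        rw [smul_monomial, smul_eq_mul, mul_one]
      rw [this, map_smul, map_smul, hτm, hg u hu, smul_sub]
    exact key f fun u hu => deg_of_coeff hf (mem_support_iff.1 hu)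
  have hτI : ∀ f ∈ I, τ f = 0 := by
    intro f hf
    rw [← sum_homogeneousComponent f, map_sum]
    refine Finset.sum_eq_zero fun p _ => ?_
    rw [hτ p _ (homogeneousComponent_isHomogeneous p f), hq2 p _ (hI f hf p)
      (homogeneousComponent_isHomogeneous p f), sub_self]
  have hτs : ∀ f, τ f - f ∈ I := by
    intro f
    rw [← sum_homogeneousComponent f, map_sum, ← Finset.sum_sub_distrib]
    refine Ideal.sum_mem _ fun p _ => ?_
    rw [hτ p _ (homogeneousComponent_isHomogeneous p f), sub_sub_cancel_left]
    exact I.neg_mem (hq1 p _).1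
  obtain ⟨r, hr⟩ := LinearMap.exists_rightInverse_of_surjective
    (Ideal.Quotient.mkₐ K I).toLinearMap (LinearMap.range_eq_top.2 Ideal.Quotient.mk_surjective)
  have hr' : ∀ m, Ideal.Quotient.mk I (r m) = m := fun m => LinearMap.congr_fun hr m
  refine ⟨τ.comp r, fun m => ?_, ?_⟩
  · conv_rhs => rw [← hr' m]
    exact Ideal.Quotient.eq.2 (hτs (r m))
  · rintro d m ⟨f, hf, rfl⟩
    by_cases hd : d < 0
    · have hf' : f ∈ polyGrade K n d := hf
      rw [pg_neg d hd, Submodule.mem_bot] at hf'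
      rw [hf', map_zero, map_zero]
      exact Submodule.zero_mem _
    obtain ⟨k, rfl⟩ := Int.eq_ofNat_of_zero_le (not_lt.1 hd)
    have hf' : f ∈ polyGrade K n (k : ℤ) := hf
    rw [pg_nat] at hf' ⊢
    have e1 : τ (r ((Ideal.Quotient.mkₐ K I).toLinearMap f)) = τ f := by
      rw [← sub_eq_zero, ← map_sub]
      exact hτI _ (Ideal.Quotient.eq.1 (hr' _))
    rw [LinearMap.comp_apply, e1, hτ k f hf']
    exact Submodule.sub_mem _ hf' (hq1 k f).2

/-- Dimension formula for sums and intersections. -/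
lemma hilb_sup_inf {A B : Ideal (PS K n)} (hA : IsHomog K n A) (hB : IsHomog K n B) (d : ℕ) :
    hilb K n (A ⊔ B) d + hilb K n (A ⊓ B) d = hilb K n A d + hilb K n B d := by
  unfold hilb
  set H := homogeneousSubmodule (Fin n) K d with hH
  have f1 : Module.Finite K ↥(Submodule.restrictScalars K A ⊓ H) :=
    Submodule.finiteDimensional_of_le (S₂ := H) inf_le_right
  have f2 : Module.Finite K ↥(Submodule.restrictScalars K B ⊓ H) :=
    Submodule.finiteDimensional_of_le (S₂ := H) inf_le_right
  have := Submodule.finrank_sup_add_finrank_inf_eq (Submodule.restrictScalars K A ⊓ H)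
    (Submodule.restrictScalars K B ⊓ H)
  have e1 : Submodule.restrictScalars K (A ⊔ B) ⊓ H =
      (Submodule.restrictScalars K A ⊓ H) ⊔ (Submodule.restrictScalars K B ⊓ H) := by
    apply le_antisymm
    · rintro f ⟨hf, hfd⟩
      obtain ⟨a, ha, b, hb, rfl⟩ := Submodule.mem_sup.1 (show f ∈ A ⊔ B from hf)
      refine Submodule.mem_sup.2 ⟨homogeneousComponent d a, ⟨hA a ha d,
        homogeneousComponent_isHomogeneous d a⟩, homogeneousComponent d b, ⟨hB b hb d,
        homogeneousComponent_isHomogeneous d b⟩, ?_⟩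
      rw [← map_add]
      have := homogeneousComponent_of_mem (m := d) (show (a + b) ∈ homogeneousSubmodule (Fin n) K d from hfd)
      rw [this, if_pos rfl]
    · refine sup_le ?_ ?_
      · rintro f ⟨hf, hfd⟩
        exact ⟨Ideal.mem_sup_left hf, hfd⟩
      · rintro f ⟨hf, hfd⟩
        exact ⟨Ideal.mem_sup_right hf, hfd⟩
  have e2 : Submodule.restrictScalars K (A ⊓ B) ⊓ H =
      (Submodule.restrictScalars K A ⊓ H) ⊓ (Submodule.restrictScalars K B ⊓ H) := by
    ext f
    simp only [Submodule.mem_inf, Submodule.restrictScalars_mem]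
    tauto
  rw [← this, e1, e2]

end Fam


/-! ### Tor in degrees 0 and 1 -/

namespace Fam

variable {K n}

section bars
variable (I J : Ideal (PS K n))

/-- First bar differential. -/
def b0 : (PS K n ⧸ I) ⊗[K] (PS K n ⊗[K] (PS K n ⧸ J)) →ₗ[K] (PS K n ⧸ I) ⊗[K] (PS K n ⧸ J) :=
  barB K n (PS K n ⧸ J) (PS K n ⧸ I) 0

/-- Second bar differential. -/
def b1 : (PS K n ⧸ I) ⊗[K] (PS K n ⊗[K] (PS K n ⊗[K] (PS K n ⧸ J))) →ₗ[K]
    (PS K n ⧸ I) ⊗[K] (PS K n ⊗[K] (PS K n ⧸ J)) :=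
  barB K n (PS K n ⧸ J) (PS K n ⧸ I) 1

/-- Grading on the first term. -/
def g0 (d : ℤ) : Submodule K ((PS K n ⧸ I) ⊗[K] (PS K n ⧸ J)) :=
  tensorGrade K (quotGrade K n I) (quotGrade K n J) d

/-- Grading on the second term. -/
def g1 (d : ℤ) : Submodule K ((PS K n ⧸ I) ⊗[K] (PS K n ⊗[K] (PS K n ⧸ J))) :=
  tensorGrade K (quotGrade K n I) (tensorGrade K (polyGrade K n) (quotGrade K n J)) d

lemma b0_tmul (m : PS K n ⧸ I) (s : PS K n) (x : PS K n ⧸ J) :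
    b0 I J (m ⊗ₜ[K] (s ⊗ₜ[K] x)) = (s • m) ⊗ₜ[K] x - m ⊗ₜ[K] (s • x) := rfl

lemma b1_tmul (m : PS K n ⧸ I) (s t : PS K n) (x : PS K n ⧸ J) :
    b1 I J (m ⊗ₜ[K] (s ⊗ₜ[K] (t ⊗ₜ[K] x))) =
      (s • m) ⊗ₜ[K] (t ⊗ₜ[K] x) - m ⊗ₜ[K] ((s * t) ⊗ₜ[K] x - s ⊗ₜ[K] (t • x)) := rfl

lemma torQQ_zero (d : ℤ) : torQQ K n I J 0 d = Module.finrank K (g0 I J d) -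
    Module.finrank K ↥(LinearMap.range (b0 I J) ⊓ g0 I J d) := rfl

lemma torQQ_one (d : ℤ) : torQQ K n I J 1 d =
    Module.finrank K ↥(LinearMap.ker (b0 I J) ⊓ g1 I J d) -
    Module.finrank K ↥(LinearMap.range (b1 I J) ⊓ g1 I J d) := rfl

end bars

end Fam


namespace Fam

variable {K n}

/-- The quotient map as a `K`-linear map. -/
abbrev mkK (Q : Ideal (PS K n)) : PS K n →ₗ[K] (PS K n ⧸ Q) := (Ideal.Quotient.mkₐ K Q).toLinearMap

lemma mkK_eq_zero {Q : Ideal (PS K n)} {f : PS K n} : mkK Q f = 0 ↔ f ∈ Q :=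
  Ideal.Quotient.eq_zero_iff_mem

lemma smul_q {Q : Ideal (PS K n)} (f : PS K n) (m : PS K n ⧸ Q) :
    f • m = Ideal.Quotient.mk Q f * m := by
  obtain ⟨a, rfl⟩ := Ideal.Quotient.mk_surjective m
  rfl

lemma smul_mk_one (Q : Ideal (PS K n)) (f : PS K n) :
    f • (1 : PS K n ⧸ Q) = Ideal.Quotient.mk Q f := by
  rw [smul_q, mul_one]

lemma finrank_map_mk (Q : Ideal (PS K n)) (A : Submodule K (PS K n)) [Module.Finite K A] :
    Module.finrank K A = Module.finrank K (A.map (mkK Q)) +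
      Module.finrank K ↥(Submodule.restrictScalars K Q ⊓ A) := by
  rw [rank_null (mkK Q) A]
  have : LinearMap.ker (mkK Q) = Submodule.restrictScalars K Q := by
    ext f
    rw [LinearMap.mem_ker, mkK_eq_zero]; rfl
  rw [this]

section tor
variable {I J : Ideal (PS K n)} (σ : (PS K n ⧸ I) →ₗ[K] PS K n) (ρ : (PS K n ⧸ J) →ₗ[K] PS K n)

/-- Auxiliary lift of `M ⊗ N → S/(I+J)`. -/
def F0 : (PS K n ⧸ I) ⊗[K] (PS K n ⧸ J) →ₗ[K] PS K n :=
  (LinearMap.mul' K (PS K n)).comp (TensorProduct.map σ ρ)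

lemma F0_tmul (m : PS K n ⧸ I) (x : PS K n ⧸ J) : F0 σ ρ (m ⊗ₜ[K] x) = σ m * ρ x := rfl

/-- Auxiliary lift of the cocycle. -/
def F1 : (PS K n ⧸ I) ⊗[K] (PS K n ⊗[K] (PS K n ⧸ J)) →ₗ[K] PS K n :=
  ((LinearMap.mul' K (PS K n)).comp (TensorProduct.map
    ((LinearMap.mul' K (PS K n)).comp (TensorProduct.map σ LinearMap.id)
      - σ.comp (smulMapM K n (PS K n ⧸ I))) ρ)).comp
    (TensorProduct.assoc K (PS K n ⧸ I) (PS K n) (PS K n ⧸ J)).symm.toLinearMap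

lemma F1_tmul (m : PS K n ⧸ I) (s : PS K n) (x : PS K n ⧸ J) :
    F1 σ ρ (m ⊗ₜ[K] (s ⊗ₜ[K] x)) = (σ m * s - σ (s • m)) * ρ x := rfl


/-- `σ` is a section of the quotient map. -/
abbrev Sec {Q : Ideal (PS K n)} (τ : (PS K n ⧸ Q) →ₗ[K] PS K n) : Prop :=
  ∀ m, Ideal.Quotient.mk Q (τ m) = m

lemma sec_smul {Q : Ideal (PS K n)} {τ : (PS K n ⧸ Q) →ₗ[K] PS K n} (h : Sec τ)
    (s : PS K n) (m : PS K n ⧸ Q) : τ m * s - τ (s • m) ∈ Q := by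
  rw [← Ideal.Quotient.eq_zero_iff_mem, map_sub, map_mul, h, h, smul_q, mul_comm]
  exact sub_self _

lemma sec_one {Q : Ideal (PS K n)} {τ : (PS K n ⧸ Q) →ₗ[K] PS K n} (h : Sec τ) :
    τ 1 - 1 ∈ Q := by
  rw [← Ideal.Quotient.eq_zero_iff_mem, map_sub, h, map_one, sub_self]

variable {σ ρ}

lemma F0_b0 (hσ : Sec σ) (hρ : Sec ρ) (z : (PS K n ⧸ I) ⊗[K] (PS K n ⊗[K] (PS K n ⧸ J))) :
    F0 σ ρ (b0 I J z) ∈ I ⊔ J := by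
  induction z using TensorProduct.induction_on with
  | zero => rw [map_zero, map_zero]; exact Ideal.zero_mem _
  | add x y hx hy => rw [map_add, map_add]; exact Ideal.add_mem _ hx hy
  | tmul m y =>
    induction y using TensorProduct.induction_on with
    | zero => rw [tmul_zero, map_zero, map_zero]; exact Ideal.zero_mem _
    | add x y hx hy => rw [tmul_add, map_add, map_add]; exact Ideal.add_mem _ hx hy
    | tmul s x =>
      rw [b0_tmul, map_sub, F0_tmul, F0_tmul]
      have h1 := Ideal.mem_sup_left (T := J) (I.mul_mem_right (ρ x) (sec_smul hσ s m))
      have h2 := Ideal.mem_sup_right (S := I) (J.mul_mem_left (σ m) (sec_smul hρ s x))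
      have := Ideal.sub_mem _ h2 h1
      convert this using 1
      ring

lemma b0_red (hσ : Sec σ) (hρ : Sec ρ) (z : (PS K n ⧸ I) ⊗[K] (PS K n ⧸ J)) :
    z - 1 ⊗ₜ[K] (Ideal.Quotient.mk J (F0 σ ρ z)) ∈ LinearMap.range (b0 I J) := by
  induction z using TensorProduct.induction_on with
  | zero =>
    rw [map_zero, map_zero, tmul_zero, sub_zero]; exact Submodule.zero_mem _
  | add x y hx hy =>
    rw [map_add, map_add, tmul_add, add_sub_add_comm]; exact Submodule.add_mem _ hx hy
  | tmul m x =>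
    refine ⟨1 ⊗ₜ[K] (σ m ⊗ₜ[K] x), ?_⟩
    rw [b0_tmul, smul_mk_one, hσ, F0_tmul, map_mul, hρ, smul_q]

lemma ker_F0 (hσ : Sec σ) (hρ : Sec ρ) :
    LinearMap.ker ((mkK (I ⊔ J)).comp (F0 σ ρ)) = LinearMap.range (b0 I J) := by
  apply le_antisymm
  · intro z hz
    have hz' : F0 σ ρ z ∈ I ⊔ J := mkK_eq_zero.1 hz
    have h1 := b0_red hσ hρ z
    obtain ⟨a, ha, b, hb, hab⟩ := Submodule.mem_sup.1 hz'
    have h2 : (1 : PS K n ⧸ I) ⊗ₜ[K] (Ideal.Quotient.mk J (F0 σ ρ z)) ∈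
        LinearMap.range (b0 I J) := by
      refine ⟨-(1 ⊗ₜ[K] (a ⊗ₜ[K] 1)), ?_⟩
      rw [map_neg, b0_tmul, smul_mk_one, smul_mk_one, Ideal.Quotient.eq_zero_iff_mem.2 ha,
        zero_tmul, zero_sub, neg_neg, ← hab, map_add, Ideal.Quotient.eq_zero_iff_mem.2 hb,
        add_zero]
    have := Submodule.add_mem _ h1 h2
    rwa [sub_add_cancel] at this
  · rintro _ ⟨z, rfl⟩
    exact mkK_eq_zero.2 (F0_b0 hσ hρ z)

lemma b0_b1 (z : (PS K n ⧸ I) ⊗[K] (PS K n ⊗[K] (PS K n ⊗[K] (PS K n ⧸ J)))) :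
    b0 I J (b1 I J z) = 0 := by
  induction z using TensorProduct.induction_on with
  | zero => rw [map_zero, map_zero]
  | add x y hx hy => rw [map_add, map_add, hx, hy, add_zero]
  | tmul m y =>
    induction y using TensorProduct.induction_on with
    | zero => rw [tmul_zero, map_zero, map_zero]
    | add x y hx hy => rw [tmul_add, map_add, map_add, hx, hy, add_zero]
    | tmul s y =>
      induction y using TensorProduct.induction_on with
      | zero => rw [tmul_zero, tmul_zero, map_zero, map_zero]
      | add x y hx hy => rw [tmul_add, tmul_add, map_add, map_add, hx, hy, add_zero]
      | tmul t x =>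
        rw [b1_tmul, tmul_sub, map_sub, map_sub, b0_tmul, b0_tmul, b0_tmul, smul_smul, smul_smul,
          mul_comm t s]
        abel

lemma F1_b1 (hσ : Sec σ) (hρ : Sec ρ)
    (z : (PS K n ⧸ I) ⊗[K] (PS K n ⊗[K] (PS K n ⊗[K] (PS K n ⧸ J)))) :
    F1 σ ρ (b1 I J z) ∈ I * J := by
  induction z using TensorProduct.induction_on with
  | zero => rw [map_zero, map_zero]; exact Ideal.zero_mem _
  | add x y hx hy => rw [map_add, map_add]; exact Ideal.add_mem _ hx hy
  | tmul m y =>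
    induction y using TensorProduct.induction_on with
    | zero => rw [tmul_zero, map_zero, map_zero]; exact Ideal.zero_mem _
    | add x y hx hy => rw [tmul_add, map_add, map_add]; exact Ideal.add_mem _ hx hy
    | tmul s y =>
      induction y using TensorProduct.induction_on with
      | zero => rw [tmul_zero, tmul_zero, map_zero, map_zero]; exact Ideal.zero_mem _
      | add x y hx hy => rw [tmul_add, tmul_add, map_add, map_add]; exact Ideal.add_mem _ hx hy
      | tmul t x =>
        rw [b1_tmul, tmul_sub, map_sub, map_sub, F1_tmul, F1_tmul, F1_tmul, smul_smul,
          mul_comm t s]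
        have := Ideal.neg_mem_iff _ |>.2 (Ideal.mul_mem_mul (sec_smul hσ s m) (sec_smul hρ t x))
        convert this using 1
        ring

lemma F1_mem (hσ : Sec σ) (z : (PS K n ⧸ I) ⊗[K] (PS K n ⊗[K] (PS K n ⧸ J))) :
    F1 σ ρ z ∈ I := by
  induction z using TensorProduct.induction_on with
  | zero => rw [map_zero]; exact Ideal.zero_mem _
  | add x y hx hy => rw [map_add]; exact Ideal.add_mem _ hx hy
  | tmul m y =>
    induction y using TensorProduct.induction_on with
    | zero => rw [tmul_zero, map_zero]; exact Ideal.zero_mem _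
    | add x y hx hy => rw [tmul_add, map_add]; exact Ideal.add_mem _ hx hy
    | tmul s x =>
      rw [F1_tmul]
      exact I.mul_mem_right _ (sec_smul hσ s m)

lemma F1_add_F0 (hρ : Sec ρ) (z : (PS K n ⧸ I) ⊗[K] (PS K n ⊗[K] (PS K n ⧸ J))) :
    F1 σ ρ z + F0 σ ρ (b0 I J z) ∈ J := by
  induction z using TensorProduct.induction_on with
  | zero => rw [map_zero, map_zero, map_zero, add_zero]; exact Ideal.zero_mem _
  | add x y hx hy =>
    rw [map_add, map_add, map_add, add_add_add_comm]; exact Ideal.add_mem _ hx hy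
  | tmul m y =>
    induction y using TensorProduct.induction_on with
    | zero => rw [tmul_zero, map_zero, map_zero, map_zero, add_zero]; exact Ideal.zero_mem _
    | add x y hx hy =>
      rw [tmul_add, map_add, map_add, map_add, add_add_add_comm]; exact Ideal.add_mem _ hx hy
    | tmul s x =>
      rw [F1_tmul, b0_tmul, map_sub, F0_tmul, F0_tmul]
      have := J.mul_mem_left (σ m) (sec_smul hρ s x)
      convert this using 1
      ring

lemma one_tmul_mem {f : PS K n} (hf : f ∈ I) (s : PS K n) :
    (1 : PS K n ⧸ I) ⊗ₜ[K] ((f * s) ⊗ₜ[K] (1 : PS K n ⧸ J)) -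
      1 ⊗ₜ[K] (f ⊗ₜ[K] (Ideal.Quotient.mk J s)) ∈ LinearMap.range (b1 I J) := by
  refine ⟨-(1 ⊗ₜ[K] (f ⊗ₜ[K] (s ⊗ₜ[K] 1))), ?_⟩
  rw [map_neg, b1_tmul, smul_mk_one, smul_mk_one, Ideal.Quotient.eq_zero_iff_mem.2 hf, zero_tmul,
    zero_sub, neg_neg, tmul_sub]

lemma b1_red (hσ : Sec σ) (hρ : Sec ρ) (z : (PS K n ⧸ I) ⊗[K] (PS K n ⊗[K] (PS K n ⧸ J))) :
    z - 1 ⊗ₜ[K] (F1 σ ρ z ⊗ₜ[K] (1 : PS K n ⧸ J))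
      - 1 ⊗ₜ[K] (TensorProduct.map σ LinearMap.id (b0 I J z)) ∈ LinearMap.range (b1 I J) := by
  have hadd : ∀ a b c a' b' c' : (PS K n ⧸ I) ⊗[K] (PS K n ⊗[K] (PS K n ⧸ J)),
      a + a' - (b + b') - (c + c') = (a - b - c) + (a' - b' - c') := by
    intros; abel
  induction z using TensorProduct.induction_on with
  | zero =>
    simp only [map_zero, zero_tmul, tmul_zero, sub_zero]; exact Submodule.zero_mem _
  | add x y hx hy =>
    simp only [map_add, add_tmul, tmul_add, hadd]; exact Submodule.add_mem _ hx hy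
  | tmul m y =>
    induction y using TensorProduct.induction_on with
    | zero => simp only [map_zero, zero_tmul, tmul_zero, sub_zero]; exact Submodule.zero_mem _
    | add x y hx hy =>
      simp only [map_add, add_tmul, tmul_add, hadd]; exact Submodule.add_mem _ hx hy
    | tmul s x =>
      have h1 : b1 I J (1 ⊗ₜ[K] (σ m ⊗ₜ[K] (s ⊗ₜ[K] x))) ∈ LinearMap.range (b1 I J) := ⟨_, rfl⟩
      have h2 := one_tmul_mem (J := J) (sec_smul hσ s m) (ρ x)
      rw [b1_tmul, smul_mk_one, hσ] at h1
      rw [hρ] at h2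
      have := Submodule.sub_mem _ h1 h2
      convert this using 1
      rw [F1_tmul, b0_tmul, map_sub, map_tmul, map_tmul]
      simp only [sub_tmul, tmul_sub, LinearMap.id_coe, id_eq]
      abel

lemma IJ_mem {f : PS K n} (hf : f ∈ I * J) :
    (1 : PS K n ⧸ I) ⊗ₜ[K] (f ⊗ₜ[K] (1 : PS K n ⧸ J)) ∈ LinearMap.range (b1 I J) := by
  induction hf using Submodule.mul_induction_on' with
  | mem_mul_mem a ha b hb =>
    have := one_tmul_mem (J := J) ha b
    rwa [Ideal.Quotient.eq_zero_iff_mem.2 hb, tmul_zero, tmul_zero, sub_zero] at this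
  | add x hx y hy h1 h2 =>
    rw [add_tmul, tmul_add]; exact Submodule.add_mem _ h1 h2

lemma ker_F1 (hσ : Sec σ) (hρ : Sec ρ) :
    LinearMap.ker ((mkK (I * J)).comp (F1 σ ρ)) ⊓ LinearMap.ker (b0 I J) =
      LinearMap.range (b1 I J) := by
  apply le_antisymm
  · rintro z ⟨hz, hz0⟩
    have hz' : F1 σ ρ z ∈ I * J := mkK_eq_zero.1 hz
    have h1 := b1_red hσ hρ z
    have hz0' : b0 I J z = 0 := hz0
    rw [hz0', map_zero, tmul_zero, sub_zero] at h1
    have := Submodule.add_mem _ h1 (IJ_mem hz')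
    rwa [sub_add_cancel] at this
  · rintro _ ⟨z, rfl⟩
    exact ⟨mkK_eq_zero.2 (F1_b1 hσ hρ z), b0_b1 z⟩

end tor

end Fam


namespace Fam

variable {K n}

lemma qg_smul {J : Ideal (PS K n)} {p q : ℤ} {s : PS K n} {m : PS K n ⧸ J}
    (hs : s ∈ polyGrade K n q) (hm : m ∈ quotGrade K n J p) : s • m ∈ quotGrade K n J (p + q) := by
  obtain ⟨f, hf, rfl⟩ := hm
  refine ⟨f * s, pg_mul hf hs, ?_⟩
  rw [smul_q, mul_comm f s]
  exact map_mul (Ideal.Quotient.mk J) s f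

lemma tor_zero {I J : Ideal (PS K n)} (hI : IsHomog K n I) (hJ : IsHomog K n J) (d : ℕ) :
    torQQ K n I J 0 (d : ℤ) + hilb K n (I ⊔ J) d =
      Module.finrank K (homogeneousSubmodule (Fin n) K d) := by
  obtain ⟨σ, hσ, hσg⟩ := exists_section hI
  obtain ⟨ρ, hρ, hρg⟩ := exists_section hJ
  have hfin : Module.Finite K (g0 I J d) :=
    tg_finite (qg_neg I) (qg_neg J) (qg_finite I) (qg_finite J) d
  have h1 := rank_null ((mkK (I ⊔ J)).comp (F0 σ ρ)) (g0 I J d)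
  rw [ker_F0 hσ hρ] at h1
  have h2 : (g0 I J d).map ((mkK (I ⊔ J)).comp (F0 σ ρ)) =
      (homogeneousSubmodule (Fin n) K d).map (mkK (I ⊔ J)) := by
    apply le_antisymm
    · rw [Submodule.map_comp]
      apply Submodule.map_mono
      rw [Submodule.map_le_iff_le_comap]
      refine tg_le fun p a ha b hb => ?_
      have := pg_mul (hσg p a ha) (hρg _ b hb)
      rw [add_sub_cancel, pg_nat] at this
      exact this
    · rintro _ ⟨f, hf, rfl⟩
      refine ⟨Ideal.Quotient.mk I f ⊗ₜ[K] 1, tg_mem (qg_mem (d := d) ?_) qg_one (add_zero _), ?_⟩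
      · rw [pg_nat]; exact hf
      · rw [LinearMap.comp_apply, F0_tmul, ← sub_eq_zero, ← map_sub, mkK_eq_zero]
        have e1 : σ (Ideal.Quotient.mk I f) - f ∈ I := Ideal.Quotient.eq.1 (hσ _)
        have e2 := sec_one hρ
        have := Ideal.add_mem _ (Ideal.mem_sup_left (T := J) (I.mul_mem_right (ρ 1) e1))
          (Ideal.mem_sup_right (S := I) (J.mul_mem_left f e2))
        convert this using 1
        ring
  have h3 := finrank_map_mk (I ⊔ J) (homogeneousSubmodule (Fin n) K d)
  rw [torQQ_zero]
  rw [h2] at h1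
  rw [h3]
  unfold hilb
  omega

lemma tor_one {I J : Ideal (PS K n)} (hI : IsHomog K n I) (hJ : IsHomog K n J) (d : ℕ) :
    torQQ K n I J 1 (d : ℤ) + hilb K n (I * J) d = hilb K n (I ⊓ J) d := by
  obtain ⟨σ, hσ, hσg⟩ := exists_section hI
  obtain ⟨ρ, hρ, hρg⟩ := exists_section hJ
  have hfin : Module.Finite K (g1 I J d) :=
    tg_finite (qg_neg I) (fun p hp => tg_neg pg_neg (qg_neg J) hp) (qg_finite I)
      (fun p => tg_finite pg_neg (qg_neg J) pg_finite (qg_finite J) p) d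
  have hfin2 : Module.Finite K ↥(LinearMap.ker (b0 I J) ⊓ g1 I J d) :=
    Submodule.finiteDimensional_of_le (S₂ := g1 I J d) inf_le_right
  have h1 := rank_null ((mkK (I * J)).comp (F1 σ ρ)) (LinearMap.ker (b0 I J) ⊓ g1 I J d)
  rw [← inf_assoc, ker_F1 hσ hρ] at h1
  set A := Submodule.restrictScalars K (I ⊓ J) ⊓ homogeneousSubmodule (Fin n) K d with hA
  have hfinA : Module.Finite K A :=
    Submodule.finiteDimensional_of_le (S₂ := homogeneousSubmodule (Fin n) K d) inf_le_right
  have h2 : (LinearMap.ker (b0 I J) ⊓ g1 I J d).map ((mkK (I * J)).comp (F1 σ ρ)) =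
      A.map (mkK (I * J)) := by
    apply le_antisymm
    · rw [Submodule.map_comp]
      apply Submodule.map_mono
      rw [Submodule.map_le_iff_le_comap]
      rintro z ⟨hz0, hz⟩
      have hz0' : b0 I J z = 0 := hz0
      refine ⟨⟨F1_mem hσ z, ?_⟩, ?_⟩
      · have := F1_add_F0 (σ := σ) hρ z
        rwa [hz0', map_zero, add_zero] at this
      · have hle : g1 I J d ≤ (homogeneousSubmodule (Fin n) K d).comap (F1 σ ρ) := by
          refine tg_le fun p a ha y hy => ?_
          have hle2 : tensorGrade K (polyGrade K n) (quotGrade K n J) (d - p) ≤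
              ((homogeneousSubmodule (Fin n) K d).comap (F1 σ ρ)).comap
                (TensorProduct.mk K _ _ a) := by
            refine tg_le fun q s hs x hx => ?_
            have h5 := pg_mul (Submodule.sub_mem _ (pg_mul (hσg p a ha) hs)
              (hσg _ _ (qg_smul hs ha))) (hρg _ x hx)
            have h6 : p + q + (d - p - q) = d := by ring
            rw [h6, pg_nat] at h5
            exact h5
          exact hle2 hy
        exact hle hz
    · rintro _ ⟨f, ⟨⟨hfI, hfJ⟩, hfd⟩, rfl⟩
      have zI : Ideal.Quotient.mk I f = 0 := Ideal.Quotient.eq_zero_iff_mem.2 hfI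
      have zJ : Ideal.Quotient.mk J f = 0 := Ideal.Quotient.eq_zero_iff_mem.2 hfJ
      refine ⟨1 ⊗ₜ[K] (f ⊗ₜ[K] 1), ⟨?_, ?_⟩, ?_⟩
      · show b0 I J (1 ⊗ₜ[K] (f ⊗ₜ[K] 1)) = 0
        rw [b0_tmul, smul_mk_one, smul_mk_one, zI, zJ, zero_tmul, tmul_zero, sub_zero]
      · refine tg_mem qg_one (tg_mem (p := d) ?_ qg_one (add_zero _)) (zero_add _)
        rw [pg_nat]; exact hfd
      · rw [LinearMap.comp_apply, F1_tmul, smul_mk_one, zI, map_zero, sub_zero, ← sub_eq_zero,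
          ← map_sub, mkK_eq_zero]
        have e1 := Ideal.mul_mem_mul (sec_one hσ) (show f ∈ J from hfJ)
        have e2 := Ideal.mul_mem_mul (show f ∈ I from hfI) (sec_one hρ)
        have := Ideal.add_mem _ (Ideal.mul_mem_right (ρ 1) _ e1) e2
        convert this using 1
        ring
  have h3 := finrank_map_mk (I * J) A
  have h4 : Submodule.restrictScalars K (I * J) ⊓ A =
      Submodule.restrictScalars K (I * J) ⊓ homogeneousSubmodule (Fin n) K d := by
    apply le_antisymm
    · rintro f ⟨hf, -, hfd⟩
      exact ⟨hf, hfd⟩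
    · rintro f ⟨hf, hfd⟩
      exact ⟨hf, Ideal.mul_le_inf (show f ∈ I * J from hf), hfd⟩
  rw [torQQ_one]
  rw [h2] at h1
  rw [h4] at h3
  unfold hilb
  rw [← hA, h3]
  omega

end Fam

/-- **Remark 3.8 / Conjecture 1.5 for i = 0, 1** (Caviglia–Murai): suppose `char K = 0`.
Let `I, J ⊆ S` be homogeneous ideals such that `Gin_lex(J)` is lex.  For a general change
of coordinates `g ∈ GL_n(K)` and for `i = 0` and `i = 1`,
`dim_K Tor_i(S/I, S/g(J))_d ≤ dim_K Tor_i(S/I^lex, S/J^oplex)_d` for all `d ≥ 0`. -/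
theorem tor_dim_general_le_lex_low_degrees [CharZero K]
    (I J : Ideal (PS K n)) (hI : IsHomog K n I) (hJ : IsHomog K n J)
    (GinJ : Ideal (PS K n))
    (hGinJ : generally K n (fun g =>
      initialIdealO K n (lexLt n) (Ideal.map (coordChange K n g) J) = GinJ))
    (hGinJlex : IsLexIdeal K n GinJ)
    (Ilex : Ideal (PS K n)) (hIlex : IsLexIdeal K n Ilex)
    (hIlexHilb : ∀ d : ℕ, hilb K n Ilex d = hilb K n I d)
    (Jop : Ideal (PS K n)) (hJop : IsOplexIdeal K n Jop)
    (hJopHilb : ∀ d : ℕ, hilb K n Jop d = hilb K n J d)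
 :
    generally K n (fun g => ∀ i : ℕ, i = 0 ∨ i = 1 → ∀ d : ℕ,
      torQQ K n I (Ideal.map (coordChange K n g) J) i (d : ℤ) ≤
        torQQ K n Ilex Jop i (d : ℤ)) := by
  refine Fam.generally_mono (Fam.hilb_ineq I J hI hJ GinJ hGinJ hGinJlex Ilex hIlex hIlexHilb
    Jop hJop hJopHilb) ?_
  intro g hg i hi d
  change torQQ K n I (Fam.mv g J) i (d : ℤ) ≤ _
  obtain ⟨hs, hp⟩ := hg d
  have hm : IsHomog K n (Fam.mv g J) := Fam.mv_homog hJ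
  have hL : IsHomog K n Ilex := Fam.mon_homog hIlex.1
  have hO : IsHomog K n Jop := Fam.mon_homog hJop.1
  have a1 := Fam.hilb_sup_inf hI hm d
  have a2 := Fam.hilb_sup_inf hL hO d
  have a3 : hilb K n (Fam.mv g J) d = hilb K n J d := Fam.hilb_mv g J d
  have a4 := hIlexHilb d
  have a5 := hJopHilb d
  rcases hi with rfl | rfl
  · have b1 := Fam.tor_zero hI hm d
    have b2 := Fam.tor_zero hL hO d
    omega
  · have b1 := Fam.tor_one hI hm d
    have b2 := Fam.tor_one hL hO d
    omega

end
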